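/- Let P1 and P2 be n×n skew-symmetric matrix pencils. Then orbᶜ(P2) ⊂ closure(orbᶜ(P1)) if and only if P2 can be obtained from P1 by changing the canonical blocks of P1 through a finite sequence of structure transitions, each of one of the following four types: (1) M_j ⊕ M_k ⇝ M_{j−1} ⊕ M_{k+1} for 1 ≤ j ≤ k; (2) H_{j−1}(μ) ⊕ H_{k+1}(μ) ⇝ H_j(μ) ⊕ H_k(μ) for 1 ≤ j ≤ k and μ ∈ ℂ ∪ {∞}; (3) M_{j+1} ⊕ H_k(μ) ⇝ M_j ⊕ H_{k+1}(μ) for j, k ≥ 0 and μ ∈ ℂ ∪ {∞}; (4) ⊕_{i=1}^t H_{k_i}(μ_i) ⇝ M_p ⊕ M_q, where p + q + 1 = Σ_{i=1}^t k_i and the μ_i ∈ ℂ ∪ {∞} are pairwise distinct. -/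

import Mathlib

/-!
Basic framework: a complex `m × n` matrix pencil `A - λ B` is formalized as the
pair `(A, B)` of matrices.  We define strict equivalence, congruence,
skew-symmetry, orbits, direct sums, and the cover relations for the orbit
closure hierarchies (in the Euclidean topology).
-/

open Matrix

noncomputable section

/-- An `m × n` complex matrix pencil `A - λ B`, formalized as the pair `(A, B)`. -/
abbrev Pencil (m n : ℕ) : Type :=
  Matrix (Fin m) (Fin n) ℂ × Matrix (Fin m) (Fin n) ℂ

namespace Pencil

/-- Strict equivalence of matrix pencils: `Q⁻¹ * A * R = C` and `Q⁻¹ * B * R = D`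
for some invertible `Q`, `R`. -/
def StrictEquiv {m n : ℕ} (P Q : Pencil m n) : Prop :=
  ∃ (S : Matrix (Fin m) (Fin m) ℂ) (R : Matrix (Fin n) (Fin n) ℂ),
    IsUnit S ∧ IsUnit R ∧ S⁻¹ * P.1 * R = Q.1 ∧ S⁻¹ * P.2 * R = Q.2

/-- The strict-equivalence orbit of a pencil. -/
def orbE {m n : ℕ} (P : Pencil m n) : Set (Pencil m n) :=
  {Q | StrictEquiv P Q}

/-- A pencil `A - λ B` is skew-symmetric if `Aᵀ = -A` and `Bᵀ = -B`. -/
def IsSkew {n : ℕ} (P : Pencil n n) : Prop :=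
  P.1ᵀ = -P.1 ∧ P.2ᵀ = -P.2

/-- Congruence of (square) matrix pencils: `Sᵀ * A * S = C` and `Sᵀ * B * S = D`
for some invertible `S`. -/
def Congruent {n : ℕ} (P Q : Pencil n n) : Prop :=
  ∃ S : Matrix (Fin n) (Fin n) ℂ,
    IsUnit S ∧ Sᵀ * P.1 * S = Q.1 ∧ Sᵀ * P.2 * S = Q.2

/-- The congruence orbit of a pencil. -/
def orbC {n : ℕ} (P : Pencil n n) : Set (Pencil n n) :=
  {Q | Congruent P Q}

/-- Direct (block-diagonal) sum of two pencils. -/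
def dsum {m n p q : ℕ} (P : Pencil m n) (Q : Pencil p q) : Pencil (m + p) (n + q) :=
  ((fromBlocks P.1 0 0 Q.1).submatrix finSumFinEquiv.symm finSumFinEquiv.symm,
   (fromBlocks P.2 0 0 Q.2).submatrix finSumFinEquiv.symm finSumFinEquiv.symm)

/-- Transport a pencil along equalities of its dimensions. -/
def cast {m n m' n' : ℕ} (hm : m = m') (hn : n = n') (P : Pencil m n) : Pencil m' n' :=
  (P.1.submatrix (finCongr hm.symm) (finCongr hn.symm),
   P.2.submatrix (finCongr hm.symm) (finCongr hn.symm))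

/-- `orbE P1` covers `orbE P2` in the closure hierarchy of strict-equivalence
orbits: `P1` is not strictly equivalent to `P2`, `orbE P2 ⊆ closure (orbE P1)`,
and there is no intermediate orbit strictly between them. -/
def CoversE {m n : ℕ} (P1 P2 : Pencil m n) : Prop :=
  ¬ StrictEquiv P1 P2 ∧ orbE P2 ⊆ closure (orbE P1) ∧
    ¬ ∃ P : Pencil m n, ¬ StrictEquiv P P1 ∧ ¬ StrictEquiv P P2 ∧
        orbE P ⊆ closure (orbE P1) ∧ orbE P2 ⊆ closure (orbE P)

/-- `orbC P1` covers `orbC P2` in the closure hierarchy of congruence orbits of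
skew-symmetric pencils: `P1` is not congruent to `P2`,
`orbC P2 ⊆ closure (orbC P1)`, and there is no congruence orbit of a
skew-symmetric pencil strictly between them. -/
def CoversC {n : ℕ} (P1 P2 : Pencil n n) : Prop :=
  ¬ Congruent P1 P2 ∧ orbC P2 ⊆ closure (orbC P1) ∧
    ¬ ∃ P : Pencil n n, IsSkew P ∧ ¬ Congruent P P1 ∧ ¬ Congruent P P2 ∧
        orbC P ⊆ closure (orbC P1) ∧ orbC P2 ⊆ closure (orbC P)

end Pencil

/-! Canonical building blocks. -/

/-- The `k × k` Jordan block `J_k(μ)`. -/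
def Jmat (k : ℕ) (μ : ℂ) : Matrix (Fin k) (Fin k) ℂ :=
  Matrix.of fun i j => if (j : ℕ) = (i : ℕ) then μ else if (j : ℕ) = (i : ℕ) + 1 then 1 else 0

/-- The `k × (k+1)` matrix `F_k` with ones on the superdiagonal. -/
def Fmat (k : ℕ) : Matrix (Fin k) (Fin (k + 1)) ℂ :=
  Matrix.of fun i j => if (j : ℕ) = (i : ℕ) + 1 then 1 else 0

/-- The `k × (k+1)` matrix `G_k` with ones on the diagonal. -/
def Gmat (k : ℕ) : Matrix (Fin k) (Fin (k + 1)) ℂ :=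
  Matrix.of fun i j => if (j : ℕ) = (i : ℕ) then 1 else 0

/-- The Kronecker block `E_k(μ) = J_k(μ) - λ I_k`. -/
def Eblk (k : ℕ) (μ : ℂ) : Pencil k k := (Jmat k μ, 1)

/-- The Kronecker block `E_k(∞) = I_k - λ J_k(0)`. -/
def EInfblk (k : ℕ) : Pencil k k := (1, Jmat k 0)

/-- The Kronecker block `L_k = F_k - λ G_k`. -/
def Lblk (k : ℕ) : Pencil k (k + 1) := (Fmat k, Gmat k)

/-- The Kronecker block `L_kᵀ = F_kᵀ - λ G_kᵀ`. -/
def LTblk (k : ℕ) : Pencil (k + 1) k := ((Fmat k)ᵀ, (Gmat k)ᵀ)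

/-- The skew-symmetric matrix `[[0, X], [-Xᵀ, 0]]`. -/
def skewPair {p q : ℕ} (X : Matrix (Fin p) (Fin q) ℂ) :
    Matrix (Fin (p + q)) (Fin (p + q)) ℂ :=
  (fromBlocks 0 X (-Xᵀ) 0).submatrix finSumFinEquiv.symm finSumFinEquiv.symm

/-- The skew-symmetric canonical block `H_h(μ)` (size `2h × 2h`). -/
def Hblk (h : ℕ) (μ : ℂ) : Pencil (h + h) (h + h) :=
  (skewPair (Jmat h μ), skewPair (1 : Matrix (Fin h) (Fin h) ℂ))

/-- The skew-symmetric canonical block `K_k = H_k(∞)` (size `2k × 2k`). -/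
def Kblk (k : ℕ) : Pencil (k + k) (k + k) :=
  (skewPair (1 : Matrix (Fin k) (Fin k) ℂ), skewPair (Jmat k 0))

/-- The skew-symmetric canonical block `M_m` (size `(2m+1) × (2m+1)`). -/
def Mblk (m : ℕ) : Pencil (m + (m + 1)) (m + (m + 1)) :=
  (skewPair (Fmat m), skewPair (Gmat m))

/-! Skew-symmetric (Thompson) canonical forms as multisets of block
descriptors. -/

/-- Descriptor of a skew-symmetric canonical block. -/
inductive SBlock : Type
  | H : ℕ → ℂ → SBlock    -- `H_h(μ)`, `μ ∈ ℂ`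
  | K : ℕ → SBlock         -- `K_k = H_k(∞)`
  | M : ℕ → SBlock         -- `M_m`

namespace SBlock

/-- Size of a block. -/
def size : SBlock → ℕ
  | H h _ => h + h
  | K k => k + k
  | M m => m + (m + 1)

/-- A block is valid (may occur in a canonical form) if the `H`- and `K`-blocks
have index at least one. -/
def valid : SBlock → Prop
  | H h _ => 1 ≤ h
  | K k => 1 ≤ k
  | M _ => True

/-- The pencil corresponding to a block descriptor. -/
def toPencil : (b : SBlock) → Pencil b.size b.size
  | H h μ => Hblk h μ
  | K k => Kblk k
  | M m => Mblk m

end SBlock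

/-- The block `H_h(μ)` for an eigenvalue `μ ∈ ℂ ∪ {∞}`; `none` encodes `∞`
(so `Hb none h` is the block `K_h`). -/
def Hb : Option ℂ → ℕ → SBlock
  | some μ, h => SBlock.H h μ
  | none, h => SBlock.K h

/-- Total size of a list of blocks. -/
def sizeSum : List SBlock → ℕ
  | [] => 0
  | b :: t => b.size + sizeSum t

/-- The direct sum of the blocks in a list. -/
def spencilOfList : (l : List SBlock) → Pencil (sizeSum l) (sizeSum l)
  | [] => (0, 0)
  | b :: t => Pencil.dsum b.toPencil (spencilOfList t)

/-- `s` is the multiset of blocks of the skew-symmetric canonical form of `P`,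
i.e. `P` is congruent to the direct sum of the blocks of `s`. -/
def RepresentsC {n : ℕ} (P : Pencil n n) (s : Multiset SBlock) : Prop :=
  (∀ b ∈ s, b.valid) ∧
  ∃ (l : List SBlock) (h : sizeSum l = n),
    (l : Multiset SBlock) = s ∧
    Pencil.Congruent (Pencil.cast h h (spencilOfList l)) P

/-- Like `RepresentsC`, but also allowing degenerate (empty) blocks such as
`H_0(μ)` among the summands. -/
def WeakRepresentsC {n : ℕ} (P : Pencil n n) (s : Multiset SBlock) : Prop :=
  ∃ (l : List SBlock) (h : sizeSum l = n),
    (l : Multiset SBlock) = s ∧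
    Pencil.Congruent (Pencil.cast h h (spencilOfList l)) P

/-- One structure transition of the four types of Theorem 3.4 on a
skew-symmetric canonical form, viewed as a multiset of blocks (`Hb none`
encodes the blocks `H_k(∞) = K_k`). -/
def TransSkew (s t : Multiset SBlock) : Prop :=
  -- (1): `M_j ⊕ M_k ⇝ M_{j-1} ⊕ M_{k+1}`, `1 ≤ j ≤ k`
  (∃ (j k : ℕ) (rest : Multiset SBlock), 1 ≤ j ∧ j ≤ k ∧
      s = SBlock.M j ::ₘ SBlock.M k ::ₘ rest ∧
      t = SBlock.M (j - 1) ::ₘ SBlock.M (k + 1) ::ₘ rest) ∨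
  -- (2): `H_{j-1}(μ) ⊕ H_{k+1}(μ) ⇝ H_j(μ) ⊕ H_k(μ)`, `1 ≤ j ≤ k`, `μ ∈ ℂ ∪ {∞}`
  (∃ (j k : ℕ) (μ : Option ℂ) (rest : Multiset SBlock), 1 ≤ j ∧ j ≤ k ∧
      s = Hb μ (j - 1) ::ₘ Hb μ (k + 1) ::ₘ rest ∧
      t = Hb μ j ::ₘ Hb μ k ::ₘ rest) ∨
  -- (3): `M_{j+1} ⊕ H_k(μ) ⇝ M_j ⊕ H_{k+1}(μ)`, `j, k ≥ 0`, `μ ∈ ℂ ∪ {∞}`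
  (∃ (j k : ℕ) (μ : Option ℂ) (rest : Multiset SBlock),
      s = SBlock.M (j + 1) ::ₘ Hb μ k ::ₘ rest ∧
      t = SBlock.M j ::ₘ Hb μ (k + 1) ::ₘ rest) ∨
  -- (4): `⊕ᵢ H_{kᵢ}(μᵢ) ⇝ M_p ⊕ M_q`, `p + q + 1 = Σ kᵢ`, `μᵢ` pairwise distinct
  (∃ (ek : List (Option ℂ × ℕ)) (p q : ℕ) (rest : Multiset SBlock),
      (ek.map Prod.fst).Nodup ∧
      p + q + 1 = (ek.map Prod.snd).sum ∧
      s = ↑(ek.map fun x => Hb x.1 x.2) + rest ∧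
      t = SBlock.M p ::ₘ SBlock.M q ::ₘ rest)

/-!
Congruence invariants that can only grow under degeneration are found among the nullities of block
Toeplitz matrices, that is, the dimensions of spaces of chains `A v₀ = 0, A v₁ = B v₀, …`, at every
eigenvalue `μ` and for polynomial null vectors. On a canonical form these are sums of `min h k` over
the blocks `H_h(μ)` and of truncated differences `k - m` over the blocks `M_m`. They are convex or
concave functions of `k`, and whenever two canonical forms are related by the resulting
inequalities, a transition can be undone in the second form without violating them: one of type (3)
as long as at some eigenvalue no inequality is tight, otherwise one of type (4), which removes two
blocks `M_m`. With equally many blocks `M_m` and tightness everywhere the inequalities are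
majorizations of the block sizes, which are realized by transitions of types (1) and (2).

Conversely, for each transition the direct sum of the new blocks is the diagonal of a block
triangular pencil congruent to the sum of the old ones, and the off-diagonal block can be scaled to
zero. For type (4) the block triangular pencil is a companion pencil, whose characteristic
polynomial has the prescribed roots, with its missing degree accounting for the eigenvalue `∞`.
-/

namespace SkewPencil

/-! ### Pencils up to congruence -/

/-- A matrix pencil `A - λ B` over `R`, formalized as the pair `(A, B)`, with rows and columns
indexed by arbitrary types so that direct sums need no reindexing. -/
abbrev MatrixPencil (R ρ κ : Type*) := Matrix ρ κ R × Matrix ρ κ R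

/-- A matrix pencil whose rows and columns have the same index type. -/
abbrev SquarePencil (R ι : Type*) := MatrixPencil R ι ι

section Congruence

variable {R : Type*} {ι ι' ι'' ρ ρ' ρ'' κ κ' κ'' τ τ' : Type*}

/-- The direct sum of two pencils. -/
def directSum [Zero R] (X : MatrixPencil R ρ κ) (Y : MatrixPencil R ρ' κ') :
    MatrixPencil R (ρ ⊕ ρ') (κ ⊕ κ') :=
  (fromBlocks X.1 0 0 Y.1, fromBlocks X.2 0 0 Y.2)

/-- The transposed pencil `Aᵀ - λ Bᵀ`. -/
def transpose (X : MatrixPencil R ρ κ) : MatrixPencil R κ ρ := (X.1ᵀ, X.2ᵀ)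

/-- The pencil with rows and columns relabelled along `e` and `f`. -/
def relabel (X : MatrixPencil R ρ κ) (e : ρ' → ρ) (f : κ' → κ) : MatrixPencil R ρ' κ' :=
  (X.1.submatrix e f, X.2.submatrix e f)

@[simp] theorem transpose_directSum [Zero R] (X : MatrixPencil R ρ κ) (Y : MatrixPencil R ρ' κ') :
    transpose (directSum X Y) = directSum (transpose X) (transpose Y) := by
  simp [transpose, directSum, fromBlocks_transpose]

variable [CommRing R] [Fintype ι] [Fintype ι'] [Fintype ι''] [Fintype ρ] [Fintype ρ']
  [Fintype κ] [Fintype κ'] [Fintype τ] [Fintype τ']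

/-- The pencil `S A T - λ S B T`. -/
def sandwich (S : Matrix ρ' ρ R) (X : MatrixPencil R ρ κ) (T : Matrix κ κ' R) :
    MatrixPencil R ρ' κ' :=
  (S * X.1 * T, S * X.2 * T)

theorem sandwich_sandwich (S : Matrix ρ' ρ R) (S' : Matrix ρ'' ρ' R) (X : MatrixPencil R ρ κ)
    (T : Matrix κ κ' R) (T' : Matrix κ' κ'' R) :
    sandwich S' (sandwich S X T) T' = sandwich (S' * S) X (T * T') := by
  simp only [sandwich, Matrix.mul_assoc]

variable [DecidableEq ι] [DecidableEq ι'] [DecidableEq ι''] [DecidableEq ρ] [DecidableEq ρ']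
  [DecidableEq κ] [DecidableEq κ'] [DecidableEq τ] [DecidableEq τ']

@[simp] theorem sandwich_one_one (X : MatrixPencil R ρ κ) : sandwich 1 X 1 = X := by
  simp [sandwich]

/-- Strict equivalence of pencils over possibly different index types. -/
def StrictEquiv (X : MatrixPencil R ρ κ) (Y : MatrixPencil R ρ' κ') : Prop :=
  ∃ (S : Matrix ρ' ρ R) (S' : Matrix ρ ρ' R) (T : Matrix κ κ' R) (T' : Matrix κ' κ R),
    (S * S' = 1 ∧ S' * S = 1) ∧ (T * T' = 1 ∧ T' * T = 1) ∧ sandwich S X T = Y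

/-- Congruence of pencils over possibly different index types. -/
def Congruent (P : SquarePencil R ι) (Q : SquarePencil R ι') : Prop :=
  ∃ (S : Matrix ι ι' R) (T : Matrix ι' ι R), S * T = 1 ∧ T * S = 1 ∧ sandwich Sᵀ P S = Q

namespace Congruent

variable {P : SquarePencil R ι} {Q : SquarePencil R ι'} {P' : SquarePencil R τ}
  {Q' : SquarePencil R τ'} {P'' : SquarePencil R ι''}

theorem refl (P : SquarePencil R ι) : Congruent P P :=
  ⟨1, 1, by simp, by simp, by simp⟩

theorem symm (h : Congruent P Q) : Congruent Q P := by
  obtain ⟨S, T, hST, hTS, rfl⟩ := h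
  refine ⟨T, S, hTS, hST, ?_⟩
  rw [sandwich_sandwich, ← transpose_mul, hST, transpose_one, sandwich_one_one]

theorem trans (h : Congruent P Q) (h' : Congruent Q P'') : Congruent P P'' := by
  obtain ⟨S, T, hST, hTS, rfl⟩ := h
  obtain ⟨S', T', hST', hTS', rfl⟩ := h'
  refine ⟨S * S', T' * T, ?_, ?_, ?_⟩
  · rw [Matrix.mul_assoc, ← Matrix.mul_assoc S', hST', Matrix.one_mul, hST]
  · rw [Matrix.mul_assoc, ← Matrix.mul_assoc T, hTS, Matrix.one_mul, hTS']
  · rw [sandwich_sandwich, transpose_mul]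

theorem directSum (h : Congruent P P') (h' : Congruent Q Q') :
    Congruent (directSum P Q) (directSum P' Q') := by
  obtain ⟨S, T, hST, hTS, rfl⟩ := h
  obtain ⟨S', T', hST', hTS', rfl⟩ := h'
  exact ⟨fromBlocks S 0 0 S', fromBlocks T 0 0 T',
    by simp [fromBlocks_multiply, *], by simp [fromBlocks_multiply, *],
    by simp [fromBlocks_multiply, fromBlocks_transpose, sandwich, SkewPencil.directSum]⟩

theorem card_eq [Nontrivial R] (h : Congruent P Q) : Fintype.card ι = Fintype.card ι' := by
  obtain ⟨S, T, hST, hTS, -⟩ := h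
  exact Matrix.square_of_invertible S T hST hTS

end Congruent

theorem congruent_relabel (e : ι' ≃ ι) (P : SquarePencil R ι) : Congruent P (relabel P e e) := by
  refine ⟨(1 : Matrix ι ι R).submatrix id e, (1 : Matrix ι ι R).submatrix e id, ?_, ?_, ?_⟩
  · rw [submatrix_mul_equiv]; simp
  · rw [← submatrix_mul _ _ _ _ _ Function.bijective_id]; simp
  · ext i j <;> simp [sandwich, relabel, Matrix.mul_apply, Matrix.one_apply]

theorem directSum_comm (P : SquarePencil R ι) (Q : SquarePencil R ι') :
    Congruent (directSum P Q) (directSum Q P) := by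
  convert congruent_relabel (Equiv.sumComm ι' ι) (directSum P Q) using 1
  ext (i | i) (j | j) <;> rfl

theorem directSum_assoc (P : SquarePencil R ι) (Q : SquarePencil R ι') (P' : SquarePencil R τ) :
    Congruent (directSum (directSum P Q) P') (directSum P (directSum Q P')) := by
  convert congruent_relabel (Equiv.sumAssoc ι ι' τ).symm (directSum (directSum P Q) P') using 1
  ext (i | i | i) (j | j | j) <;> rfl

theorem directSum_isEmpty [IsEmpty ι'] (P : SquarePencil R ι) (Q : SquarePencil R ι') :
    Congruent (directSum P Q) P := by
  convert congruent_relabel (Equiv.sumEmpty ι ι').symm (directSum P Q) using 1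
  exact Prod.ext rfl rfl

theorem isEmpty_directSum [IsEmpty ι] (P : SquarePencil R ι) (Q : SquarePencil R ι') :
    Congruent (directSum P Q) Q :=
  (directSum_comm P Q).trans (directSum_isEmpty Q P)

theorem directSum_left_comm (P : SquarePencil R ι) (Q : SquarePencil R ι')
    (P' : SquarePencil R τ) :
    Congruent (directSum P (directSum Q P')) (directSum Q (directSum P P')) :=
  (directSum_assoc P Q P').symm.trans
    (((directSum_comm P Q).directSum (.refl P')).trans (directSum_assoc Q P P'))

end Congruence

section SkewDouble

variable {R : Type*} [CommRing R] {ρ ρ' κ κ' : Type*}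

/-- The skew-symmetric pencil `[[0, X], [-Xᵀ, 0]]`: the version of the block matrix `skewPair` for
pencils with arbitrary index types. -/
def skewDouble (X : MatrixPencil R ρ κ) : SquarePencil R (ρ ⊕ κ) :=
  (fromBlocks 0 X.1 (-X.1ᵀ) 0, fromBlocks 0 X.2 (-X.2ᵀ) 0)

variable [Fintype ρ] [DecidableEq ρ] [Fintype ρ'] [DecidableEq ρ']
  [Fintype κ] [DecidableEq κ] [Fintype κ'] [DecidableEq κ']

theorem congruent_skewPair {p q : ℕ} (X : Pencil p q) :
    Congruent (skewDouble X) (skewPair X.1, skewPair X.2) :=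
  congruent_relabel finSumFinEquiv.symm (skewDouble X)

theorem directSum_skewDouble (X : MatrixPencil R ρ κ) (Y : MatrixPencil R ρ' κ') :
    Congruent (directSum (skewDouble X) (skewDouble Y)) (skewDouble (directSum X Y)) := by
  convert congruent_relabel (Equiv.sumSumSumComm ρ ρ' κ κ')
    (directSum (skewDouble X) (skewDouble Y)) using 1
  ext ((i | i) | (i | i)) ((j | j) | (j | j)) <;> simp [skewDouble, directSum, relabel]

theorem skewDouble_neg_transpose (X : MatrixPencil R ρ κ) :
    Congruent (skewDouble (-transpose X)) (skewDouble X) := by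
  convert congruent_relabel (Equiv.sumComm ρ κ) (skewDouble (-transpose X)) using 1
  ext (i | i) (j | j) <;> simp [skewDouble, relabel, transpose]

namespace StrictEquiv

variable {X : MatrixPencil R ρ κ} {Y : MatrixPencil R ρ' κ'}

theorem symm (h : StrictEquiv X Y) : StrictEquiv Y X := by
  obtain ⟨S, S', T, T', ⟨hS, hS'⟩, ⟨hT, hT'⟩, rfl⟩ := h
  refine ⟨S', S, T', T, ⟨hS', hS⟩, ⟨hT', hT⟩, ?_⟩
  rw [sandwich_sandwich, hS', hT, sandwich_one_one]

theorem relabel (e : ρ' ≃ ρ) (f : κ' ≃ κ) (X : MatrixPencil R ρ κ) :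
    StrictEquiv X (relabel X e f) := by
  refine ⟨(1 : Matrix ρ ρ R).submatrix e id, (1 : Matrix ρ ρ R).submatrix id e,
    (1 : Matrix κ κ R).submatrix id f, (1 : Matrix κ κ R).submatrix f id,
    ⟨?_, ?_⟩, ⟨?_, ?_⟩, ?_⟩
  · rw [← submatrix_mul _ _ _ _ _ Function.bijective_id]; simp
  · rw [submatrix_mul_equiv]; simp
  · rw [submatrix_mul_equiv]; simp
  · rw [← submatrix_mul _ _ _ _ _ Function.bijective_id]; simp
  · ext i j <;> simp [sandwich, SkewPencil.relabel, Matrix.mul_apply, Matrix.one_apply]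

theorem congruent_skewDouble (h : StrictEquiv X Y) : Congruent (skewDouble X) (skewDouble Y) := by
  obtain ⟨S, S', T, T', ⟨hS, hS'⟩, ⟨hT, hT'⟩, rfl⟩ := h
  have hSt : Sᵀ * S'ᵀ = 1 := by rw [← transpose_mul, hS', transpose_one]
  have hSt' : S'ᵀ * Sᵀ = 1 := by rw [← transpose_mul, hS, transpose_one]
  refine ⟨fromBlocks Sᵀ 0 0 T, fromBlocks S'ᵀ 0 0 T', ?_, ?_, ?_⟩
  · simp [fromBlocks_multiply, hSt, hT]
  · simp [fromBlocks_multiply, hSt', hT']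
  · simp [skewDouble, sandwich, fromBlocks_multiply, fromBlocks_transpose, Matrix.mul_assoc]

end StrictEquiv

end SkewDouble

section TrivialKernel

variable {R : Type*} [CommRing R] {ρ ρ' κ κ' : Type*} [Fintype κ] [Fintype κ']

/-- The two matrices of the pencil have no common nonzero kernel vector. -/
def TrivialKernel (X : MatrixPencil R ρ κ) : Prop :=
  ∀ v, X.1 *ᵥ v = 0 → X.2 *ᵥ v = 0 → v = 0

theorem TrivialKernel.directSum {X : MatrixPencil R ρ κ} {Y : MatrixPencil R ρ' κ'}
    (hX : TrivialKernel X) (hY : TrivialKernel Y) : TrivialKernel (directSum X Y) := by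
  intro v h₁ h₂
  simp only [SkewPencil.directSum, fromBlocks_mulVec, zero_mulVec, add_zero, zero_add,
    ← Sum.elim_zero_zero, Sum.elim_eq_iff] at h₁ h₂
  rw [← Sum.elim_comp_inl_inr v, hX _ h₁.1 h₂.1, hY _ h₁.2 h₂.2, Sum.elim_zero_zero]

variable [Fintype ρ] [Fintype ρ']

theorem exists_inverse_of_mulVec_eq_zero {𝕜 : Type*} [Field 𝕜] [DecidableEq ρ] [DecidableEq κ]
    (U : Matrix ρ κ 𝕜) (hcard : Fintype.card ρ = Fintype.card κ)
    (hU : ∀ v, U *ᵥ v = 0 → v = 0) : ∃ V : Matrix κ ρ 𝕜, U * V = 1 ∧ V * U = 1 := by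
  have hinj : Function.Injective U.mulVecLin :=
    (injective_iff_map_eq_zero U.mulVecLin).2 hU
  have hsurj : Function.Surjective U.mulVecLin :=
    (LinearMap.injective_iff_surjective_of_finrank_eq_finrank (by simp [hcard])).1 hinj
  obtain ⟨V, hV⟩ := Matrix.mulVec_surjective_iff_exists_right_inverse.1 hsurj
  exact ⟨V, hV, (Matrix.mul_eq_one_comm_of_card_eq _ _ _ hcard).1 hV⟩

/-- A square sandwich whose result has trivial left and right kernels is automatically invertible,
which spares us exhibiting the inverses. -/
theorem strictEquiv_of_trivialKernel {𝕜 : Type*} [Field 𝕜] [DecidableEq ρ] [DecidableEq κ]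
    [DecidableEq ρ'] [DecidableEq κ'] {X : MatrixPencil 𝕜 ρ κ} {Y : MatrixPencil 𝕜 ρ' κ'}
    (S : Matrix ρ' ρ 𝕜) (T : Matrix κ κ' 𝕜) (hρ : Fintype.card ρ' = Fintype.card ρ)
    (hκ : Fintype.card κ' = Fintype.card κ) (h : sandwich S X T = Y)
    (hleft : TrivialKernel (transpose Y)) (hright : TrivialKernel Y) : StrictEquiv X Y := by
  subst h
  obtain ⟨T', hT⟩ := exists_inverse_of_mulVec_eq_zero T hκ.symm fun v hv =>
    hright v (by simp [sandwich, ← mulVec_mulVec, hv]) (by simp [sandwich, ← mulVec_mulVec, hv])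
  obtain ⟨S', hS⟩ := exists_inverse_of_mulVec_eq_zero Sᵀ hρ.symm fun v hv =>
    hleft v (by simp [transpose, sandwich, ← mulVec_mulVec, hv])
      (by simp [transpose, sandwich, ← mulVec_mulVec, hv])
  refine ⟨S, S'ᵀ, T, T', ⟨?_, ?_⟩, hT, rfl⟩
  · rw [← transpose_transpose S, ← transpose_mul, hS.2, transpose_one]
  · rw [← transpose_transpose S, ← transpose_mul, hS.1, transpose_one]

end TrivialKernel

/-! ### Degenerations -/

section Degeneration

open Filter Topology

variable {R : Type*} [CommRing R] [TopologicalSpace R] {ι ι' ι'' τ τ' : Type*}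
  [Fintype ι] [DecidableEq ι] [Fintype ι'] [DecidableEq ι'] [Fintype ι''] [DecidableEq ι'']
  [Fintype τ] [DecidableEq τ] [Fintype τ'] [DecidableEq τ']

/-- `P` degenerates to `Q` if `Q` lies in the closure of the congruence orbit of `P`. The index
types may differ, so the orbit is taken among the pencils indexed like `Q`. -/
def DegeneratesTo (P : SquarePencil R ι) (Q : SquarePencil R ι') : Prop :=
  Q ∈ closure {Q' | Congruent P Q'}

theorem Congruent.degeneratesTo {P : SquarePencil R ι} {Q : SquarePencil R ι'}
    (h : Congruent P Q) : DegeneratesTo P Q :=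
  subset_closure h

theorem DegeneratesTo.of_punctured_nhds [(𝓝[≠] (0 : R)).NeBot] {P : SquarePencil R ι}
    {f : R → SquarePencil R ι'} (hf : ContinuousAt f 0) (h : ∀ c ≠ 0, Congruent P (f c)) :
    DegeneratesTo P (f 0) :=
  mem_closure_of_tendsto (b := 𝓝[≠] 0) (hf.tendsto.mono_left nhdsWithin_le_nhds)
    (eventually_nhdsWithin_of_forall h)

namespace DegeneratesTo

variable {P : SquarePencil R ι} {Q : SquarePencil R ι'} {Q' : SquarePencil R ι''}

theorem map (h : DegeneratesTo P Q) {P' : SquarePencil R τ}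
    {g : SquarePencil R ι' → SquarePencil R τ'} (hg : Continuous g)
    (hPP' : ∀ Q, Congruent P Q → DegeneratesTo P' (g Q)) : DegeneratesTo P' (g Q) :=
  Set.MapsTo.closure_left (t := closure {Q' | Congruent P' Q'}) hPP' hg isClosed_closure h

theorem directSum_right (h : DegeneratesTo P Q) (P' : SquarePencil R τ) :
    DegeneratesTo (directSum P P') (directSum Q P') :=
  h.map (g := fun Q => directSum Q P')
    ((continuous_fst.matrix_fromBlocks continuous_const continuous_const continuous_const).prodMk
      (continuous_snd.matrix_fromBlocks continuous_const continuous_const continuous_const))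
    fun _ hQ => (hQ.directSum (.refl P')).degeneratesTo

variable [IsTopologicalRing R]

theorem trans_congruent (h : DegeneratesTo P Q) (h' : Congruent Q Q') : DegeneratesTo P Q' := by
  obtain ⟨S, T, hST, hTS, rfl⟩ := h'
  exact h.map (g := fun Q => sandwich Sᵀ Q S) (by unfold sandwich; fun_prop)
    fun Q hQ => (hQ.trans ⟨S, T, hST, hTS, rfl⟩).degeneratesTo

theorem trans (h : DegeneratesTo P Q) (h' : DegeneratesTo Q Q') : DegeneratesTo P Q' :=
  closure_minimal (fun _ hQ => h.trans_congruent hQ) isClosed_closure h'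

theorem congr {P' : SquarePencil R τ} {Q' : SquarePencil R τ'} (h : DegeneratesTo P Q)
    (hP : Congruent P P') (hQ : Congruent Q Q') : DegeneratesTo P' Q' :=
  (hP.symm.degeneratesTo.trans h).trans_congruent hQ

end DegeneratesTo

variable {ρ₁ ρ₂ κ₁ κ₂ : Type*} [Fintype ρ₁] [DecidableEq ρ₁] [Fintype ρ₂] [DecidableEq ρ₂]
  [Fintype κ₁] [DecidableEq κ₁] [Fintype κ₂] [DecidableEq κ₂]

/-- The block lower triangular pencil `[[X, 0], [E, Y]]`. -/
def blockLower (X : MatrixPencil R ρ₁ κ₁) (E : MatrixPencil R ρ₂ κ₁) (Y : MatrixPencil R ρ₂ κ₂) :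
    MatrixPencil R (ρ₁ ⊕ ρ₂) (κ₁ ⊕ κ₂) :=
  (fromBlocks X.1 0 E.1 Y.1, fromBlocks X.2 0 E.2 Y.2)

/-- Let the off-diagonal block of a block triangular pencil tend to zero. -/
theorem DegeneratesTo.of_blockLower [IsTopologicalRing R] [(𝓝[≠] (0 : R)).NeBot]
    {P : SquarePencil R ι} {X : MatrixPencil R ρ₁ κ₁} {Y : MatrixPencil R ρ₂ κ₂}
    (E : MatrixPencil R ρ₂ κ₁)
    (h : ∀ c : R, c ≠ 0 → Congruent P (skewDouble (blockLower X (c • E) Y))) :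
    DegeneratesTo P (directSum (skewDouble X) (skewDouble Y)) := by
  have hcont : Continuous fun c : R => skewDouble (blockLower X (c • E) Y) := by
    refine .prodMk (.matrix_fromBlocks ?_ ?_ (.neg (.matrix_transpose ?_)) ?_)
      (.matrix_fromBlocks ?_ ?_ (.neg (.matrix_transpose ?_)) ?_) <;>
    first
      | exact continuous_const
      | exact .matrix_fromBlocks continuous_const continuous_const (by fun_prop) continuous_const
  have hzero : skewDouble (blockLower X ((0 : R) • E) Y) = skewDouble (directSum X Y) := by
    simp [blockLower, directSum]
  exact (hzero ▸ of_punctured_nhds hcont.continuousAt h).trans_congruent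
    (directSum_skewDouble X Y).symm

end Degeneration

section BlockSum

variable {s t : Multiset SBlock}

/-- The direct sum of a multiset of canonical blocks, in an arbitrary order. -/
def blockSum (s : Multiset SBlock) : SquarePencil ℂ (Fin (sizeSum s.toList)) :=
  spencilOfList s.toList

theorem congruent_dsum {m n : ℕ} (P : Pencil m m) (Q : Pencil n n) :
    Congruent (directSum P Q) (Pencil.dsum P Q) :=
  congruent_relabel finSumFinEquiv.symm (directSum P Q)

theorem congruent_spencilOfList_cons (b : SBlock) (l : List SBlock) :
    Congruent (directSum b.toPencil (spencilOfList l)) (spencilOfList (b :: l)) :=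
  congruent_dsum _ _

theorem congruent_spencilOfList_of_perm {l l' : List SBlock} (h : l.Perm l') :
    Congruent (spencilOfList l) (spencilOfList l') := by
  have cons (b : SBlock) {l : List SBlock} {ι : Type} [Fintype ι] [DecidableEq ι]
      {P : SquarePencil ℂ ι} (h : Congruent P (spencilOfList l)) :
      Congruent (directSum b.toPencil P) (spencilOfList (b :: l)) :=
    ((Congruent.refl _).directSum h).trans (congruent_spencilOfList_cons b l)
  induction h with
  | nil => exact .refl _
  | cons b _ ih => exact (congruent_spencilOfList_cons _ _).symm.trans (cons b ih)
  | swap a b l =>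
    exact (cons b (congruent_spencilOfList_cons a l)).symm.trans
      ((directSum_left_comm _ _ _).trans (cons a (congruent_spencilOfList_cons b l)))
  | trans _ _ ih ih' => exact ih.trans ih'

theorem congruent_spencilOfList_blockSum (l : List SBlock) :
    Congruent (spencilOfList l) (blockSum l) :=
  congruent_spencilOfList_of_perm (Multiset.coe_eq_coe.1 (Multiset.coe_toList _).symm)

theorem congruent_blockSum_cons (b : SBlock) (s : Multiset SBlock) :
    Congruent (directSum b.toPencil (blockSum s)) (blockSum (b ::ₘ s)) := by
  have h := congruent_spencilOfList_blockSum (b :: s.toList)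
  rw [← Multiset.cons_coe, Multiset.coe_toList] at h
  exact (congruent_spencilOfList_cons b s.toList).trans h

theorem sizeSum_eq_sum (l : List SBlock) : sizeSum l = (l.map SBlock.size).sum := by
  induction l with
  | nil => rfl
  | cons b l ih => simp [sizeSum, ih]

theorem sizeSum_toList (s : Multiset SBlock) : sizeSum s.toList = (s.map SBlock.size).sum := by
  rw [sizeSum_eq_sum, ← Multiset.sum_coe, ← Multiset.map_coe, Multiset.coe_toList]

theorem isEmpty_fin_sizeSum (hs : ∀ b ∈ s, b.size = 0) : IsEmpty (Fin (sizeSum s.toList)) := by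
  rw [sizeSum_toList, Multiset.sum_eq_zero (by simpa using hs)]
  infer_instance

theorem congruent_blockSum_add (s t : Multiset SBlock) :
    Congruent (directSum (blockSum s) (blockSum t)) (blockSum (s + t)) := by
  induction s using Multiset.induction with
  | empty =>
    have := isEmpty_fin_sizeSum (s := 0) (by simp)
    rw [zero_add]
    exact isEmpty_directSum _ _
  | cons b s ih =>
    rw [Multiset.cons_add]
    exact (((congruent_blockSum_cons b s).symm.directSum (.refl _)).trans
      (directSum_assoc _ _ _)).trans
        (((Congruent.refl _).directSum ih).trans (congruent_blockSum_cons b (s + t)))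

theorem congruent_blockSum_add_of_size_eq_zero (s : Multiset SBlock)
    (ht : ∀ b ∈ t, b.size = 0) : Congruent (blockSum s) (blockSum (s + t)) := by
  have := isEmpty_fin_sizeSum ht
  exact (directSum_isEmpty _ _).symm.trans (congruent_blockSum_add s t)

theorem congruent_blockSum_singleton (b : SBlock) : Congruent b.toPencil (blockSum {b}) := by
  have := isEmpty_fin_sizeSum (s := 0) (by simp)
  exact (directSum_isEmpty _ _).symm.trans (congruent_blockSum_cons b 0)

theorem congruent_blockSum_pair {ι ι' : Type*} [Fintype ι] [DecidableEq ι] [Fintype ι']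
    [DecidableEq ι'] {P : SquarePencil ℂ ι} {Q : SquarePencil ℂ ι'} {b c : SBlock}
    (hb : Congruent P b.toPencil) (hc : Congruent Q c.toPencil) :
    Congruent (directSum P Q) (blockSum {b, c}) :=
  (hb.directSum (hc.trans (congruent_blockSum_singleton c))).trans (congruent_blockSum_cons b {c})

theorem DegeneratesTo.blockSum_add (h : DegeneratesTo (blockSum s) (blockSum t))
    (r : Multiset SBlock) : DegeneratesTo (blockSum (s + r)) (blockSum (t + r)) :=
  (h.directSum_right _).congr (congruent_blockSum_add s r) (congruent_blockSum_add t r)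

theorem pencilCongruent_iff {n : ℕ} {P Q : Pencil n n} :
    Pencil.Congruent P Q ↔ Congruent (P : SquarePencil ℂ (Fin n)) Q := by
  constructor
  · rintro ⟨S, hS, h₁, h₂⟩
    rw [Matrix.isUnit_iff_isUnit_det] at hS
    exact ⟨S, S⁻¹, Matrix.mul_nonsing_inv S hS, Matrix.nonsing_inv_mul S hS, Prod.ext h₁ h₂⟩
  · rintro ⟨S, T, hST, -, rfl⟩
    exact ⟨S, .of_mul_eq_one _ hST, rfl, rfl⟩

theorem weakRepresentsC_iff {n : ℕ} {P : Pencil n n} :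
    WeakRepresentsC P s ↔ Congruent (blockSum s) (P : SquarePencil ℂ (Fin n)) := by
  simp only [WeakRepresentsC, pencilCongruent_iff]
  constructor
  · rintro ⟨l, h, rfl, hP⟩
    exact (congruent_spencilOfList_blockSum l).symm.trans
      ((congruent_relabel (finCongr h.symm) _).trans hP)
  · intro h
    have hsize : sizeSum s.toList = n := by simpa using h.card_eq
    exact ⟨s.toList, hsize, s.coe_toList,
      (congruent_relabel (finCongr hsize.symm) (blockSum s)).symm.trans h⟩

theorem orbC_subset_closure_iff_degeneratesTo {n : ℕ} {P Q : Pencil n n} :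
    Pencil.orbC Q ⊆ closure (Pencil.orbC P) ↔
      DegeneratesTo (P : SquarePencil ℂ (Fin n)) Q := by
  simp only [Pencil.orbC, pencilCongruent_iff]
  exact ⟨fun h => h (Congruent.refl _), fun h _ hQ => h.trans_congruent hQ⟩

end BlockSum

/-! ### Canonical blocks -/

section UnitVec

variable {R : Type*} [CommRing R] {m n : ℕ}

variable (R m) in
/-- The `i`-th standard basis vector, with the junk value `0` if `i` is out of range. -/
def unitVec (i : ℕ) : Fin m → R := fun t => if (t : ℕ) = i then 1 else 0

theorem unitVec_dotProduct (i : ℕ) (v : Fin m → R) :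
    unitVec R m i ⬝ᵥ v = if h : i < m then v ⟨i, h⟩ else 0 := by
  split_ifs with h
  · simp [unitVec, dotProduct, ← Fin.ext_iff (b := ⟨i, h⟩)]
  · exact Finset.sum_eq_zero fun t _ => by simp [unitVec, show (t : ℕ) ≠ i by omega]

theorem mulVec_unitVec {ρ : Type*} (A : Matrix ρ (Fin m) R) (i : ℕ) (a : ρ) :
    (A *ᵥ unitVec R m i) a = if h : i < m then A a ⟨i, h⟩ else 0 := by
  rw [mulVec, dotProduct_comm, unitVec_dotProduct]

end UnitVec

section ShiftPencil

variable {R : Type*} [CommRing R] {m n : ℕ}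

variable (R m n) in
/-- The `m × n` pencil with ones on the superdiagonal of the first matrix and on the diagonal of
the second. For `n = m` it is the Jordan block with eigenvalue `0`, for `n = m + 1` the singular
Kronecker block `L_m`. -/
def shiftPencil : MatrixPencil R (Fin m) (Fin n) :=
  (Matrix.of fun i j => if (j : ℕ) = i + 1 then 1 else 0,
   Matrix.of fun i j => if (j : ℕ) = i then 1 else 0)

theorem shiftPencil_fst_mulVec (v : Fin n → R) (i : Fin m) :
    ((shiftPencil R m n).1 *ᵥ v) i = if h : (i : ℕ) + 1 < n then v ⟨i + 1, h⟩ else 0 :=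
  unitVec_dotProduct _ v

theorem shiftPencil_snd_mulVec (v : Fin n → R) (i : Fin m) :
    ((shiftPencil R m n).2 *ᵥ v) i = if h : (i : ℕ) < n then v ⟨i, h⟩ else 0 :=
  unitVec_dotProduct _ v

theorem shiftPencil_fst_mul {κ : Type*} (A : Matrix (Fin n) κ R) (i : Fin m) (j : κ) :
    ((shiftPencil R m n).1 * A) i j = if h : (i : ℕ) + 1 < n then A ⟨i + 1, h⟩ j else 0 :=
  shiftPencil_fst_mulVec (A.col j) i

theorem shiftPencil_snd_mul {κ : Type*} (A : Matrix (Fin n) κ R) (i : Fin m) (j : κ) :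
    ((shiftPencil R m n).2 * A) i j = if h : (i : ℕ) < n then A ⟨i, h⟩ j else 0 :=
  shiftPencil_snd_mulVec (A.col j) i

theorem mul_shiftPencil_fst {ρ : Type*} (A : Matrix ρ (Fin m) R) (i : ρ) (j : Fin n) :
    (A * (shiftPencil R m n).1) i j =
      if h : 1 ≤ (j : ℕ) ∧ (j : ℕ) - 1 < m then A i ⟨j - 1, h.2⟩ else 0 := by
  have hj (x : Fin m) : (j : ℕ) = x + 1 ↔ 1 ≤ (j : ℕ) ∧ (x : ℕ) = j - 1 := by omega
  simp only [Matrix.mul_apply, shiftPencil, of_apply, hj]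
  by_cases h : 1 ≤ (j : ℕ)
  · simpa [h, unitVec, dotProduct, mul_comm] using unitVec_dotProduct (j - 1) (A i)
  · simp [h]

theorem mul_shiftPencil_snd {ρ : Type*} (A : Matrix ρ (Fin m) R) (i : ρ) (j : Fin n) :
    (A * (shiftPencil R m n).2) i j = if h : (j : ℕ) < m then A i ⟨j, h⟩ else 0 := by
  rw [← unitVec_dotProduct, dotProduct_comm]
  simp [Matrix.mul_apply, dotProduct, shiftPencil, unitVec, eq_comm]

theorem transpose_shiftPencil_snd : (transpose (shiftPencil R m n)).2 = (shiftPencil R n m).2 := by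
  ext i j
  simp [transpose, shiftPencil, eq_comm]

theorem shiftPencil_self_snd : (shiftPencil R m m).2 = 1 := by
  ext i j
  simp [shiftPencil, Matrix.one_apply, Fin.ext_iff, eq_comm]

theorem trivialKernel_shiftPencil (h : n ≤ m + 1) (h' : n ≤ m ∨ 1 ≤ m) :
    TrivialKernel (shiftPencil R m n) := by
  intro v h₁ h₂
  ext i
  rcases lt_or_ge (i : ℕ) m with him | him
  · simpa [shiftPencil_snd_mulVec] using congrFun h₂ ⟨i, him⟩
  · have hi : (i : ℕ) - 1 + 1 = i := by omega
    simpa [shiftPencil_fst_mulVec, hi] using congrFun h₁ ⟨i - 1, by omega⟩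

theorem trivialKernel_transpose_shiftPencil (h : m ≤ n) :
    TrivialKernel (transpose (shiftPencil R m n)) := by
  intro v _ hv
  rw [transpose_shiftPencil_snd] at hv
  ext i
  simpa [shiftPencil_snd_mulVec] using congrFun hv ⟨i, by omega⟩

theorem unitVec_dotProduct_shiftPencil_fst (i j : ℕ) :
    unitVec R m i ⬝ᵥ (shiftPencil R m n).1 *ᵥ unitVec R n j =
      if i < m ∧ j < n ∧ j = i + 1 then 1 else 0 := by
  simp only [unitVec_dotProduct, mulVec_unitVec, shiftPencil, of_apply]
  split_ifs <;> first | rfl | omega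

theorem unitVec_dotProduct_shiftPencil_snd (i j : ℕ) :
    unitVec R m i ⬝ᵥ (shiftPencil R m n).2 *ᵥ unitVec R n j =
      if i < m ∧ j < n ∧ j = i then 1 else 0 := by
  simp only [unitVec_dotProduct, mulVec_unitVec, shiftPencil, of_apply]
  split_ifs <;> first | rfl | omega

variable (R m n) in
/-- The `m × n` pencil whose only nonzero entry is a constant `1` in position `(i, j)`. -/
def unitPencil (i j : ℕ) : MatrixPencil R (Fin m) (Fin n) :=
  (vecMulVec (unitVec R m i) (unitVec R n j), 0)

theorem unitVec_dotProduct_unitPencil_fst (i j a b : ℕ) :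
    unitVec R m i ⬝ᵥ (unitPencil R m n a b).1 *ᵥ unitVec R n j =
      if i < m ∧ j < n ∧ i = a ∧ j = b then 1 else 0 := by
  simp only [unitVec_dotProduct, mulVec_unitVec, unitPencil, vecMulVec_apply, unitVec]
  split_ifs <;> first | simp; done | omega

end ShiftPencil

section BlockDegenerations

open Topology

theorem of_mul_mul_transpose_of_apply {R ρ κ ρ' κ' : Type*} [CommRing R] [Fintype ρ] [Fintype κ]
    (S : ρ' → ρ → R) (A : Matrix ρ κ R) (T : κ' → κ → R) (i : ρ') (j : κ') :
    (Matrix.of S * A * (Matrix.of T)ᵀ) i j = S i ⬝ᵥ A *ᵥ T j := by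
  rw [Matrix.mul_assoc]
  rfl

theorem sumElim_dotProduct_fromBlocks_mulVec {R ρ κ ρ' κ' : Type*} [CommRing R] [Fintype ρ]
    [Fintype κ] [Fintype ρ'] [Fintype κ'] (A : Matrix ρ κ R) (E : Matrix ρ' κ R)
    (D : Matrix ρ' κ' R) (a : ρ → R) (b : ρ' → R) (a' : κ → R) (b' : κ' → R) :
    Sum.elim a b ⬝ᵥ fromBlocks A 0 E D *ᵥ Sum.elim a' b' =
      a ⬝ᵥ A *ᵥ a' + b ⬝ᵥ E *ᵥ a' + b ⬝ᵥ D *ᵥ b' := by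
  rw [fromBlocks_mulVec, sumElim_dotProduct_sumElim]
  simp [dotProduct_add, add_assoc]

variable {𝕜 : Type*} [Field 𝕜]

theorem strictEquiv_blockLower_grow (j k n : ℕ) (h : n = k ∨ n = k + 1 ∧ 1 ≤ k ∧ j ≤ k) {c : 𝕜}
    (hc : c ≠ 0) :
    StrictEquiv
      (blockLower (shiftPencil 𝕜 j (j + 1)) (c • unitPencil 𝕜 (k + 1) (j + 1) 0 0)
        (shiftPencil 𝕜 (k + 1) (n + 1)))
      (directSum (shiftPencil 𝕜 (j + 1) (j + 2)) (shiftPencil 𝕜 k n)) := by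
  let S : Fin (j + 1) ⊕ Fin k → Fin j ⊕ Fin (k + 1) → 𝕜 := Sum.elim
    (fun i => Sum.elim (if (i : ℕ) = 0 then 0 else c • unitVec 𝕜 j (i - 1)) (unitVec 𝕜 (k + 1) i))
    (fun i => Sum.elim 0 (unitVec 𝕜 (k + 1) (i + 1)))
  let T : Fin (j + 2) ⊕ Fin n → Fin (j + 1) ⊕ Fin (n + 1) → 𝕜 := Sum.elim
    (fun i => Sum.elim (if (i : ℕ) = 0 then 0 else c⁻¹ • unitVec 𝕜 (j + 1) (i - 1))
      (if (i : ℕ) = 0 then unitVec 𝕜 (n + 1) 0 else 0))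
    (fun i => Sum.elim (-(c⁻¹ • unitVec 𝕜 (j + 1) i)) (unitVec 𝕜 (n + 1) (i + 1)))
  refine strictEquiv_of_trivialKernel (Matrix.of S) (Matrix.of T)ᵀ (by simp; omega)
    (by simp; omega) ?_ ?_
    ((trivialKernel_shiftPencil (by omega) (by omega)).directSum
      (trivialKernel_shiftPencil (by omega) (by omega)))
  · ext (⟨a, ha⟩ | ⟨a, ha⟩) (⟨b, hb⟩ | ⟨b, hb⟩) <;>
    simp only [S, T, sandwich, blockLower, of_mul_mul_transpose_of_apply, Sum.elim_inl,
      Sum.elim_inr, sumElim_dotProduct_fromBlocks_mulVec, directSum, fromBlocks_apply₁₁,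
      fromBlocks_apply₁₂, fromBlocks_apply₂₁, fromBlocks_apply₂₂] <;>
    (try split_ifs) <;>
    simp only [zero_dotProduct, dotProduct_zero, mulVec_zero, smul_dotProduct,
      dotProduct_smul, mulVec_smul, mulVec_neg, dotProduct_neg, smul_mulVec, Prod.smul_fst,
      Prod.smul_snd, unitVec_dotProduct_shiftPencil_fst, unitVec_dotProduct_shiftPencil_snd,
      unitVec_dotProduct_unitPencil_fst] <;>
    simp only [shiftPencil, unitPencil, of_apply, Matrix.zero_apply, smul_zero, zero_mulVec,
      dotProduct_zero] <;>
    (try split_ifs) <;>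
    first | omega | (simp [hc]; done) | simp_all only [and_false, false_and]
  · rw [transpose_directSum]
    exact (trivialKernel_transpose_shiftPencil (by omega)).directSum
      (trivialKernel_transpose_shiftPencil (by omega))

theorem strictEquiv_blockLower_balance (j k : ℕ) (hjk : j + 1 ≤ k) {c : 𝕜} (hc : c ≠ 0) :
    StrictEquiv
      (blockLower (shiftPencil 𝕜 (j + 1) (j + 1)) (c • unitPencil 𝕜 k (j + 1) (k - 1) j)
        (shiftPencil 𝕜 k k))
      (directSum (shiftPencil 𝕜 j j) (shiftPencil 𝕜 (k + 1) (k + 1))) := by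
  let S : Fin j ⊕ Fin (k + 1) → Fin (j + 1) ⊕ Fin k → 𝕜 := Sum.elim
    (fun i => Sum.elim (unitVec 𝕜 (j + 1) i) (-(c⁻¹ • unitVec 𝕜 k (k - j + i))))
    (fun i => Sum.elim (if (i : ℕ) = k then c • unitVec 𝕜 (j + 1) j else 0) (unitVec 𝕜 k i))
  let T : Fin j ⊕ Fin (k + 1) → Fin (j + 1) ⊕ Fin k → 𝕜 := Sum.elim
    (fun i => Sum.elim (unitVec 𝕜 (j + 1) i) 0)
    (fun i => Sum.elim (if k - j ≤ (i : ℕ) then c⁻¹ • unitVec 𝕜 (j + 1) (i - (k - j)) else 0)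
      (unitVec 𝕜 k i))
  refine strictEquiv_of_trivialKernel (Matrix.of S) (Matrix.of T)ᵀ (by simp; omega)
    (by simp; omega) ?_ ?_
    ((trivialKernel_shiftPencil (by omega) (by omega)).directSum
      (trivialKernel_shiftPencil (by omega) (by omega)))
  · ext (⟨a, ha⟩ | ⟨a, ha⟩) (⟨b, hb⟩ | ⟨b, hb⟩) <;>
    simp only [S, T, sandwich, blockLower, of_mul_mul_transpose_of_apply, Sum.elim_inl,
      Sum.elim_inr, sumElim_dotProduct_fromBlocks_mulVec, directSum, fromBlocks_apply₁₁,
      fromBlocks_apply₁₂, fromBlocks_apply₂₁, fromBlocks_apply₂₂] <;>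
    (try split_ifs) <;>
    simp only [zero_dotProduct, dotProduct_zero, mulVec_zero, smul_dotProduct,
      dotProduct_smul, mulVec_smul, neg_dotProduct, smul_mulVec, Prod.smul_fst,
      Prod.smul_snd, unitVec_dotProduct_shiftPencil_fst, unitVec_dotProduct_shiftPencil_snd,
      unitVec_dotProduct_unitPencil_fst] <;>
    simp only [shiftPencil, unitPencil, of_apply, Matrix.zero_apply, smul_zero, zero_mulVec,
      dotProduct_zero] <;>
    (try split_ifs) <;>
    first | omega | simp [hc]
  · rw [transpose_directSum]
    exact (trivialKernel_transpose_shiftPencil le_rfl).directSum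
      (trivialKernel_transpose_shiftPencil le_rfl)

variable [TopologicalSpace 𝕜] [IsTopologicalRing 𝕜] [(𝓝[≠] (0 : 𝕜)).NeBot]

theorem degeneratesTo_grow (j k n : ℕ) (h : n = k ∨ n = k + 1 ∧ 1 ≤ k ∧ j ≤ k) :
    DegeneratesTo
      (directSum (skewDouble (shiftPencil 𝕜 (j + 1) (j + 2))) (skewDouble (shiftPencil 𝕜 k n)))
      (directSum (skewDouble (shiftPencil 𝕜 j (j + 1)))
        (skewDouble (shiftPencil 𝕜 (k + 1) (n + 1)))) :=
  .of_blockLower _ fun _ hc => (directSum_skewDouble _ _).trans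
    (strictEquiv_blockLower_grow j k n h hc).congruent_skewDouble.symm

theorem degeneratesTo_balance (j k : ℕ) (hjk : j + 1 ≤ k) :
    DegeneratesTo
      (directSum (skewDouble (shiftPencil 𝕜 j j)) (skewDouble (shiftPencil 𝕜 (k + 1) (k + 1))))
      (directSum (skewDouble (shiftPencil 𝕜 (j + 1) (j + 1)))
        (skewDouble (shiftPencil 𝕜 k k))) :=
  .of_blockLower _ fun _ hc => (directSum_skewDouble _ _).trans
    (strictEquiv_blockLower_balance j k hjk hc).congruent_skewDouble.symm

end BlockDegenerations

section Recenter

variable {R : Type*} [CommRing R] {ρ κ ρ' κ' ι ι' : Type*}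

/-- The pencil obtained by the change of parameter that moves the eigenvalue `0` to `o`, where
`none` encodes `∞`. -/
def recenter (o : Option R) (X : MatrixPencil R ρ κ) : MatrixPencil R ρ κ :=
  match o with
  | some μ => (X.1 + μ • X.2, X.2)
  | none => (X.2, X.1)

theorem recenter_directSum (o : Option R) (X : MatrixPencil R ρ κ) (Y : MatrixPencil R ρ' κ') :
    recenter o (directSum X Y) = directSum (recenter o X) (recenter o Y) := by
  cases o <;> simp [recenter, directSum, fromBlocks_add, fromBlocks_smul]

theorem recenter_skewDouble (o : Option R) (X : MatrixPencil R ρ κ) :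
    recenter o (skewDouble X) = skewDouble (recenter o X) := by
  cases o <;> simp [recenter, skewDouble, fromBlocks_add, fromBlocks_smul, add_comm]

variable [Fintype ι] [DecidableEq ι] [Fintype ι'] [DecidableEq ι']
  {P : SquarePencil R ι} {Q : SquarePencil R ι'}

theorem Congruent.recenter (h : Congruent P Q) (o : Option R) :
    Congruent (recenter o P) (recenter o Q) := by
  obtain ⟨S, T, hST, hTS, rfl⟩ := h
  refine ⟨S, T, hST, hTS, ?_⟩
  cases o <;> simp [SkewPencil.recenter, sandwich, Matrix.mul_add, Matrix.add_mul]

theorem DegeneratesTo.recenter [TopologicalSpace R] [IsTopologicalRing R]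
    (h : DegeneratesTo P Q) (o : Option R) : DegeneratesTo (recenter o P) (recenter o Q) := by
  refine h.map ?_ fun Q hQ => (hQ.recenter o).degeneratesTo
  cases o with
  | none => exact continuous_snd.prodMk continuous_fst
  | some μ => exact (continuous_fst.add (continuous_snd.const_smul μ)).prodMk continuous_snd

end Recenter

section Recentered

variable {R : Type*} [CommRing R]

/-- The matrix whose `i`-th row consists of the coefficients of `(X + μ) ^ i`. -/
def binomialMatrix (μ : R) (n : ℕ) : Matrix (Fin n) (Fin n) R :=
  Matrix.of fun i j => ((Polynomial.X + Polynomial.C μ) ^ (i : ℕ)).coeff j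

theorem det_binomialMatrix (μ : R) (n : ℕ) : (binomialMatrix μ n).det = 1 := by
  rw [Matrix.det_of_isLowerTriangular]
  · exact Finset.prod_eq_one fun i _ => by simp [binomialMatrix, Polynomial.coeff_X_add_C_pow]
  · intro i j (hij : (i : ℕ) < j)
    simp [binomialMatrix, Polynomial.coeff_X_add_C_pow, Nat.choose_eq_zero_of_lt hij]

theorem binomialMatrix_mul_shiftPencil_snd (μ : R) (m : ℕ) :
    binomialMatrix μ m * (shiftPencil R m (m + 1)).2 =
      (shiftPencil R m (m + 1)).2 * binomialMatrix μ (m + 1) := by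
  ext i j
  rw [mul_shiftPencil_snd, shiftPencil_snd_mul, dif_pos (i.2.trans m.lt_succ_self)]
  split_ifs with hj
  · rfl
  · simp [binomialMatrix, Polynomial.coeff_X_add_C_pow,
      Nat.choose_eq_zero_of_lt (show (i : ℕ) < j by omega)]

theorem binomialMatrix_mul_shiftPencil_fst (μ : R) (m : ℕ) :
    binomialMatrix μ m * ((shiftPencil R m (m + 1)).1 + μ • (shiftPencil R m (m + 1)).2) =
      (shiftPencil R m (m + 1)).1 * binomialMatrix μ (m + 1) := by
  rw [Matrix.mul_add, Matrix.mul_smul, binomialMatrix_mul_shiftPencil_snd]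
  ext i j
  rw [Matrix.add_apply, Matrix.smul_apply, shiftPencil_fst_mul, shiftPencil_snd_mul,
    dif_pos (i.2.trans m.lt_succ_self), dif_pos (Nat.succ_lt_succ i.2), mul_shiftPencil_fst]
  simp only [binomialMatrix, of_apply, pow_succ, mul_add, Polynomial.coeff_add,
    Polynomial.coeff_mul_C, smul_eq_mul]
  obtain ⟨_ | j, hj⟩ := j
  · simp [mul_comm]
  · rw [dif_pos (by simp; omega)]
    simp [mul_comm]

theorem strictEquiv_recenter_none_shiftPencil (m : ℕ) :
    StrictEquiv (recenter none (shiftPencil R m (m + 1))) (shiftPencil R m (m + 1)) := by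
  convert StrictEquiv.relabel Fin.revPerm Fin.revPerm
    (recenter none (shiftPencil R m (m + 1))) using 1
  ext i j <;> simp only [recenter, relabel, shiftPencil, submatrix_apply, of_apply,
    Fin.revPerm_apply, Fin.val_rev] <;> congr 1 <;> simp only [eq_iff_iff] <;> omega

theorem strictEquiv_recenter_some_shiftPencil (μ : R) (m : ℕ) :
    StrictEquiv (recenter (some μ) (shiftPencil R m (m + 1))) (shiftPencil R m (m + 1)) := by
  have inverses (n : ℕ) : binomialMatrix μ n * (binomialMatrix μ n)⁻¹ = 1 ∧
      (binomialMatrix μ n)⁻¹ * binomialMatrix μ n = 1 := by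
    have hdet : IsUnit (binomialMatrix μ n).det := by simp [det_binomialMatrix]
    exact ⟨Matrix.mul_nonsing_inv _ hdet, Matrix.nonsing_inv_mul _ hdet⟩
  refine ⟨_, _, _, _, inverses m, (inverses (m + 1)).symm, Prod.ext ?_ ?_⟩
  · simp only [sandwich, recenter]
    rw [binomialMatrix_mul_shiftPencil_fst, Matrix.mul_assoc, (inverses _).1, Matrix.mul_one]
  · simp only [sandwich, recenter]
    rw [binomialMatrix_mul_shiftPencil_snd, Matrix.mul_assoc, (inverses _).1, Matrix.mul_one]

theorem strictEquiv_recenter_shiftPencil (o : Option R) (m : ℕ) :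
    StrictEquiv (recenter o (shiftPencil R m (m + 1))) (shiftPencil R m (m + 1)) := by
  cases o with
  | none => exact strictEquiv_recenter_none_shiftPencil m
  | some μ => exact strictEquiv_recenter_some_shiftPencil μ m

end Recentered

section Blocks

theorem Jmat_eq_add_smul_one (h : ℕ) (μ : ℂ) : Jmat h μ = (shiftPencil ℂ h h).1 + μ • 1 := by
  ext i j
  simp only [Jmat, shiftPencil, of_apply, Matrix.add_apply, Matrix.smul_apply, Matrix.one_apply,
    Fin.ext_iff, smul_eq_mul]
  split_ifs <;> first | omega | simp

theorem congruent_Hb (o : Option ℂ) (h : ℕ) :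
    Congruent (recenter o (skewDouble (shiftPencil ℂ h h))) (Hb o h).toPencil := by
  rw [recenter_skewDouble]
  cases o with
  | none =>
    have hX : recenter none (shiftPencil ℂ h h) = EInfblk h := by
      simp [recenter, shiftPencil_self_snd, EInfblk, Jmat_eq_add_smul_one]
    rw [hX]
    exact congruent_skewPair _
  | some μ =>
    have hX : recenter (some μ) (shiftPencil ℂ h h) = Eblk h μ := by
      simp [recenter, shiftPencil_self_snd, Eblk, Jmat_eq_add_smul_one]
    rw [hX]
    exact congruent_skewPair _

theorem congruent_M (m : ℕ) :
    Congruent (skewDouble (shiftPencil ℂ m (m + 1))) (SBlock.M m).toPencil :=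
  congruent_skewPair _

theorem congruent_recenter_M (o : Option ℂ) (m : ℕ) :
    Congruent (recenter o (skewDouble (shiftPencil ℂ m (m + 1)))) (SBlock.M m).toPencil := by
  rw [recenter_skewDouble]
  exact (strictEquiv_recenter_shiftPencil o m).congruent_skewDouble.trans (congruent_M m)

theorem degeneratesTo_M_M (j k : ℕ) (hjk : j + 1 ≤ k) :
    DegeneratesTo (blockSum {SBlock.M (j + 1), SBlock.M k})
      (blockSum {SBlock.M j, SBlock.M (k + 1)}) :=
  (degeneratesTo_grow j k (k + 1) (by omega)).congr
    (congruent_blockSum_pair (congruent_M _) (congruent_M _))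
    (congruent_blockSum_pair (congruent_M _) (congruent_M _))

theorem degeneratesTo_Hb_Hb (o : Option ℂ) (j k : ℕ) (hjk : j + 1 ≤ k) :
    DegeneratesTo (blockSum {Hb o j, Hb o (k + 1)}) (blockSum {Hb o (j + 1), Hb o k}) := by
  have h := (degeneratesTo_balance (𝕜 := ℂ) j k hjk).recenter o
  rw [recenter_directSum, recenter_directSum] at h
  exact h.congr (congruent_blockSum_pair (congruent_Hb _ _) (congruent_Hb _ _))
    (congruent_blockSum_pair (congruent_Hb _ _) (congruent_Hb _ _))

theorem degeneratesTo_M_Hb (o : Option ℂ) (j k : ℕ) :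
    DegeneratesTo (blockSum {SBlock.M (j + 1), Hb o k}) (blockSum {SBlock.M j, Hb o (k + 1)}) := by
  have h := (degeneratesTo_grow (𝕜 := ℂ) j k k (.inl rfl)).recenter o
  rw [recenter_directSum, recenter_directSum] at h
  exact h.congr (congruent_blockSum_pair (congruent_recenter_M _ _) (congruent_Hb _ _))
    (congruent_blockSum_pair (congruent_recenter_M _ _) (congruent_Hb _ _))

end Blocks

/-! ### Chains of a pencil -/

section Pad

variable {M M' : Type*} {k : ℕ}

/-- The finite sequence `x` preceded by a zero and extended by zeros, so that its entries have the
indices `1, …, k`. -/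
def pad [Zero M] (x : Fin k → M) : ℕ → M
  | 0 => 0
  | i + 1 => if h : i < k then x ⟨i, h⟩ else 0

@[simp] theorem pad_zero [Zero M] (x : Fin k → M) : pad x 0 = 0 := rfl

theorem pad_succ [Zero M] (x : Fin k → M) (i : ℕ) :
    pad x (i + 1) = if h : i < k then x ⟨i, h⟩ else 0 := rfl

@[simp] theorem pad_succ_val [Zero M] (x : Fin k → M) (i : Fin k) : pad x (i + 1) = x i :=
  dif_pos i.2

theorem pad_eq_zero [Zero M] {x : Fin k → M} {j : ℕ} (h : ∀ i : Fin k, (i : ℕ) + 1 = j → x i = 0) :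
    pad x j = 0 := by
  cases j with
  | zero => rfl
  | succ j =>
    rw [pad_succ]
    split_ifs with hj
    · exact h ⟨j, hj⟩ rfl
    · rfl

theorem pad_of_lt [Zero M] (x : Fin k → M) {i : ℕ} (hi : k < i) : pad x i = 0 :=
  pad_eq_zero fun j hj => by omega

theorem eq_zero_of_pad_eq_zero [Zero M] {x : Fin k → M} (h : ∀ i ≤ k, pad x i = 0) : x = 0 := by
  ext i
  rw [← pad_succ_val x i, h _ i.2, Pi.zero_apply]

theorem pad_add [AddMonoid M] (x y : Fin k → M) (i : ℕ) : pad (x + y) i = pad x i + pad y i := by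
  cases i with
  | zero => simp
  | succ i => simp only [pad_succ]; split_ifs <;> simp

theorem pad_smul {R : Type*} [Semiring R] [AddCommMonoid M] [Module R M] (c : R) (x : Fin k → M)
    (i : ℕ) : pad (c • x) i = c • pad x i := by
  cases i with
  | zero => simp
  | succ i => simp only [pad_succ]; split_ifs <;> simp

theorem pad_map [Zero M] [Zero M'] {T : M → M'} (hT : T 0 = 0) (x : Fin k → M) (i : ℕ) :
    pad (fun j => T (x j)) i = T (pad x i) := by
  cases i with
  | zero => simp [hT]
  | succ i => simp only [pad_succ]; split_ifs <;> simp [hT]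

end Pad

section Chains

variable {𝕜 : Type*} [Field 𝕜] {ρ κ ρ' κ' ρ'' : Type*} [Fintype κ] [Fintype κ']

/-- The defect of a finite sequence `x` of vectors from being a chain of the pencil `X`, that is,
from satisfying the first `r` of the conditions `X.1 xᵢ₊₁ = X.2 xᵢ`, where `x` is padded with
zeros. -/
def chainMap (r k : ℕ) (X : MatrixPencil 𝕜 ρ κ) : (Fin k → κ → 𝕜) →ₗ[𝕜] (Fin r → ρ → 𝕜) where
  toFun x i := X.1 *ᵥ pad x (i + 1) - X.2 *ᵥ pad x i
  map_add' x y := by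
    ext i : 1
    simp only [pad_add, mulVec_add, Pi.add_apply]
    abel
  map_smul' c x := by
    ext i : 1
    simp only [pad_smul, mulVec_smul, Pi.smul_apply, RingHom.id_apply, smul_sub]

/-- The dimension of the space of chains of length `k` of the pencil `X` that satisfy the first `r`
chain conditions. -/
def chainNullity (r k : ℕ) (X : MatrixPencil 𝕜 ρ κ) : ℕ :=
  Module.finrank 𝕜 (LinearMap.ker (chainMap r k X))

theorem mem_ker_chainMap {r k : ℕ} {X : MatrixPencil 𝕜 ρ κ} {x : Fin k → κ → 𝕜} :
    x ∈ LinearMap.ker (chainMap r k X) ↔ ∀ i < r, X.1 *ᵥ pad x (i + 1) = X.2 *ᵥ pad x i := by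
  refine ⟨fun h i hi => sub_eq_zero.1 (congrFun h ⟨i, hi⟩), fun h => ?_⟩
  ext i : 1
  exact sub_eq_zero.2 (h i i.2)

theorem chainNullity_eq_zero_iff {r k : ℕ} {X : MatrixPencil 𝕜 ρ κ} :
    chainNullity r k X = 0 ↔ ∀ x ∈ LinearMap.ker (chainMap r k X), x = 0 := by
  rw [chainNullity, Submodule.finrank_eq_zero, Submodule.eq_bot_iff]

theorem chainNullity_le_of_injective (r k : ℕ) {X : MatrixPencil 𝕜 ρ κ} {X' : MatrixPencil 𝕜 ρ' κ'}
    (T : (κ → 𝕜) →ₗ[𝕜] (κ' → 𝕜)) (hT : Function.Injective T)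
    (h : ∀ v w, X.1 *ᵥ v = X.2 *ᵥ w → X'.1 *ᵥ T v = X'.2 *ᵥ T w) :
    chainNullity r k X ≤ chainNullity r k X' := by
  refine LinearMap.finrank_le_finrank_of_injective
    (f := (T.compLeft (Fin k)).restrict fun x hx => ?_) ?_
  · rw [mem_ker_chainMap] at hx ⊢
    intro i hi
    have hpad := pad_map (map_zero T) x
    change X'.1 *ᵥ pad (fun j => T (x j)) (i + 1) = X'.2 *ᵥ pad (fun j => T (x j)) i
    rw [hpad, hpad]
    exact h _ _ (hx i hi)
  · intro x y hxy
    exact Subtype.ext (hT.comp_left (congrArg Subtype.val hxy))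

theorem chainNullity_eq_add (r k : ℕ) {X : MatrixPencil 𝕜 ρ κ} {Y : MatrixPencil 𝕜 ρ' κ'}
    {Z : MatrixPencil 𝕜 ρ'' (κ ⊕ κ')}
    (h : ∀ v w : κ ⊕ κ' → 𝕜, Z.1 *ᵥ v = Z.2 *ᵥ w ↔
      X.1 *ᵥ (v ∘ Sum.inl) = X.2 *ᵥ (w ∘ Sum.inl) ∧
      Y.1 *ᵥ (v ∘ Sum.inr) = Y.2 *ᵥ (w ∘ Sum.inr)) :
    chainNullity r k Z = chainNullity r k X + chainNullity r k Y := by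
  have hl : ∀ (x : Fin k → κ ⊕ κ' → 𝕜) i, pad (fun j => x j ∘ Sum.inl) i = pad x i ∘ Sum.inl :=
    pad_map (T := fun v : κ ⊕ κ' → 𝕜 => v ∘ Sum.inl) rfl
  have hr : ∀ (x : Fin k → κ ⊕ κ' → 𝕜) i, pad (fun j => x j ∘ Sum.inr) i = pad x i ∘ Sum.inr :=
    pad_map (T := fun v : κ ⊕ κ' → 𝕜 => v ∘ Sum.inr) rfl
  have key : ∀ x : Fin k → κ ⊕ κ' → 𝕜, x ∈ LinearMap.ker (chainMap r k Z) ↔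
      (fun j => x j ∘ Sum.inl) ∈ LinearMap.ker (chainMap r k X) ∧
      (fun j => x j ∘ Sum.inr) ∈ LinearMap.ker (chainMap r k Y) := fun x => by
    simp only [mem_ker_chainMap, hl, hr, h, forall_and]
  let e : LinearMap.ker (chainMap r k Z) ≃ₗ[𝕜]
      LinearMap.ker (chainMap r k X) × LinearMap.ker (chainMap r k Y) :=
    { toFun := fun x => (⟨fun j => x.1 j ∘ Sum.inl, ((key x.1).1 x.2).1⟩,
        ⟨fun j => x.1 j ∘ Sum.inr, ((key x.1).1 x.2).2⟩)
      invFun := fun p => ⟨fun j => Sum.elim (p.1.1 j) (p.2.1 j), (key _).2 ⟨p.1.2, p.2.2⟩⟩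
      map_add' := fun x y => rfl
      map_smul' := fun c x => rfl
      left_inv := fun x => by ext j (i | i) <;> rfl
      right_inv := fun p => rfl }
  rw [chainNullity, e.finrank_eq, Module.finrank_prod]
  rfl

theorem chainNullity_directSum (r k : ℕ) (X : MatrixPencil 𝕜 ρ κ) (Y : MatrixPencil 𝕜 ρ' κ') :
    chainNullity r k (directSum X Y) = chainNullity r k X + chainNullity r k Y :=
  chainNullity_eq_add r k fun v w => by
    simp only [directSum, fromBlocks_mulVec, zero_mulVec, add_zero, zero_add, Sum.elim_eq_iff]

theorem chainNullity_skewDouble [Fintype ρ] (r k : ℕ) (X : MatrixPencil 𝕜 ρ κ) :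
    chainNullity r k (skewDouble X) = chainNullity r k (transpose X) + chainNullity r k X :=
  chainNullity_eq_add r k fun v w => by
    simp only [skewDouble, transpose, fromBlocks_mulVec, zero_mulVec, add_zero, zero_add,
      neg_mulVec, Sum.elim_eq_iff, neg_inj, and_comm]

theorem chainNullity_eq_zero_of_fst {r k : ℕ} (hkr : k ≤ r) {X : MatrixPencil 𝕜 ρ κ}
    (h : ∀ v, X.1 *ᵥ v = 0 → v = 0) : chainNullity r k X = 0 := by
  refine chainNullity_eq_zero_iff.2 fun x hx => eq_zero_of_pad_eq_zero fun i => ?_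
  rw [mem_ker_chainMap] at hx
  induction i with
  | zero => exact fun _ => rfl
  | succ i ih => exact fun hi => h _ (by rw [hx i (by omega), ih (by omega), mulVec_zero])

theorem chainNullity_eq_zero_of_snd (k : ℕ) {X : MatrixPencil 𝕜 ρ κ}
    (h : ∀ v, X.2 *ᵥ v = 0 → v = 0) : chainNullity (k + 1) k X = 0 := by
  refine chainNullity_eq_zero_iff.2 fun x hx => eq_zero_of_pad_eq_zero fun i hi => ?_
  rw [mem_ker_chainMap] at hx
  induction hi using Nat.decreasingInduction with
  | self => exact h _ (by rw [← hx k (by omega), pad_of_lt x (by omega), mulVec_zero])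
  | of_succ i hi ih => exact h _ (by rw [← hx i (by omega), ih, mulVec_zero])

theorem chainNullity_lt_of_chain {k : ℕ} {X : MatrixPencil 𝕜 ρ κ} (x : ℕ → κ → 𝕜)
    (h0 : X.1 *ᵥ x 0 = 0) (hs : ∀ i < k, X.1 *ᵥ x (i + 1) = X.2 *ᵥ x i) (hx : x 0 ≠ 0) :
    chainNullity k k X < chainNullity (k + 1) (k + 1) X := by
  let delay : (Fin k → κ → 𝕜) →ₗ[𝕜] (Fin (k + 1) → κ → 𝕜) :=
    { toFun := fun y i => pad y i
      map_add' := fun y z => by ext i : 1; exact pad_add y z i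
      map_smul' := fun c y => by ext i : 1; exact pad_smul c y i }
  have hpad : ∀ y i, pad (delay y) (i + 1) = pad y i := fun y i => by
    rw [pad_succ]
    split_ifs with hi
    · rfl
    · exact (pad_of_lt y (by omega)).symm
  have hinj : Function.Injective delay := fun y z hyz => by
    ext i : 1
    simpa [delay] using congrFun hyz i.succ
  have hle : (LinearMap.ker (chainMap k k X)).map delay ≤
      LinearMap.ker (chainMap (k + 1) (k + 1) X) := by
    rintro _ ⟨y, hy, rfl⟩
    refine mem_ker_chainMap.2 fun i hi => ?_
    cases i with
    | zero => simp [hpad]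
    | succ i => simpa only [hpad] using mem_ker_chainMap.1 hy i (by omega)
  have hmem : (fun i : Fin (k + 1) => x i) ∈ LinearMap.ker (chainMap (k + 1) (k + 1) X) := by
    refine mem_ker_chainMap.2 fun i hi => ?_
    cases i with
    | zero => simpa [pad_succ] using h0
    | succ i =>
      rw [pad_succ, pad_succ, dif_pos hi, dif_pos (by omega)]
      exact hs i (by omega)
  rw [chainNullity, (Submodule.equivMapOfInjective delay hinj _).finrank_eq]
  refine Submodule.finrank_lt_finrank_of_lt (lt_of_le_of_ne hle fun heq => ?_)
  obtain ⟨y, -, hy⟩ := heq ▸ hmem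
  exact hx (congrFun hy 0).symm

end Chains

section Invariance

variable {𝕜 : Type*} {ρ κ ρ' κ' ι ι' : Type*} [Fintype ρ] [DecidableEq ρ] [Fintype κ]
  [DecidableEq κ] [Fintype ρ'] [DecidableEq ρ'] [Fintype κ'] [DecidableEq κ'] [Fintype ι]
  [DecidableEq ι] [Fintype ι'] [DecidableEq ι']

theorem StrictEquiv.chainNullity_le [Field 𝕜] {X : MatrixPencil 𝕜 ρ κ} {Y : MatrixPencil 𝕜 ρ' κ'}
    (h : StrictEquiv X Y) (r k : ℕ) : chainNullity r k Y ≤ chainNullity r k X := by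
  obtain ⟨S, S', T, T', ⟨-, hS⟩, ⟨-, hT⟩, rfl⟩ := h
  refine chainNullity_le_of_injective r k T.mulVecLin ?_ fun v w hvw => ?_
  · intro v w hvw
    simpa [mulVec_mulVec, hT] using congrArg (T' *ᵥ ·) hvw
  · simpa [sandwich, mulVec_mulVec, ← Matrix.mul_assoc, hS] using congrArg (S' *ᵥ ·) hvw

theorem StrictEquiv.chainNullity_eq [Field 𝕜] {X : MatrixPencil 𝕜 ρ κ} {Y : MatrixPencil 𝕜 ρ' κ'}
    (h : StrictEquiv X Y) (r k : ℕ) : chainNullity r k X = chainNullity r k Y :=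
  le_antisymm (h.symm.chainNullity_le r k) (h.chainNullity_le r k)

theorem Congruent.strictEquiv [CommRing 𝕜] {P : SquarePencil 𝕜 ι} {Q : SquarePencil 𝕜 ι'}
    (h : Congruent P Q) : StrictEquiv P Q := by
  obtain ⟨S, T, hST, hTS, hQ⟩ := h
  exact ⟨Sᵀ, Tᵀ, S, T, ⟨by rw [← transpose_mul, hTS, transpose_one],
    by rw [← transpose_mul, hST, transpose_one]⟩, ⟨hST, hTS⟩, hQ⟩

theorem Congruent.chainNullity_eq [Field 𝕜] {P : SquarePencil 𝕜 ι} {Q : SquarePencil 𝕜 ι'}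
    (h : Congruent P Q) (r k : ℕ) : chainNullity r k P = chainNullity r k Q :=
  h.strictEquiv.chainNullity_eq r k

theorem le_finrank_ker_of_mem_closure {Y : Type*} [TopologicalSpace Y]
    [NontriviallyNormedField 𝕜] [CompleteSpace 𝕜] {E F : Type*} [NormedAddCommGroup F]
    [NormedSpace 𝕜 F] [AddCommGroup E] [Module 𝕜 E] [FiniteDimensional 𝕜 E]
    {f : Y → E →ₗ[𝕜] F} (hf : ∀ v, Continuous fun y => f y v) {s : Set Y} {d : ℕ}
    (hs : ∀ y ∈ s, d ≤ Module.finrank 𝕜 (LinearMap.ker (f y))) {y : Y} (hy : y ∈ closure s) :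
    d ≤ Module.finrank 𝕜 (LinearMap.ker (f y)) := by
  let B := Module.finBasis 𝕜 (LinearMap.range (f y))
  choose b hb using fun a => (B a).2
  have hli : LinearIndependent 𝕜 fun a => f y (b a) := by
    have := B.linearIndependent.map' (Submodule.subtype _) (Submodule.ker_subtype _)
    rwa [show (Submodule.subtype _ ∘ B) = fun a => f y (b a) from funext fun a => (hb a).symm]
      at this
  have hopen : IsOpen {z : Y | LinearIndependent 𝕜 fun a => f z (b a)} :=
    isOpen_setOfPred_linearIndependent.preimage (continuous_pi fun a => hf (b a))
  obtain ⟨z, hz, hzs⟩ := mem_closure_iff.1 hy _ hopen hli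
  have hrank : Module.finrank 𝕜 (LinearMap.range (f y)) ≤
      Module.finrank 𝕜 (LinearMap.range (f z)) := by
    have : LinearIndependent 𝕜 fun a => (f z).rangeRestrict (b a) :=
      LinearIndependent.of_comp (Submodule.subtype _) hz
    simpa using this.fintype_card_le_finrank
  have hz' := LinearMap.finrank_range_add_finrank_ker (f z)
  have hy' := LinearMap.finrank_range_add_finrank_ker (f y)
  have := hs z hzs
  omega

theorem DegeneratesTo.chainNullity_le [NontriviallyNormedField 𝕜] [CompleteSpace 𝕜]
    {P : SquarePencil 𝕜 ι} {Q : SquarePencil 𝕜 ι'} (h : DegeneratesTo P Q) (r k : ℕ) :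
    chainNullity r k P ≤ chainNullity r k Q := by
  refine le_finrank_ker_of_mem_closure (f := fun R : SquarePencil 𝕜 ι' => chainMap r k R)
    (fun x => continuous_pi fun i => ?_) (fun R hR => (hR.chainNullity_eq r k).le) h
  exact (continuous_fst.matrix_mulVec continuous_const).sub
    (continuous_snd.matrix_mulVec continuous_const)

end Invariance

section ShiftChains

variable {𝕜 : Type*} [Field 𝕜] {r k m n : ℕ}

theorem finrank_of_mem_iff_forall_eq_zero {ι : Type*} [Fintype ι] (p : ι → Prop) [DecidablePred p]
    {W : Submodule 𝕜 (ι → 𝕜)} (hW : ∀ y, y ∈ W ↔ ∀ i, ¬p i → y i = 0) :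
    Module.finrank 𝕜 W = Finset.card {i | p i} := by
  have e := LinearMap.iInfKerProjEquiv 𝕜 (fun _ : ι => 𝕜) (I := {i | p i}) (J := {i | ¬p i})
    (Set.disjoint_left.2 fun i hi hi' => hi' hi) fun i _ => em (p i)
  have hW' : W = ⨅ i ∈ {i | ¬p i}, LinearMap.ker (LinearMap.proj (R := 𝕜) i) := by
    ext y
    simp [hW]
  rw [hW', e.finrank_eq, Module.finrank_fintype_fun_eq_card,
    ← Fintype.card_subtype]
  rfl

/-- The sequence of vectors with constant diagonals whose first coordinates are given by `y`. -/
def diagonalSeq (n : ℕ) : (Fin k → 𝕜) →ₗ[𝕜] (Fin k → Fin n → 𝕜) where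
  toFun y i t := pad y (i + 1 - t)
  map_add' y z := by ext i t; exact pad_add y z _
  map_smul' c y := by ext i t; exact pad_smul c y _

theorem pad_diagonalSeq (y : Fin k → 𝕜) {i t : ℕ} (hi : i ≤ k) (ht : t < n) :
    pad (diagonalSeq n y) i ⟨t, ht⟩ = pad y (i - t) := by
  cases i with
  | zero => simp
  | succ i => rw [pad_succ, dif_pos (by omega)]; rfl

theorem diagonalSeq_injective : Function.Injective (diagonalSeq (𝕜 := 𝕜) (k := k) (n + 1)) :=
  fun y z hyz => by
    ext i
    simpa [diagonalSeq] using congrFun (congrFun hyz i) 0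

theorem mem_ker_chainMap_shiftPencil (hmn : m ≤ n) {x : Fin k → Fin n → 𝕜} :
    x ∈ LinearMap.ker (chainMap r k (shiftPencil 𝕜 m n)) ↔ ∀ i < r, ∀ t (ht : t < m),
      (if h : t + 1 < n then pad x (i + 1) ⟨t + 1, h⟩ else 0) = pad x i ⟨t, ht.trans_le hmn⟩ := by
  simp only [mem_ker_chainMap, funext_iff, Fin.forall_iff, shiftPencil_fst_mulVec,
    shiftPencil_snd_mulVec]
  refine forall₄_congr fun i _ t ht => ?_
  rw [dif_pos (ht.trans_le hmn)]

theorem pad_eq_pad_sub_of_mem_ker (hmn : m ≤ n + 1) (hnm : n ≤ m) (hk : k ≤ r)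
    {x : Fin k → Fin (n + 1) → 𝕜} (hx : x ∈ LinearMap.ker (chainMap r k (shiftPencil 𝕜 m (n + 1))))
    {i t : ℕ} (hi : i ≤ k) (ht : t < n + 1) : pad x i ⟨t, ht⟩ = pad x (i - t) 0 := by
  induction t generalizing i with
  | zero => rfl
  | succ t ih =>
    cases i with
    | zero => simp
    | succ i =>
      have h := (mem_ker_chainMap_shiftPencil hmn).1 hx i (by omega) t (by omega)
      rw [dif_pos ht] at h
      rw [h, ih (by omega), Nat.add_sub_add_right]

theorem chainNullity_shiftPencil (hmn : m ≤ n + 1) (hnm : n ≤ m) (hk : k ≤ r) (p : Fin k → Prop)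
    [DecidablePred p]
    (hp : ∀ y : Fin k → 𝕜, diagonalSeq (n + 1) y ∈
      LinearMap.ker (chainMap r k (shiftPencil 𝕜 m (n + 1))) ↔ ∀ i, ¬p i → y i = 0) :
    chainNullity r k (shiftPencil 𝕜 m (n + 1)) = Finset.card {i | p i} := by
  have hle : LinearMap.ker (chainMap r k (shiftPencil 𝕜 m (n + 1))) ≤
      LinearMap.range (diagonalSeq (n + 1)) := fun x hx => by
    refine ⟨fun i => x i 0, ?_⟩
    ext i t
    have h := pad_eq_pad_sub_of_mem_ker hmn hnm hk hx i.2 t.2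
    rw [Fin.eta, pad_succ_val] at h
    rw [h]
    exact pad_map (T := fun v : Fin (n + 1) → 𝕜 => v 0) rfl x _
  rw [chainNullity, ← Submodule.map_comap_eq_of_le hle,
    ← (Submodule.equivMapOfInjective _ diagonalSeq_injective _).finrank_eq]
  exact finrank_of_mem_iff_forall_eq_zero p hp

theorem chainNullity_shiftPencil_succ_global (m k : ℕ) :
    chainNullity (k + 1) k (shiftPencil 𝕜 m (m + 1)) = k - m := by
  rw [chainNullity_shiftPencil m.le_succ le_rfl k.le_succ (fun i => (i : ℕ) < k - m)]
  · rw [Fin.card_filter_val_lt, min_eq_right (k.sub_le m)]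
  intro y
  rw [mem_ker_chainMap_shiftPencil m.le_succ]
  refine ⟨fun h i hi => ?_, fun h i hi t ht => ?_⟩
  · have := h k k.lt_succ_self (k - (i + 1)) (by omega)
    rw [dif_pos (by omega), pad_of_lt _ k.lt_succ_self, pad_diagonalSeq _ le_rfl,
      Nat.sub_sub_self i.2, pad_succ_val] at this
    exact this.symm
  · rw [dif_pos (by omega), pad_diagonalSeq _ (Nat.lt_succ_iff.1 hi)]
    obtain hi | rfl := Nat.lt_succ_iff_lt_or_eq.1 hi
    · rw [pad_diagonalSeq (i := i + 1) _ hi, Nat.add_sub_add_right]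
    · rw [pad_of_lt _ i.lt_succ_self]
      exact (pad_eq_zero fun j (hj : _ = i - t) => h j (by omega)).symm

theorem chainNullity_shiftPencil_succ_local (m k : ℕ) :
    chainNullity k k (shiftPencil 𝕜 m (m + 1)) = k := by
  rw [chainNullity_shiftPencil m.le_succ le_rfl le_rfl (fun _ => True)]
  · simp
  refine fun y => ⟨fun _ _ h => absurd trivial h, fun _ => ?_⟩
  refine (mem_ker_chainMap_shiftPencil m.le_succ).2 fun i hi t ht => ?_
  rw [dif_pos (by omega), pad_diagonalSeq (i := i + 1) _ hi, pad_diagonalSeq _ hi.le,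
    Nat.add_sub_add_right]

theorem chainNullity_shiftPencil_self (h k : ℕ) :
    chainNullity k k (shiftPencil 𝕜 h h) = min h k := by
  cases h with
  | zero =>
    rw [Nat.zero_min]
    exact Module.finrank_zero_of_subsingleton
  | succ h =>
    rw [chainNullity_shiftPencil le_rfl h.le_succ le_rfl (fun i => ¬(i : ℕ) < k - (h + 1))]
    · have := Finset.card_filter_add_card_filter_not (s := Finset.univ (α := Fin k))
        fun i => (i : ℕ) < k - (h + 1)
      rw [Fin.card_filter_val_lt, Finset.card_univ, Fintype.card_fin] at this
      omega
    intro y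
    rw [mem_ker_chainMap_shiftPencil le_rfl]
    refine ⟨fun H i hi => ?_, fun H i hi t ht => ?_⟩
    · have hi : (i : ℕ) + (h + 1) < k := by omega
      have := H (i + (h + 1)) hi h h.lt_succ_self
      rw [dif_neg (lt_irrefl _), pad_diagonalSeq _ hi.le] at this
      rw [← pad_succ_val y i, this]
      congr 1
      omega
    · rw [pad_diagonalSeq _ hi.le]
      split_ifs with htn
      · rw [pad_diagonalSeq (i := i + 1) _ hi, Nat.add_sub_add_right]
      · exact (pad_eq_zero fun j (hj : _ = i - t) => H j (by omega)).symm

end ShiftChains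

section Values

variable {𝕜 : Type*} [Field 𝕜] {ι ι' : Type*} [Fintype ι] [Fintype ι']

/-- The number of parameters of chains of length `k` at the eigenvalue `o`. -/
def localNullity (o : Option 𝕜) (k : ℕ) (P : SquarePencil 𝕜 ι) : ℕ :=
  chainNullity k k (recenter (o.map Neg.neg) P)

/-- The number of parameters of chains of length `k` that satisfy one more chain condition and
hence come from a polynomial null vector. -/
def globalNullity (k : ℕ) (P : SquarePencil 𝕜 ι) : ℕ := chainNullity (k + 1) k P

theorem localNullity_directSum (o : Option 𝕜) (k : ℕ) (P : SquarePencil 𝕜 ι)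
    (Q : SquarePencil 𝕜 ι') :
    localNullity o k (directSum P Q) = localNullity o k P + localNullity o k Q := by
  rw [localNullity, recenter_directSum, chainNullity_directSum]
  rfl

theorem transpose_shiftPencil_fst_injective (m : ℕ) (v : Fin m → 𝕜)
    (hv : (transpose (shiftPencil 𝕜 m (m + 1))).1 *ᵥ v = 0) : v = 0 := by
  ext i
  have h := congrFun hv i.succ
  rw [mulVec, dotProduct, Finset.sum_eq_single i] at h
  · simpa [transpose, shiftPencil] using h
  · intro j _ hj
    simp [transpose, shiftPencil, Fin.val_inj, hj.symm]
  · simp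

theorem globalNullity_skewDouble_shiftPencil_succ (m k : ℕ) :
    globalNullity k (skewDouble (shiftPencil 𝕜 m (m + 1))) = k - m := by
  rw [globalNullity, chainNullity_skewDouble, chainNullity_shiftPencil_succ_global,
    chainNullity_eq_zero_of_fst k.le_succ (transpose_shiftPencil_fst_injective m), zero_add]

theorem localNullity_skewDouble_shiftPencil_succ (o : Option 𝕜) (m k : ℕ) :
    localNullity o k (skewDouble (shiftPencil 𝕜 m (m + 1))) = k := by
  rw [localNullity, recenter_skewDouble,
    (strictEquiv_recenter_shiftPencil _ m).congruent_skewDouble.chainNullity_eq,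
    chainNullity_skewDouble, chainNullity_shiftPencil_succ_local,
    chainNullity_eq_zero_of_fst le_rfl (transpose_shiftPencil_fst_injective m), zero_add]

theorem transpose_shiftPencil_self (h : ℕ) :
    transpose (shiftPencil 𝕜 h h) = relabel (shiftPencil 𝕜 h h) Fin.revPerm Fin.revPerm := by
  refine Prod.ext ?_ ?_ <;> ext i j <;> simp only [transpose, relabel, shiftPencil,
    transpose_apply, of_apply, submatrix_apply, Fin.revPerm_apply, Fin.val_rev] <;> congr 1 <;>
    apply propext <;> omega

theorem recenter_map_neg_recenter {ρ κ : Type*} (o : Option 𝕜) (X : MatrixPencil 𝕜 ρ κ) :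
    recenter (o.map Neg.neg) (recenter o X) = X := by
  cases o <;> simp [recenter]

theorem localNullity_recenter_self (o : Option 𝕜) (h k : ℕ) :
    localNullity o k (recenter o (skewDouble (shiftPencil 𝕜 h h))) = 2 * min h k := by
  rw [localNullity, recenter_map_neg_recenter, chainNullity_skewDouble, transpose_shiftPencil_self,
    ← (StrictEquiv.relabel Fin.revPerm Fin.revPerm _).chainNullity_eq,
    chainNullity_shiftPencil_self, two_mul]

theorem det_smul_shiftPencil_add (h : ℕ) (a b : 𝕜) :
    (a • (shiftPencil 𝕜 h h).1 + b • 1).det = b ^ h := by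
  rw [det_of_isUpperTriangular]
  · simp [shiftPencil]
  · intro i j (hij : (j : ℕ) < i)
    have h1 : (j : ℕ) ≠ i + 1 := by omega
    have h2 : i ≠ j := by omega
    simp [shiftPencil, h1, h2]

theorem det_recenter_neg_recenter_ne_zero {o o' : Option 𝕜} (ho : o ≠ o') (h : ℕ) :
    (recenter (o.map Neg.neg) (recenter o' (shiftPencil 𝕜 h h))).1.det ≠ 0 := by
  obtain ⟨a, b, hb, hab⟩ : ∃ a b : 𝕜, b ≠ 0 ∧
      (recenter (o.map Neg.neg) (recenter o' (shiftPencil 𝕜 h h))).1 =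
        a • (shiftPencil 𝕜 h h).1 + b • 1 := by
    cases o with
    | none =>
      cases o' with
      | none => exact absurd rfl ho
      | some μ' => exact ⟨0, 1, one_ne_zero, by simp [recenter, shiftPencil_self_snd]⟩
    | some μ =>
      cases o' with
      | none =>
        exact ⟨-μ, 1, one_ne_zero, by simp [recenter, shiftPencil_self_snd, add_comm]⟩
      | some μ' =>
        refine ⟨1, μ' - μ, fun h0 => ho (by rw [sub_eq_zero.1 h0]), ?_⟩
        simp only [recenter, shiftPencil_self_snd, Option.map_some]
        module
  rw [hab, det_smul_shiftPencil_add]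
  exact pow_ne_zero _ hb

theorem localNullity_recenter_of_ne {o o' : Option 𝕜} (ho : o ≠ o') (h k : ℕ) :
    localNullity o k (recenter o' (skewDouble (shiftPencil 𝕜 h h))) = 0 := by
  have hdet := det_recenter_neg_recenter_ne_zero ho h
  rw [localNullity, recenter_skewDouble, recenter_skewDouble, chainNullity_skewDouble,
    chainNullity_eq_zero_of_fst le_rfl fun v hv => eq_zero_of_mulVec_eq_zero hdet hv,
    chainNullity_eq_zero_of_fst le_rfl fun v hv =>
      eq_zero_of_mulVec_eq_zero ((det_transpose _).trans_ne hdet) hv]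

theorem globalNullity_recenter (o : Option 𝕜) (h k : ℕ) :
    globalNullity k (recenter o (skewDouble (shiftPencil 𝕜 h h))) = 0 := by
  rw [globalNullity, recenter_skewDouble, chainNullity_skewDouble]
  cases o with
  | none =>
    rw [chainNullity_eq_zero_of_fst k.le_succ, chainNullity_eq_zero_of_fst k.le_succ] <;>
      simp [recenter, transpose, shiftPencil_self_snd]
  | some μ =>
    rw [chainNullity_eq_zero_of_snd, chainNullity_eq_zero_of_snd] <;>
      simp [recenter, transpose, shiftPencil_self_snd]

theorem chainNullity_of_isEmpty [IsEmpty ι] (r k : ℕ) (P : SquarePencil 𝕜 ι) :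
    chainNullity r k P = 0 :=
  Module.finrank_zero_of_subsingleton

theorem Congruent.localNullity_eq [DecidableEq ι] [DecidableEq ι'] {P : SquarePencil 𝕜 ι}
    {Q : SquarePencil 𝕜 ι'} (h : Congruent P Q) (o : Option 𝕜) (k : ℕ) :
    localNullity o k P = localNullity o k Q :=
  (h.recenter _).chainNullity_eq k k

theorem DegeneratesTo.localNullity_le {𝕜 : Type*} [NontriviallyNormedField 𝕜] [CompleteSpace 𝕜]
    [DecidableEq ι] [DecidableEq ι'] {P : SquarePencil 𝕜 ι} {Q : SquarePencil 𝕜 ι'}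
    (h : DegeneratesTo P Q) (o : Option 𝕜) (k : ℕ) : localNullity o k P ≤ localNullity o k Q :=
  (h.recenter _).chainNullity_le k k

end Values

section BlockValues

variable {o : Option ℂ} {k : ℕ}

open Classical in
/-- The contribution of a block to `localNullity`. -/
def localContribution (o : Option ℂ) (k : ℕ) : SBlock → ℕ
  | .H h μ => if o = some μ then 2 * min h k else 0
  | .K h => if o = none then 2 * min h k else 0
  | .M _ => k

open Classical in
theorem localContribution_Hb (o' : Option ℂ) (h : ℕ) :
    localContribution o k (Hb o' h) = if o = o' then 2 * min h k else 0 := by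
  cases o' <;> rfl

/-- The contribution of a block to `globalNullity`. -/
def globalContribution (k : ℕ) : SBlock → ℕ
  | .H _ _ => 0
  | .K _ => 0
  | .M m => k - m

theorem eq_Hb_or_eq_M (b : SBlock) : (∃ o h, b = Hb o h) ∨ ∃ m, b = .M m := by
  rcases b with ⟨h, μ⟩ | h | m
  exacts [.inl ⟨some μ, h, rfl⟩, .inl ⟨none, h, rfl⟩, .inr ⟨m, rfl⟩]

theorem globalNullity_toPencil (k : ℕ) (b : SBlock) :
    globalNullity k b.toPencil = globalContribution k b := by
  obtain ⟨o, h, rfl⟩ | ⟨m, rfl⟩ := eq_Hb_or_eq_M b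
  · rw [globalNullity, ← (congruent_Hb o h).chainNullity_eq, ← globalNullity,
      globalNullity_recenter]
    cases o <;> rfl
  · exact ((congruent_M m).chainNullity_eq _ _).symm.trans
      (globalNullity_skewDouble_shiftPencil_succ m k)

theorem localNullity_toPencil (o : Option ℂ) (k : ℕ) (b : SBlock) :
    localNullity o k b.toPencil = localContribution o k b := by
  obtain ⟨o', h, rfl⟩ | ⟨m, rfl⟩ := eq_Hb_or_eq_M b
  · rw [← (congruent_Hb o' h).localNullity_eq, localContribution_Hb]
    split_ifs with ho
    · rw [ho, localNullity_recenter_self]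
    · exact localNullity_recenter_of_ne ho h k
  · exact ((congruent_M m).localNullity_eq o k).symm.trans
      (localNullity_skewDouble_shiftPencil_succ o m k)

theorem globalNullity_blockSum (k : ℕ) (s : Multiset SBlock) :
    globalNullity k (blockSum s) = (s.map (globalContribution k)).sum := by
  induction s using Multiset.induction with
  | empty =>
    have := isEmpty_fin_sizeSum (s := 0) (by simp)
    exact chainNullity_of_isEmpty _ _ _
  | cons b s ih =>
    rw [Multiset.map_cons, Multiset.sum_cons, ← ih, ← globalNullity_toPencil]
    exact ((congruent_blockSum_cons b s).chainNullity_eq _ _).symm.trans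
      (chainNullity_directSum _ _ _ _)

theorem localNullity_blockSum (o : Option ℂ) (k : ℕ) (s : Multiset SBlock) :
    localNullity o k (blockSum s) = (s.map (localContribution o k)).sum := by
  induction s using Multiset.induction with
  | empty =>
    have := isEmpty_fin_sizeSum (s := 0) (by simp)
    exact chainNullity_of_isEmpty _ _ _
  | cons b s ih =>
    rw [Multiset.map_cons, Multiset.sum_cons, ← ih, ← localNullity_toPencil]
    exact ((congruent_blockSum_cons b s).localNullity_eq o k).symm.trans
      (localNullity_directSum o k _ _)

end BlockValues

/-! ### Truncated sums of multisets -/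

section Majorization

/-- The sum of the truncated differences `k - m` over `m ∈ A`. As a function of `k` it is convex
with slope increments given by the multiplicities of `A`. -/
def defect (A : Multiset ℕ) (k : ℕ) : ℕ := (A.map (k - ·)).sum

/-- The sum of the truncations `min h k` over `h ∈ X`. -/
def truncSum (X : Multiset ℕ) (k : ℕ) : ℕ := (X.map (min · k)).sum

@[simp] theorem defect_cons (m : ℕ) (A : Multiset ℕ) (k : ℕ) :
    defect (m ::ₘ A) k = k - m + defect A k := by simp [defect]

@[simp] theorem truncSum_cons (m : ℕ) (X : Multiset ℕ) (k : ℕ) :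
    truncSum (m ::ₘ X) k = min m k + truncSum X k := by simp [truncSum]

@[simp] theorem truncSum_singleton (m k : ℕ) : truncSum {m} k = min m k := by simp [truncSum]

@[simp] theorem truncSum_add (X Y : Multiset ℕ) (k : ℕ) :
    truncSum (X + Y) k = truncSum X k + truncSum Y k := by simp [truncSum]

theorem truncSum_add_defect (X : Multiset ℕ) (k : ℕ) :
    truncSum X k + defect X k = X.card * k := by
  induction X using Multiset.induction with
  | empty => simp [truncSum, defect]
  | cons m X ih =>
    rw [truncSum_cons, defect_cons, Multiset.card_cons, add_mul, ← ih]
    omega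

theorem card_mul_le_defect_add_sum (A : Multiset ℕ) (k : ℕ) :
    A.card * k ≤ defect A k + A.sum := by
  induction A using Multiset.induction with
  | empty => simp
  | cons m X ih =>
    rw [defect_cons, Multiset.card_cons, add_mul, Multiset.sum_cons]
    omega

theorem defect_add_sum {A : Multiset ℕ} {k : ℕ} (h : ∀ m ∈ A, m ≤ k) :
    defect A k + A.sum = A.card * k := by
  induction A using Multiset.induction with
  | empty => simp [defect]
  | cons m X ih =>
    have hX := ih fun m hm => h m (Multiset.mem_cons_of_mem hm)
    have hm := h m (Multiset.mem_cons_self _ _)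
    rw [defect_cons, Multiset.card_cons, add_mul, Multiset.sum_cons, ← hX]
    omega

theorem defect_add_le (A : Multiset ℕ) (k j : ℕ) :
    defect A (k + j) ≤ defect A k + A.card * j := by
  induction A using Multiset.induction with
  | empty => simp [defect]
  | cons m X ih =>
    rw [defect_cons, defect_cons, Multiset.card_cons, add_mul]
    omega

theorem truncSum_le_sum (X : Multiset ℕ) (k : ℕ) : truncSum X k ≤ X.sum := by
  induction X using Multiset.induction with
  | empty => simp [truncSum]
  | cons m X ih => rw [truncSum_cons, Multiset.sum_cons]; omega

theorem truncSum_eq_sum {X : Multiset ℕ} {k : ℕ} (h : ∀ m ∈ X, m ≤ k) :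
    truncSum X k = X.sum := by
  rw [truncSum, Multiset.map_congr rfl fun m hm => min_eq_left (h m hm), Multiset.map_id']

theorem sum_le_sum_of_truncSum_le {X Y : Multiset ℕ} (h : ∀ k, truncSum X k ≤ truncSum Y k) :
    X.sum ≤ Y.sum :=
  (truncSum_eq_sum fun _ hm => Multiset.le_sum_of_mem hm).symm.trans_le
    ((h X.sum).trans (truncSum_le_sum _ _))

theorem defect_one (A : Multiset ℕ) : defect A 1 = A.count 0 := by
  induction A using Multiset.induction with
  | empty => rfl
  | cons m A ih =>
    rw [defect_cons, Multiset.count_cons, ih]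
    split_ifs <;> omega

theorem defect_add_two_add_defect (A : Multiset ℕ) (k : ℕ) :
    defect A (k + 2) + defect A k = 2 * defect A (k + 1) + A.count (k + 1) := by
  induction A using Multiset.induction with
  | empty => rfl
  | cons m A ih =>
    simp only [defect_cons, Multiset.count_cons]
    split_ifs <;> omega

theorem defect_injective : Function.Injective defect := by
  intro X Y h
  have h := congrFun h
  ext k
  cases k with
  | zero => rw [← defect_one, ← defect_one, h]
  | succ k =>
    have hX := defect_add_two_add_defect X k
    rw [h, h, h, defect_add_two_add_defect] at hX
    omega

/-- One unit moved from a smaller part to a larger one. -/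
def Spread (X Y : Multiset ℕ) : Prop :=
  ∃ j k R, j + 1 ≤ k ∧ X = (j + 1) ::ₘ k ::ₘ R ∧ Y = j ::ₘ (k + 1) ::ₘ R

theorem exists_lt_interval {f g : ℕ → ℕ} (hfg : ∀ k, f k ≤ g k) {a z b : ℕ} (haz : a ≤ z)
    (hzb : z ≤ b) (ha : f a = g a) (hb : f b = g b) (hz : f z ≠ g z) :
    ∃ x y, x < z ∧ z < y ∧ f x = g x ∧ f y = g y ∧ ∀ k, x < k → k < y → f k < g k := by
  obtain ⟨x, ⟨hxz, hx⟩, hx_max⟩ : ∃ x, (x ≤ z ∧ f x = g x) ∧ ∀ k, x < k → k ≤ z → f k ≠ g k :=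
    ⟨_, ⟨Nat.findGreatest_le z, Nat.findGreatest_spec (P := fun k => f k = g k) haz ha⟩,
      fun k => Nat.findGreatest_is_greatest⟩
  have hex : ∃ y, z ≤ y ∧ f y = g y := ⟨b, hzb, hb⟩
  obtain ⟨hzy, hy⟩ := Nat.find_spec hex
  refine ⟨x, Nat.find hex, hxz.lt_of_ne ?_, hzy.lt_of_ne ?_, hx, hy,
    fun k hxk hky => (hfg k).lt_of_ne ?_⟩
  · rintro rfl; exact hz hx
  · intro h; exact hz (h ▸ hy)
  · rcases le_total k z with hkz | hzk
    exacts [hx_max k hxk hkz, fun hk => Nat.find_min hex hky ⟨hzk, hk⟩]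

theorem mem_of_defect_eq_of_lt_succ {X Y : Multiset ℕ} (h : ∀ k, defect X k ≤ defect Y k) {x : ℕ}
    (hx : defect X x = defect Y x) (hlt : defect X (x + 1) < defect Y (x + 1)) : x ∈ Y := by
  refine Multiset.count_pos.1 ?_
  cases x with
  | zero =>
    rw [zero_add, defect_one Y] at hlt
    exact hlt.pos
  | succ x =>
    have hX := defect_add_two_add_defect X x
    have hY := defect_add_two_add_defect Y x
    have := h x
    change defect X (x + 2) < defect Y (x + 2) at hlt
    omega

theorem mem_of_defect_succ_eq_of_lt {X Y : Multiset ℕ} (h : ∀ k, defect X k ≤ defect Y k) {y : ℕ}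
    (hy : defect X (y + 1) = defect Y (y + 1)) (hlt : defect X y < defect Y y) : y + 1 ∈ Y := by
  refine Multiset.count_pos.1 ?_
  have hX := defect_add_two_add_defect X y
  have hY := defect_add_two_add_defect Y y
  have := h (y + 2)
  omega

/-- Between two consecutive contact points of the convex functions `defect X ≤ defect Y` the
multiset `Y` has parts at both ends; moving them towards each other lowers `defect Y` by one
strictly between the contact points and nowhere else. -/
theorem exists_spread_of_ne {X Y : Multiset ℕ} (hc : X.card = Y.card) (hs : X.sum = Y.sum)
    (h : ∀ k, defect X k ≤ defect Y k) (hne : X ≠ Y) :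
    ∃ Y', Spread Y' Y ∧ (∀ k, defect X k ≤ defect Y' k) ∧ (∀ k, defect Y' k ≤ defect Y k) ∧
      ∃ z < X.sum, defect Y' z < defect Y z := by
  obtain ⟨z, hz⟩ := Function.ne_iff.1 (defect_injective.ne hne)
  have htop {k : ℕ} (hk : X.sum ≤ k) : defect X k = defect Y k := by
    have hX := defect_add_sum fun m hm => (Multiset.le_sum_of_mem (m := X) hm).trans hk
    have hY := defect_add_sum fun m hm => (Multiset.le_sum_of_mem (m := Y) hm).trans (hs ▸ hk)
    rw [hc, ← hY, hs] at hX
    omega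
  have hzN : z < X.sum := not_le.1 fun hk => hz (htop hk)
  obtain ⟨x, y, hxz, hzy, hx, hy, hxy⟩ := exists_lt_interval h z.zero_le hzN.le
    (by simp [defect]) (htop le_rfl) hz
  obtain ⟨y, rfl⟩ : ∃ y', y = y' + 1 := ⟨y - 1, by omega⟩
  have hxY := mem_of_defect_eq_of_lt_succ h hx (hxy _ (by omega) (by omega))
  have hyY := mem_of_defect_succ_eq_of_lt h hy (hxy _ (by omega) (by omega))
  obtain ⟨R, rfl⟩ := Multiset.exists_cons_of_mem hxY
  obtain ⟨R, rfl⟩ := Multiset.exists_cons_of_mem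
    ((Multiset.mem_cons.1 hyY).resolve_left (by omega))
  have hdefect (k : ℕ) : defect (x ::ₘ (y + 1) ::ₘ R) k =
      defect ((x + 1) ::ₘ y ::ₘ R) k + if x < k ∧ k < y + 1 then 1 else 0 := by
    simp only [defect_cons]
    split_ifs <;> omega
  refine ⟨(x + 1) ::ₘ y ::ₘ R, ⟨x, y, R, by omega, rfl, rfl⟩, fun k => ?_, fun k => ?_, z, hzN, ?_⟩
  · have hk := h k
    have hk' := hxy k
    rw [hdefect] at hk hk'
    split_ifs at hk hk' with hin
    exacts [Nat.lt_succ_iff.1 (hk' hin.1 hin.2), hk]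
  · rw [hdefect]
    exact Nat.le_add_right _ _
  · rw [hdefect, if_pos ⟨hxz, hzy⟩]
    exact Nat.lt_succ_self _

theorem Spread.card_eq {X Y : Multiset ℕ} (h : Spread X Y) : X.card = Y.card := by
  obtain ⟨j, k, R, -, rfl, rfl⟩ := h
  simp

theorem Spread.sum_eq {X Y : Multiset ℕ} (h : Spread X Y) : X.sum = Y.sum := by
  obtain ⟨j, k, R, -, rfl, rfl⟩ := h
  simp only [Multiset.sum_cons]
  omega

theorem reflTransGen_spread {X Y : Multiset ℕ} (hc : X.card = Y.card) (hs : X.sum = Y.sum)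
    (h : ∀ k, defect X k ≤ defect Y k) : Relation.ReflTransGen Spread X Y := by
  induction hD : ∑ k ∈ Finset.range X.sum, defect Y k using Nat.strong_induction_on
    generalizing Y with
  | _ D ih =>
  by_cases hne : X = Y
  · rw [hne]
  obtain ⟨Y', hspread, hXY', hY'Y, z, hz, hlt⟩ := exists_spread_of_ne hc hs h hne
  refine .tail (ih _ ?_ (hc.trans hspread.card_eq.symm) (hs.trans hspread.sum_eq.symm) hXY' rfl)
    hspread
  rw [← hD]
  exact Finset.sum_lt_sum (fun k _ => hY'Y k) ⟨z, Finset.mem_range.2 hz, hlt⟩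

theorem defect_lt_defect_of_lt {A B : Multiset ℕ} (hcard : A.card ≤ B.card)
    (hsum : A.card = B.card → B.sum < A.sum) {q k : ℕ} (hB : ∀ m ∈ B, m ≤ q)
    (h : defect A q ≤ defect B q) (hk : q < k) : defect A k < defect B k := by
  have hBq := defect_add_sum hB
  have hBk := defect_add_sum fun m hm => (hB m hm).trans hk.le
  obtain ⟨j, rfl⟩ := Nat.exists_eq_add_of_lt hk
  rw [add_assoc] at hBk ⊢
  rcases hcard.lt_or_eq with hlt | heq
  · have hA := defect_add_le A q (j + 1)
    have hmul := Nat.mul_lt_mul_of_pos_right hlt j.add_one_pos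
    rw [mul_add] at hBk
    omega
  by_cases hAk : ∀ m ∈ A, m ≤ q + (j + 1)
  · have hA := defect_add_sum hAk
    have := hsum heq
    rw [heq] at hA
    omega
  push Not at hAk
  obtain ⟨m, hm, hmk⟩ := hAk
  obtain ⟨R, rfl⟩ := Multiset.exists_cons_of_mem hm
  have hR := defect_add_le R q (j + 1)
  rw [Multiset.card_cons] at heq
  rw [← heq, add_mul, mul_add] at hBk
  rw [← heq, add_mul] at hBq
  rw [defect_cons] at h ⊢
  omega

end Majorization

/-! ### Reachability from the invariants -/

section Reach

/-- Reachability by structure transitions, up to adding empty blocks on either side. -/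
def Reach (s t : Multiset SBlock) : Prop :=
  ∃ z z' : Multiset SBlock, (∀ b ∈ z, b.size = 0) ∧ (∀ b ∈ z', b.size = 0) ∧
    Relation.ReflTransGen TransSkew (s + z) (t + z')

theorem transSkew_add_right {s t : Multiset SBlock} (h : TransSkew s t) (r : Multiset SBlock) :
    TransSkew (s + r) (t + r) := by
  rcases h with ⟨j, k, rest, h1, h2, rfl, rfl⟩ | ⟨j, k, μ, rest, h1, h2, rfl, rfl⟩ |
    ⟨j, k, μ, rest, rfl, rfl⟩ | ⟨ek, p, q, rest, h1, h2, rfl, rfl⟩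
  · exact Or.inl ⟨j, k, rest + r, h1, h2, by simp, by simp⟩
  · exact Or.inr (Or.inl ⟨j, k, μ, rest + r, h1, h2, by simp, by simp⟩)
  · exact Or.inr (Or.inr (Or.inl ⟨j, k, μ, rest + r, by simp, by simp⟩))
  · exact Or.inr (Or.inr (Or.inr ⟨ek, p, q, rest + r, h1, h2, by rw [add_assoc], by simp⟩))

theorem reflTransGen_transSkew_add_right {s t : Multiset SBlock}
    (h : Relation.ReflTransGen TransSkew s t) (r : Multiset SBlock) :
    Relation.ReflTransGen TransSkew (s + r) (t + r) :=
  h.lift (· + r) fun _ _ h => transSkew_add_right h r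

theorem Reach.refl (s : Multiset SBlock) : Reach s s :=
  ⟨0, 0, by simp, by simp, .refl⟩

theorem Reach.single {s t : Multiset SBlock} (h : TransSkew s t) : Reach s t :=
  ⟨0, 0, by simp, by simp, by simpa using .single h⟩

theorem Reach.trans {s t u : Multiset SBlock} (h : Reach s t) (h' : Reach t u) : Reach s u := by
  obtain ⟨y, y', hy, hy', hst⟩ := h
  obtain ⟨z, z', hz, hz', htu⟩ := h'
  refine ⟨y + z, z' + y', fun b hb => (Multiset.mem_add.1 hb).elim (hy b) (hz b),
    fun b hb => (Multiset.mem_add.1 hb).elim (hz' b) (hy' b), ?_⟩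
  rw [← add_assoc, ← add_assoc]
  refine (reflTransGen_transSkew_add_right hst z).trans ?_
  rw [add_right_comm]
  exact reflTransGen_transSkew_add_right htu y'

theorem Reach.add_right {s t : Multiset SBlock} (h : Reach s t) (r : Multiset SBlock) :
    Reach (s + r) (t + r) := by
  obtain ⟨z, z', hz, hz', hst⟩ := h
  refine ⟨z, z', hz, hz', ?_⟩
  rw [add_right_comm s, add_right_comm t]
  exact reflTransGen_transSkew_add_right hst r

theorem Reach.add {s t s' t' : Multiset SBlock} (h : Reach s t) (h' : Reach s' t') :
    Reach (s + s') (t + t') := by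
  refine (h.add_right s').trans ?_
  rw [add_comm t, add_comm t]
  exact h'.add_right t

theorem Reach.sum {ι : Type*} (S : Finset ι) {f g : ι → Multiset SBlock}
    (h : ∀ i ∈ S, Reach (f i) (g i)) : Reach (∑ i ∈ S, f i) (∑ i ∈ S, g i) := by
  induction S using Finset.cons_induction with
  | empty => exact .refl _
  | cons a S ha ih =>
    rw [Finset.sum_cons, Finset.sum_cons]
    exact (h a (Finset.mem_cons_self _ _)).add (ih fun i hi => h i (Finset.mem_cons_of_mem hi))

theorem Reach.add_empty {s z : Multiset SBlock} (hz : ∀ b ∈ z, b.size = 0) : Reach s (s + z) :=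
  ⟨z, 0, hz, by simp, by simpa using .refl⟩

theorem Reach.of_add_empty {s z : Multiset SBlock} (hz : ∀ b ∈ z, b.size = 0) :
    Reach (s + z) s :=
  ⟨0, z, by simp, hz, by simpa using .refl⟩

theorem reach_map_M {X Y : Multiset ℕ} (h : Relation.ReflTransGen Spread X Y) :
    Reach (X.map SBlock.M) (Y.map SBlock.M) := by
  induction h with
  | refl => exact .refl _
  | tail _ h ih =>
    obtain ⟨j, k, R, hjk, rfl, rfl⟩ := h
    exact ih.trans (.single (.inl ⟨j + 1, k, R.map SBlock.M, by omega, hjk, by simp, by simp⟩))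

theorem reach_map_Hb_of_spread {X Y : Multiset ℕ} (h : Relation.ReflTransGen Spread X Y)
    (μ : Option ℂ) : Reach (Y.map (Hb μ)) (X.map (Hb μ)) := by
  induction h with
  | refl => exact .refl _
  | tail _ h ih =>
    obtain ⟨j, k, R, hjk, rfl, rfl⟩ := h
    exact .trans (.single (.inr (.inl
      ⟨j + 1, k, μ, R.map (Hb μ), by omega, hjk, by simp, by simp⟩))) ih

theorem size_Hb (μ : Option ℂ) (h : ℕ) : (Hb μ h).size = 2 * h := by
  cases μ <;> simp [Hb, SBlock.size, two_mul]

theorem reach_map_Hb {X Y : Multiset ℕ} (hs : X.sum = Y.sum)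
    (h : ∀ k, truncSum X k ≤ truncSum Y k) (μ : Option ℂ) :
    Reach (X.map (Hb μ)) (Y.map (Hb μ)) := by
  have hz (n : ℕ) : ∀ b ∈ (Multiset.replicate n 0).map (Hb μ), b.size = 0 := by
    intro b hb
    rw [Multiset.map_replicate] at hb
    rw [Multiset.eq_of_mem_replicate hb, size_Hb]
  refine (Reach.add_empty (hz Y.card)).trans (.trans ?_ (Reach.of_add_empty (hz X.card)))
  rw [← Multiset.map_add, ← Multiset.map_add]
  refine reach_map_Hb_of_spread (reflTransGen_spread ?_ ?_ fun k => ?_) μ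
  · simp [add_comm]
  · simp [hs]
  · have hX := truncSum_add_defect (X + Multiset.replicate Y.card 0) k
    have hY := truncSum_add_defect (Y + Multiset.replicate X.card 0) k
    have htrunc (n : ℕ) : truncSum (Multiset.replicate n 0) k = 0 := by simp [truncSum]
    simp only [Multiset.card_add, Multiset.card_replicate, truncSum_add, htrunc] at hX hY
    rw [add_comm Y.card, ← hX] at hY
    have := h k
    omega

/-- The blocks `M m` for `m ∈ A` and `Hb μ h` for `h ∈ β μ`, `μ ∈ S`. -/
def blocks (S : Finset (Option ℂ)) (A : Multiset ℕ) (β : Option ℂ → Multiset ℕ) :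
    Multiset SBlock :=
  A.map SBlock.M + ∑ μ ∈ S, (β μ).map (Hb μ)

variable {S : Finset (Option ℂ)} {A A' : Multiset ℕ} {β β' : Option ℂ → Multiset ℕ} {d : ℕ}

theorem blocks_cons (S : Finset (Option ℂ)) (m : ℕ) (A : Multiset ℕ)
    (β : Option ℂ → Multiset ℕ) : blocks S (m ::ₘ A) β = SBlock.M m ::ₘ blocks S A β := by
  simp [blocks]

theorem blocks_add (S : Finset (Option ℂ)) (A : Multiset ℕ) (β γ : Option ℂ → Multiset ℕ) :
    blocks S A (β + γ) = blocks S A β + ∑ μ ∈ S, (γ μ).map (Hb μ) := by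
  simp only [blocks, Pi.add_apply, Multiset.map_add, Finset.sum_add_distrib, add_assoc]

theorem blocks_add_single {μ : Option ℂ} (hμ : μ ∈ S) (A : Multiset ℕ)
    (β : Option ℂ → Multiset ℕ) (h : ℕ) :
    blocks S A (β + Pi.single μ {h}) = Hb μ h ::ₘ blocks S A β := by
  rw [blocks_add, Finset.sum_eq_single_of_mem μ hμ fun ν _ hν => by simp [hν], Pi.single_eq_same,
    Multiset.map_singleton, add_comm, Multiset.singleton_add]

theorem sum_sum_add_single {μ : Option ℂ} (hμ : μ ∈ S) (β : Option ℂ → Multiset ℕ) (h : ℕ) :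
    ∑ ν ∈ S, ((β + Pi.single μ {h} : Option ℂ → Multiset ℕ) ν).sum = ∑ ν ∈ S, (β ν).sum + h := by
  simp only [Pi.add_apply, Multiset.sum_add, Finset.sum_add_distrib]
  rw [Finset.sum_eq_single_of_mem
    (f := fun ν => ((Pi.single μ {h} : Option ℂ → Multiset ℕ) ν).sum) μ hμ
    fun ν _ hν => by simp [hν], Pi.single_eq_same, Multiset.sum_singleton]

theorem exists_max_cons {A : Multiset ℕ} (hA : A ≠ 0) :
    ∃ q R, A = q ::ₘ R ∧ ∀ m ∈ R, m ≤ q := by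
  obtain ⟨q, hq, hmax⟩ := Multiset.exists_max_image id hA
  obtain ⟨R, rfl⟩ := Multiset.exists_cons_of_mem hq
  exact ⟨q, R, rfl, fun m hm => hmax m (Multiset.mem_cons_of_mem hm)⟩

/-- The inequalities between the invariants of two canonical forms of the same size, the second
having `2 * d` more `M`-blocks. -/
structure Dominates (S : Finset (Option ℂ)) (A : Multiset ℕ) (β : Option ℂ → Multiset ℕ)
    (A' : Multiset ℕ) (β' : Option ℂ → Multiset ℕ) (d : ℕ) : Prop where
  card : A'.card = A.card + 2 * d
  size : A.sum + ∑ μ ∈ S, (β μ).sum = A'.sum + d + ∑ μ ∈ S, (β' μ).sum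
  defect_le : ∀ k, defect A k ≤ defect A' k
  truncSum_le : ∀ μ ∈ S, ∀ k, truncSum (β μ) k ≤ truncSum (β' μ) k + d * k

theorem Dominates.sum_le (h : Dominates S A β A' β' 0) {μ : Option ℂ} (hμ : μ ∈ S) :
    (β μ).sum ≤ (β' μ).sum :=
  sum_le_sum_of_truncSum_le fun k => by simpa using h.truncSum_le μ hμ k

theorem Dominates.sum_lt (h : Dominates S A β A' β' 0) {μ : Option ℂ} (hμ : μ ∈ S)
    (hlt : (β μ).sum < (β' μ).sum) : A'.sum < A.sum := by
  have hsum := Finset.sum_lt_sum (fun ν hν => h.sum_le hν) ⟨μ, hμ, hlt⟩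
  have := h.size
  omega

/-- A strict inequality at an eigenvalue for all large `k` leaves room for undoing a transition of
type (3) that uses the largest `M`-block. -/
theorem Dominates.exists_shrink {γ : Option ℂ → Multiset ℕ} {μ : Option ℂ} {a : ℕ} (hμ : μ ∈ S)
    (h : Dominates S A β A' (γ + Pi.single μ {a + 1}) d)
    (hlt : ∀ k, a + 1 ≤ k → truncSum (β μ) k < truncSum (γ μ + {a + 1}) k + d * k) :
    ∃ A'', Dominates S A β A'' (γ + Pi.single μ {a}) d ∧
      Reach (blocks S A'' (γ + Pi.single μ {a})) (blocks S A' (γ + Pi.single μ {a + 1})) := by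
  have hsum_lt : A.card = A'.card → A'.sum < A.sum := by
    intro hcard
    obtain rfl : d = 0 := by have := h.card; omega
    refine h.sum_lt hμ ?_
    have hk := hlt ((β μ).sum + a + 1) (by omega)
    rw [truncSum_eq_sum fun m hm => (Multiset.le_sum_of_mem hm).trans (by omega)] at hk
    simpa using hk.trans_le (Nat.add_le_add_right (truncSum_le_sum _ _) _)
  have hcard := h.card
  obtain ⟨q, R, rfl, hR⟩ : ∃ q R, A' = q ::ₘ R ∧ ∀ m ∈ R, m ≤ q := by
    refine exists_max_cons fun h0 => ?_
    have hA : A = 0 := Multiset.card_eq_zero.1 (by rw [h0, Multiset.card_zero] at hcard; omega)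
    exact (hsum_lt (by rw [h0, hA])).ne (by rw [h0, hA])
  refine ⟨(q + 1) ::ₘ R, ⟨by simpa using hcard, ?_, fun k => ?_, fun ν hν k => ?_⟩, ?_⟩
  · have hsize := h.size
    simp only [sum_sum_add_single hμ, Multiset.sum_cons] at hsize ⊢
    omega
  · have hk := h.defect_le k
    rcases le_or_gt k q with hkq | hqk
    · rw [defect_cons] at hk ⊢
      omega
    · have := defect_lt_defect_of_lt (by omega) hsum_lt (by simpa using hR) (h.defect_le q) hqk
      rw [defect_cons] at this ⊢
      omega
  · have hk := h.truncSum_le ν hν k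
    rcases eq_or_ne ν μ with rfl | hνμ
    · have hk' := hlt k
      simp only [Pi.add_apply, Pi.single_eq_same, truncSum_add, truncSum_singleton] at hk hk' ⊢
      omega
    · simpa [hνμ] using hk
  · rw [blocks_cons, blocks_cons, blocks_add_single hμ, blocks_add_single hμ]
    exact .single (.inr (.inr (.inl ⟨q, a, μ, blocks S R γ, rfl, rfl⟩)))

/-- At every `μ ∈ S` an inequality of `Dominates` is an equality beyond the largest part of `β' μ`,
so that no transition of type (3) can be undone. -/
def Tight (S : Finset (Option ℂ)) (β β' : Option ℂ → Multiset ℕ) (d : ℕ) : Prop :=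
  ∀ μ ∈ S, ∃ k, (∀ b ∈ β' μ, b ≤ k) ∧ truncSum (β μ) k = truncSum (β' μ) k + d * k

theorem Dominates.exists_tight (h : Dominates S A β A' β' d) :
    ∃ A'' β'', Dominates S A β A'' β'' d ∧ Tight S β β'' d ∧
      Reach (blocks S A'' β'') (blocks S A' β') := by
  induction hn : ∑ μ ∈ S, (β' μ).sum using Nat.strong_induction_on generalizing A' β' with
  | _ n ih =>
  by_cases htight : Tight S β β' d
  · exact ⟨A', β', h, htight, .refl _⟩
  rw [Tight] at htight
  push Not at htight
  obtain ⟨μ, hμ, hne⟩ := htight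
  have hlt (k : ℕ) (hk : ∀ b ∈ β' μ, b ≤ k) : truncSum (β μ) k < truncSum (β' μ) k + d * k :=
    (h.truncSum_le μ hμ k).lt_of_ne (hne k hk)
  obtain ⟨b, hb, hb_pos⟩ : ∃ b ∈ β' μ, 0 < b := by
    by_contra! hzero
    simpa [truncSum] using hlt 0 hzero
  obtain ⟨a, X, hX, hmax⟩ := exists_max_cons fun h0 : β' μ = 0 => by simp [h0] at hb
  have hmax' : ∀ m ∈ β' μ, m ≤ a := by simpa [hX] using hmax
  obtain ⟨a, rfl⟩ := Nat.exists_eq_add_one_of_ne_zero (hb_pos.trans_le (hmax' b hb)).ne'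
  obtain ⟨γ, rfl⟩ : ∃ γ : Option ℂ → Multiset ℕ, β' = γ + Pi.single μ {a + 1} := by
    refine ⟨Function.update β' μ X, funext fun ν => ?_⟩
    rcases eq_or_ne ν μ with rfl | hν
    · simp [hX, ← Multiset.singleton_add, add_comm]
    · simp [hν]
  obtain ⟨A₁, h₁, hreach₁⟩ := h.exists_shrink hμ fun k hk => by
    simpa using hlt k fun m hm => (hmax' m hm).trans hk
  simp only [sum_sum_add_single hμ] at hn ih
  obtain ⟨A₂, β₂, h₂, htight, hreach₂⟩ := ih _ (by omega) h₁ (sum_sum_add_single hμ γ a)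
  exact ⟨A₂, β₂, h₂, htight, hreach₂.trans hreach₁⟩

/-- The size of the block needed at one eigenvalue to undo a transition of type (4). -/
theorem exists_size_of_truncSum_eq {X Y : Multiset ℕ}
    (h : ∀ k, truncSum X k ≤ truncSum Y k + (d + 1) * k) {k₀ : ℕ} (hk₀ : ∀ b ∈ Y, b ≤ k₀)
    (heq : truncSum X k₀ = truncSum Y k₀ + (d + 1) * k₀) :
    ∃ κ, (∀ k, truncSum X k ≤ κ + truncSum Y k + d * k) ∧ (d + 1) * κ + Y.sum ≤ X.sum := by
  have hex : ∃ κ, ∀ k, truncSum X k ≤ κ + truncSum Y k + d * k :=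
    ⟨X.sum, fun k => (truncSum_le_sum X k).trans (by omega)⟩
  classical
  refine ⟨Nat.find hex, Nat.find_spec hex, ?_⟩
  have hX := truncSum_le_sum X k₀
  rw [heq, truncSum_eq_sum hk₀] at hX
  rcases Nat.eq_zero_or_pos (Nat.find hex) with hzero | hpos
  · rw [hzero]
    omega
  obtain ⟨k, hk⟩ := not_forall.1 (Nat.find_min hex (Nat.sub_one_lt_of_lt hpos))
  generalize Nat.find hex = κ at hk hpos ⊢
  have hκk : κ ≤ k := by
    have hk' := h k
    rw [add_mul] at hk'
    omega
  rcases le_total k₀ k with hle | hle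
  · have hXk := truncSum_le_sum X k
    have hmul := Nat.mul_le_mul_left d hκk
    rw [truncSum_eq_sum fun b hb => (hk₀ b hb).trans hle] at hk
    rw [add_mul]
    omega
  · have hmul := Nat.mul_le_mul_left (d + 1) (hκk.trans hle)
    omega

theorem Tight.exists_sizes (htight : Tight S β β' (d + 1)) (hS : S.Nonempty) {p q : ℕ}
    {R : Multiset ℕ} (hqp : q ≤ p) (hR : ∀ m ∈ R, m ≤ q)
    (h : Dominates S A β (p ::ₘ q ::ₘ R) β' (d + 1)) :
    ∃ κ : Option ℂ → ℕ, ∑ μ ∈ S, κ μ = p + q + 1 ∧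
      ∀ μ ∈ S, ∀ k, truncSum (β μ) k ≤ κ μ + truncSum (β' μ) k + d * k := by
  have hex : ∀ μ, ∃ κ, μ ∈ S → (∀ k, truncSum (β μ) k ≤ κ + truncSum (β' μ) k + d * k) ∧
      (d + 1) * κ + (β' μ).sum ≤ (β μ).sum := by
    intro μ
    by_cases hμ : μ ∈ S
    · obtain ⟨k₀, hk₀, heq⟩ := htight μ hμ
      obtain ⟨κ, hκ⟩ := exists_size_of_truncSum_eq (h.truncSum_le μ hμ) hk₀ heq
      exact ⟨κ, fun _ => hκ⟩
    · exact ⟨0, fun h => absurd h hμ⟩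
  choose κ hκ using hex
  have hκ_sum : ∑ μ ∈ S, κ μ ≤ p + q + 1 := by
    have hloc : (d + 1) * ∑ μ ∈ S, κ μ + ∑ μ ∈ S, (β' μ).sum ≤ ∑ μ ∈ S, (β μ).sum := by
      rw [Finset.mul_sum, ← Finset.sum_add_distrib]
      exact Finset.sum_le_sum fun μ hμ => (hκ μ hμ).2
    have hcard := h.card
    have hsize := h.size
    have hdefect := h.defect_le q
    have hAq := card_mul_le_defect_add_sum A q
    have hRq := defect_add_sum hR
    simp only [Multiset.card_cons, Multiset.sum_cons, defect_cons, Nat.sub_eq_zero_of_le hqp,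
      Nat.sub_self, zero_add] at hcard hsize hdefect
    rw [show R.card = A.card + 2 * d by omega, add_mul] at hRq
    have hmul := Nat.mul_le_mul_left d hqp
    refine le_of_mul_le_mul_left (a := d + 1) ?_ d.succ_pos
    linarith
  obtain ⟨μ₀, hμ₀⟩ := hS
  obtain ⟨e, he⟩ := Nat.exists_eq_add_of_le hκ_sum
  refine ⟨κ + Pi.single μ₀ e, ?_, fun μ hμ k => ((hκ μ hμ).1 k).trans ?_⟩
  · simp [Finset.sum_add_distrib, hμ₀, he]
  · gcongr
    exact Nat.le_add_right _ _

theorem sum_singleton_Hb (S : Finset (Option ℂ)) (κ : Option ℂ → ℕ) :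
    ∑ μ ∈ S, {Hb μ (κ μ)} =
      (((S.toList.map fun μ => (μ, κ μ)).map fun x => Hb x.1 x.2 : List SBlock) :
        Multiset SBlock) := by
  have h := Multiset.sum_map_singleton (S.1.map fun μ => Hb μ (κ μ))
  rw [Multiset.map_map] at h
  rw [List.map_map, ← Multiset.map_coe, Finset.coe_toList]
  exact h

theorem reach_blocks_add_sizes {κ : Option ℂ → ℕ} {p q : ℕ} (hκ : ∑ μ ∈ S, κ μ = p + q + 1)
    (A : Multiset ℕ) (β : Option ℂ → Multiset ℕ) :
    Reach (blocks S A (β + fun μ => {κ μ})) (blocks S (p ::ₘ q ::ₘ A) β) := by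
  rw [blocks_add, add_comm, blocks_cons, blocks_cons]
  simp only [Multiset.map_singleton]
  rw [sum_singleton_Hb]
  refine .single (.inr (.inr (.inr ⟨_, p, q, blocks S A β, ?_, ?_, rfl, rfl⟩)))
  · simpa [Function.comp_def] using S.nodup_toList
  · rw [← hκ, List.map_map, ← Finset.sum_map_toList]
    rfl

theorem Dominates.exists_of_tight (hS : S.Nonempty) (h : Dominates S A β A' β' (d + 1))
    (htight : Tight S β β' (d + 1)) :
    ∃ A'' β'', Dominates S A β A'' β'' d ∧ Reach (blocks S A'' β'') (blocks S A' β') := by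
  have hcard := h.card
  obtain ⟨p, R, rfl, hp⟩ := exists_max_cons (A := A') (Multiset.card_pos.1 (by omega))
  rw [Multiset.card_cons] at hcard
  obtain ⟨q, R, rfl, hq⟩ := exists_max_cons (A := R) (Multiset.card_pos.1 (by omega))
  rw [Multiset.card_cons] at hcard
  obtain ⟨κ, hκ, hβ⟩ := htight.exists_sizes hS (hp q (Multiset.mem_cons_self _ _)) hq h
  refine ⟨R, β' + fun μ => {κ μ}, ⟨by omega, ?_, fun k => ?_, fun μ hμ k => ?_⟩,
    reach_blocks_add_sizes hκ R β'⟩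
  · have hsize := h.size
    simp only [Multiset.sum_cons, Pi.add_apply, Multiset.sum_add, Finset.sum_add_distrib,
      Multiset.sum_singleton, hκ] at hsize ⊢
    omega
  · have hdefect := h.defect_le
    simp only [defect_cons] at hdefect
    have hqp := hp q (Multiset.mem_cons_self _ _)
    rcases le_or_gt k q with hk | hk
    · have := hdefect k
      have := hp q (Multiset.mem_cons_self _ _)
      omega
    · obtain ⟨j, rfl⟩ := Nat.exists_eq_add_of_le hk.le
      have hA := defect_add_le A q j
      have hRq := defect_add_sum hq
      have hRk := defect_add_sum fun m hm => (hq m hm).trans hk.le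
      have hmul := Nat.mul_le_mul_right j (show A.card ≤ R.card by omega)
      rw [mul_add] at hRk
      have := hdefect q
      omega
  · have hloc := hβ μ hμ k
    have hloc' := h.truncSum_le μ hμ k
    rw [Pi.add_apply, truncSum_add, truncSum_singleton]
    rw [add_mul] at hloc'
    omega

theorem Dominates.reach_of_tight (h : Dominates S A β A' β' 0) (htight : Tight S β β' 0) :
    Reach (blocks S A β) (blocks S A' β') := by
  have hle (μ) (hμ : μ ∈ S) (k : ℕ) : truncSum (β μ) k ≤ truncSum (β' μ) k := by
    simpa using h.truncSum_le μ hμ k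
  have hsum (μ) (hμ : μ ∈ S) : (β μ).sum = (β' μ).sum := by
    refine (h.sum_le hμ).antisymm ?_
    obtain ⟨k, hk, heq⟩ := htight μ hμ
    rw [truncSum_eq_sum hk, zero_mul, add_zero] at heq
    exact heq ▸ truncSum_le_sum _ _
  refine .add (reach_map_M (reflTransGen_spread (by simpa using h.card.symm) ?_ h.defect_le))
    (.sum _ fun μ hμ => reach_map_Hb (hsum μ hμ) (hle μ hμ) μ)
  have hsize := h.size
  rw [Finset.sum_congr rfl hsum] at hsize
  omega

theorem Dominates.reach (hS : S.Nonempty) (h : Dominates S A β A' β' d) :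
    Reach (blocks S A β) (blocks S A' β') := by
  induction d generalizing A' β' with
  | zero =>
    obtain ⟨A₁, β₁, h₁, htight, hreach⟩ := h.exists_tight
    exact (h₁.reach_of_tight htight).trans hreach
  | succ d ih =>
    obtain ⟨A₁, β₁, h₁, htight, hreach₁⟩ := h.exists_tight
    obtain ⟨A₂, β₂, h₂, hreach₂⟩ := h₁.exists_of_tight hS htight
    exact (ih h₂).trans (hreach₂.trans hreach₁)

end Reach

section Invariants

variable {S : Finset (Option ℂ)} {A A' : Multiset ℕ} {β β' : Option ℂ → Multiset ℕ}

theorem exists_eq_blocks (s : Multiset SBlock) :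
    ∃ S₀ : Finset (Option ℂ), ∀ S, S₀ ⊆ S → ∃ A β, s = blocks S A β := by
  induction s using Multiset.induction with
  | empty => exact ⟨∅, fun S _ => ⟨0, 0, by simp [blocks]⟩⟩
  | cons b s ih =>
    obtain ⟨S₀, hS₀⟩ := ih
    obtain ⟨μ, h, rfl⟩ | ⟨m, rfl⟩ := eq_Hb_or_eq_M b
    · refine ⟨insert μ S₀, fun S hS => ?_⟩
      obtain ⟨A, β, rfl⟩ := hS₀ S ((Finset.subset_insert _ _).trans hS)
      exact ⟨A, _, (blocks_add_single (hS (Finset.mem_insert_self _ _)) A β h).symm⟩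
    · refine ⟨S₀, fun S hS => ?_⟩
      obtain ⟨A, β, rfl⟩ := hS₀ S hS
      exact ⟨m ::ₘ A, β, (blocks_cons S m A β).symm⟩

theorem sum_map_blocks (f : SBlock → ℕ) :
    ((blocks S A β).map f).sum =
      (A.map fun m => f (.M m)).sum + ∑ μ ∈ S, ((β μ).map fun h => f (Hb μ h)).sum := by
  have hsum : ((∑ μ ∈ S, (β μ).map (Hb μ)).map f).sum =
      ∑ μ ∈ S, ((β μ).map fun h => f (Hb μ h)).sum := by
    rw [← Multiset.coe_mapAddMonoidHom, map_sum, ← Multiset.coe_sumAddMonoidHom, map_sum]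
    simp
  simp [blocks, hsum]

theorem sum_size_blocks :
    ((blocks S A β).map SBlock.size).sum = 2 * A.sum + A.card + 2 * ∑ μ ∈ S, (β μ).sum := by
  have hM (m : ℕ) : (SBlock.M m).size = 2 * m + 1 := by simp only [SBlock.size]; omega
  have hmul (X : Multiset ℕ) : (X.map (2 * ·)).sum = 2 * X.sum := by
    rw [Multiset.sum_map_mul_left, Multiset.map_id']
  simp [sum_map_blocks, size_Hb, hM, hmul, Finset.mul_sum]

theorem sum_globalContribution_blocks (k : ℕ) :
    ((blocks S A β).map (globalContribution k)).sum = defect A k := by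
  have hH (μ : Option ℂ) (h : ℕ) : globalContribution k (Hb μ h) = 0 := by cases μ <;> rfl
  simp only [sum_map_blocks, hH]
  simp [defect, globalContribution]

theorem sum_localContribution_blocks {o : Option ℂ} (ho : o ∈ S) (k : ℕ) :
    ((blocks S A β).map (localContribution o k)).sum = A.card * k + 2 * truncSum (β o) k := by
  simp only [sum_map_blocks, localContribution_Hb]
  rw [Finset.sum_eq_single_of_mem o ho fun μ _ hμ => by simp [hμ.symm]]
  simp [localContribution, truncSum, Multiset.sum_map_mul_left]

theorem card_le_card_of_truncSum_le {X Y : Multiset ℕ} {a b : ℕ}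
    (h : ∀ k, a * k + 2 * truncSum X k ≤ b * k + 2 * truncSum Y k) : a ≤ b := by
  by_contra! hlt
  have hk := h (2 * Y.sum + 1)
  have hY := truncSum_le_sum Y (2 * Y.sum + 1)
  have hmul := Nat.mul_le_mul_right (2 * Y.sum + 1) (Nat.succ_le_of_lt hlt)
  rw [Nat.succ_mul] at hmul
  omega

theorem DegeneratesTo.card_eq {R ι κ : Type*} [CommRing R] [Nontrivial R] [TopologicalSpace R]
    [Fintype ι] [DecidableEq ι] [Fintype κ] [DecidableEq κ] {P : SquarePencil R ι}
    {Q : SquarePencil R κ} (h : DegeneratesTo P Q) : Fintype.card ι = Fintype.card κ := by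
  obtain ⟨_, hR⟩ := closure_nonempty_iff.1 ⟨Q, h⟩
  exact hR.card_eq

theorem exists_dominates_of_degeneratesTo (hS : S.Nonempty)
    (h : DegeneratesTo (blockSum (blocks S A β)) (blockSum (blocks S A' β'))) :
    ∃ d, Dominates S A β A' β' d := by
  have hsize : 2 * A.sum + A.card + 2 * ∑ μ ∈ S, (β μ).sum =
      2 * A'.sum + A'.card + 2 * ∑ μ ∈ S, (β' μ).sum := by
    simpa [sizeSum_toList, sum_size_blocks] using h.card_eq
  have hglobal (k : ℕ) : defect A k ≤ defect A' k := by
    have hk : globalNullity k _ ≤ globalNullity k _ := h.chainNullity_le (k + 1) k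
    simpa only [globalNullity_blockSum, sum_globalContribution_blocks] using hk
  have hlocal (μ : Option ℂ) (hμ : μ ∈ S) (k : ℕ) :
      A.card * k + 2 * truncSum (β μ) k ≤ A'.card * k + 2 * truncSum (β' μ) k := by
    have hk := h.localNullity_le μ k
    simpa only [localNullity_blockSum, sum_localContribution_blocks hμ] using hk
  have hcard : A.card ≤ A'.card := hS.elim fun μ hμ => card_le_card_of_truncSum_le (hlocal μ hμ)
  obtain ⟨d, hd⟩ : ∃ d, A'.card = A.card + 2 * d := ⟨(A'.card - A.card) / 2, by omega⟩
  refine ⟨d, hd, by omega, hglobal, fun μ hμ k => ?_⟩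
  have hk := hlocal μ hμ k
  rw [hd, add_mul, mul_assoc] at hk
  omega

theorem reach_of_degeneratesTo {s t : Multiset SBlock}
    (h : DegeneratesTo (blockSum s) (blockSum t)) : Reach s t := by
  classical
  obtain ⟨S₁, h₁⟩ := exists_eq_blocks s
  obtain ⟨S₂, h₂⟩ := exists_eq_blocks t
  let S := insert none (S₁ ∪ S₂)
  have hS : S₁ ∪ S₂ ⊆ S := Finset.subset_insert _ _
  obtain ⟨A, β, rfl⟩ := h₁ S (Finset.subset_union_left.trans hS)
  obtain ⟨A', β', rfl⟩ := h₂ S (Finset.subset_union_right.trans hS)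
  have hne : S.Nonempty := Finset.insert_nonempty _ _
  obtain ⟨d, hd⟩ := exists_dominates_of_degeneratesTo hne h
  exact hd.reach hne

end Invariants

/-! ### Canonical forms -/

open LinearMap (BilinForm)

section Gram

variable {R V ι ι' : Type*} [CommRing R] [AddCommGroup V] [Module R V]

/-- The pencil of Gram matrices of a pair of bilinear forms with respect to a family of vectors. -/
def gram (A B : BilinForm R V) (b : ι → V) : SquarePencil R ι :=
  (Matrix.of fun i j => A (b i) (b j), Matrix.of fun i j => B (b i) (b j))

/-- The vectors orthogonal to a family with respect to both forms of a pair. -/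
def pairOrthogonal (A B : BilinForm R V) (b : ι → V) : Submodule R V :=
  (⨅ i, LinearMap.ker (A (b i))) ⊓ ⨅ i, LinearMap.ker (B (b i))

theorem mem_pairOrthogonal {A B : BilinForm R V} {b : ι → V} {x : V} :
    x ∈ pairOrthogonal A B b ↔ (∀ i, A (b i) x = 0) ∧ ∀ i, B (b i) x = 0 := by
  simp [pairOrthogonal, Submodule.mem_iInf]

variable [Fintype ι] [Fintype ι'] {A B : BilinForm R V}

theorem gram_fst_mulVec (A B : BilinForm R V) (b : ι → V) (c : ι → R) (i : ι) :
    ((gram A B b).1 *ᵥ c) i = A (b i) (∑ j, c j • b j) := by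
  simp [gram, mulVec, dotProduct, mul_comm]

theorem gram_snd_mulVec (A B : BilinForm R V) (b : ι → V) (c : ι → R) (i : ι) :
    ((gram A B b).2 *ᵥ c) i = B (b i) (∑ j, c j • b j) := by
  simp [gram, mulVec, dotProduct, mul_comm]

theorem gram_basis [DecidableEq ι] (A B : BilinForm R V) (b : Module.Basis ι R V) :
    gram A B b = (LinearMap.BilinForm.toMatrix b A, LinearMap.BilinForm.toMatrix b B) := by
  refine Prod.ext ?_ ?_ <;> ext i j <;> simp [gram]

theorem congruent_gram [DecidableEq ι] [DecidableEq ι'] (A B : BilinForm R V)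
    (b : Module.Basis ι R V) (b' : Module.Basis ι' R V) :
    Congruent (gram A B b) (gram A B b') := by
  rw [gram_basis, gram_basis]
  exact ⟨b.toMatrix b', b'.toMatrix b, b.toMatrix_mul_toMatrix_flip b',
    b'.toMatrix_mul_toMatrix_flip b,
    Prod.ext (LinearMap.BilinForm.toMatrix_mul_basis_toMatrix b b' A)
      (LinearMap.BilinForm.toMatrix_mul_basis_toMatrix b b' B)⟩

theorem linearIndependent_of_trivialKernel_gram {b : ι → V} (h : TrivialKernel (gram A B b)) :
    LinearIndependent R b := by
  refine Fintype.linearIndependent_iff.2 fun c hc => congrFun (h c ?_ ?_)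
  · ext i
    simp [gram_fst_mulVec, hc]
  · ext i
    simp [gram_snd_mulVec, hc]

theorem isCompl_span_pairOrthogonal {b : ι → V} (h : TrivialKernel (gram A B b))
    (hsolve : ∀ x, ∃ c, (∀ i, ((gram A B b).1 *ᵥ c) i = A (b i) x) ∧
      ∀ i, ((gram A B b).2 *ᵥ c) i = B (b i) x) :
    IsCompl (Submodule.span R (Set.range b)) (pairOrthogonal A B b) := by
  constructor
  · refine Submodule.disjoint_def.2 fun x hx hxb => ?_
    obtain ⟨c, rfl⟩ := (Submodule.mem_span_range_iff_exists_fun R).1 hx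
    simp only [mem_pairOrthogonal, ← gram_fst_mulVec A B, ← gram_snd_mulVec A B] at hxb
    simp [h c (funext hxb.1) (funext hxb.2)]
  · refine codisjoint_iff.2 (eq_top_iff.2 fun x _ => ?_)
    obtain ⟨c, hA, hB⟩ := hsolve x
    refine Submodule.mem_sup.2 ⟨∑ j, c j • b j, Submodule.sum_mem _ fun j _ =>
      Submodule.smul_mem _ _ (Submodule.subset_span ⟨j, rfl⟩), x - ∑ j, c j • b j,
      mem_pairOrthogonal.2 ⟨fun i => ?_, fun i => ?_⟩, add_sub_cancel _ _⟩
    · rw [map_sub, ← hA, gram_fst_mulVec, sub_self]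
    · rw [map_sub, ← hB, gram_snd_mulVec, sub_self]

end Gram

section CanonicalForm

variable {V : Type*} [AddCommGroup V] [Module ℂ V] [FiniteDimensional ℂ V]
  {A B : BilinForm ℂ V} {ι : Type*} [Fintype ι] [DecidableEq ι]

/-- The pair of forms is represented, in some basis, by a direct sum of canonical blocks. -/
def HasCanonicalForm (A B : BilinForm ℂ V) : Prop :=
  ∃ s, Congruent (gram A B (Module.finBasis ℂ V)) (blockSum s)

/-- The induction hypothesis in the proof that every pair of alternating forms has a canonical
form: the restrictions to all proper subspaces have one. -/
def HasProperCanonicalForms (A B : BilinForm ℂ V) : Prop :=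
  ∀ W : Submodule ℂ V, W ≠ ⊤ → HasCanonicalForm (A.restrict W) (B.restrict W)

theorem HasCanonicalForm.of_basis (b : Module.Basis ι ℂ V) {s : Multiset SBlock}
    (h : Congruent (gram A B b) (blockSum s)) : HasCanonicalForm A B :=
  ⟨s, (congruent_gram A B _ b).trans h⟩

theorem hasCanonicalForm_of_isCompl (hA : A.IsAlt) (hB : B.IsAlt) {U W : Submodule ℂ V}
    (hUW : IsCompl U W) (hAUW : ∀ u ∈ U, ∀ w ∈ W, A u w = 0) (hBUW : ∀ u ∈ U, ∀ w ∈ W, B u w = 0)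
    (hU : HasCanonicalForm (A.restrict U) (B.restrict U))
    (hW : HasCanonicalForm (A.restrict W) (B.restrict W)) : HasCanonicalForm A B := by
  obtain ⟨s, hs⟩ := hU
  obtain ⟨t, ht⟩ := hW
  let b := (Module.finBasis ℂ U).prod (Module.finBasis ℂ W)
  refine .of_basis (b.map (Submodule.prodEquivOfIsCompl U W hUW)) (s := s + t) ?_
  convert (hs.directSum ht).trans (congruent_blockSum_add s t) using 1
  have hAWU (w) (hw : w ∈ W) (u) (hu : u ∈ U) : A w u = 0 := by
    rw [← hA.neg_eq, hAUW u hu w hw, neg_zero]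
  have hBWU (w) (hw : w ∈ W) (u) (hu : u ∈ U) : B w u = 0 := by
    rw [← hB.neg_eq, hBUW u hu w hw, neg_zero]
  refine Prod.ext ?_ ?_ <;> ext (i | i) (j | j) <;> simp [gram, directSum, b, *]

theorem hasCanonicalForm_of_isCompl_span [Nonempty ι] (hA : A.IsAlt) (hB : B.IsAlt) {b : ι → V}
    (hb : LinearIndependent ℂ b) {W : Submodule ℂ V}
    (hbW : IsCompl (Submodule.span ℂ (Set.range b)) W) (hAW : ∀ i, ∀ w ∈ W, A (b i) w = 0)
    (hBW : ∀ i, ∀ w ∈ W, B (b i) w = 0) {s : Multiset SBlock}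
    (hs : Congruent (gram A B b) (blockSum s)) (ih : HasProperCanonicalForms A B) :
    HasCanonicalForm A B := by
  have horth {C : BilinForm ℂ V} (hC : ∀ i, ∀ w ∈ W, C (b i) w = 0) (u)
      (hu : u ∈ Submodule.span ℂ (Set.range b)) (w) (hw : w ∈ W) : C u w = 0 := by
    obtain ⟨c, rfl⟩ := (Submodule.mem_span_range_iff_exists_fun ℂ).1 hu
    simp [hC _ w hw]
  refine hasCanonicalForm_of_isCompl hA hB hbW (horth hAW) (horth hBW)
    (.of_basis (Module.Basis.span hb) (s := s) ?_) (ih W ?_)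
  · convert hs using 1
    refine Prod.ext ?_ ?_ <;> ext i j <;> simp [gram, Module.Basis.span_apply]
  · rintro rfl
    have i := Classical.arbitrary ι
    exact hb.ne_zero i (Submodule.span_eq_bot.1 (eq_bot_of_isCompl_top hbW) _ ⟨i, rfl⟩)

theorem hasCanonicalForm_of_subsingleton [Subsingleton V] (A B : BilinForm ℂ V) :
    HasCanonicalForm A B := by
  have := isEmpty_fin_sizeSum (s := 0) (by simp)
  refine .of_basis (s := 0) (ι := Fin (sizeSum (0 : Multiset SBlock).toList))
    (Module.Basis.empty V) ?_
  rw [Subsingleton.elim (gram A B _) (blockSum 0)]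
  exact .refl _

end CanonicalForm

section SkewDoubleKernel

variable {R ρ κ : Type*} [CommRing R] [Fintype ρ] [Fintype κ]

theorem trivialKernel_skewDouble {X : MatrixPencil R ρ κ} (hX : TrivialKernel X)
    (hXt : TrivialKernel (transpose X)) : TrivialKernel (skewDouble X) := by
  intro v h₁ h₂
  obtain ⟨x, y, rfl⟩ : ∃ x y, v = Sum.elim x y := ⟨_, _, (Sum.elim_comp_inl_inr v).symm⟩
  simp only [skewDouble, fromBlocks_mulVec, zero_mulVec, add_zero, zero_add, neg_mulVec,
    Sum.elim_comp_inl, Sum.elim_comp_inr, ← Sum.elim_zero_zero, Sum.elim_eq_iff,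
    neg_eq_zero] at h₁ h₂ ⊢
  exact ⟨hXt x h₁.2 h₂.2, hX y h₁.1 h₂.1⟩

theorem skewDouble_fst_mulVec (X : MatrixPencil R ρ κ) (x : ρ → R) (y : κ → R) :
    (skewDouble X).1 *ᵥ Sum.elim x y = Sum.elim (X.1 *ᵥ y) (-(x ᵥ* X.1)) := by
  simp [skewDouble, fromBlocks_mulVec, neg_mulVec, mulVec_transpose]

theorem skewDouble_snd_mulVec (X : MatrixPencil R ρ κ) (x : ρ → R) (y : κ → R) :
    (skewDouble X).2 *ᵥ Sum.elim x y = Sum.elim (X.2 *ᵥ y) (-(x ᵥ* X.2)) := by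
  simp [skewDouble, fromBlocks_mulVec, neg_mulVec, mulVec_transpose]

theorem trivialKernel_skewDouble_shiftPencil {m n : ℕ} (hmn : m ≤ n) (hnm : n ≤ m + 1)
    (hm : 1 ≤ m) : TrivialKernel (skewDouble (shiftPencil R m n)) :=
  trivialKernel_skewDouble (trivialKernel_shiftPencil hnm (.inr hm))
    (trivialKernel_transpose_shiftPencil hmn)

end SkewDoubleKernel

section Regular

variable {R V : Type*} [CommRing R] [AddCommGroup V] [Module R V] {D : BilinForm R V}
  {N : Module.End R V}

theorem apply_eq_of_isAlt_comp (hD : D.IsAlt) (hDN : BilinForm.IsAlt (D ∘ₗ N)) (x y : V) :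
    D (N x) y = D x (N y) := by
  rw [← hD.neg_eq (N y), ← LinearMap.comp_apply, ← hDN.neg_eq, LinearMap.comp_apply]

theorem pow_apply_comm (hN : ∀ x y, D (N x) y = D x (N y)) (i : ℕ) (x y : V) :
    D ((N ^ i) x) y = D x ((N ^ i) y) := by
  induction i generalizing x y with
  | zero => rfl
  | succ i ih =>
    rw [pow_succ, Module.End.mul_apply, ih, hN, ← Module.End.mul_apply, pow_mul_comm',
      Module.End.mul_apply]

theorem pow_apply_pow (hN : ∀ x y, D (N x) y = D x (N y)) (i j : ℕ) (x y : V) :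
    D ((N ^ i) x) ((N ^ j) y) = D ((N ^ (i + j)) x) y := by
  rw [← pow_apply_comm hN, ← Module.End.mul_apply, ← pow_add, add_comm]

theorem pow_apply_pow_self (hD : D.IsAlt) (hDN : BilinForm.IsAlt (D ∘ₗ N)) (i j : ℕ) (x : V) :
    D ((N ^ i) x) ((N ^ j) x) = 0 := by
  have hN := apply_eq_of_isAlt_comp hD hDN
  rw [pow_apply_pow hN]
  obtain ⟨m, hm | hm⟩ := Nat.even_or_odd' (i + j)
  · rw [hm, two_mul, ← pow_apply_pow hN, hD.self_eq_zero]
  · rw [hm, two_mul, add_right_comm, ← pow_apply_pow hN, pow_succ', Module.End.mul_apply]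
    exact hDN.self_eq_zero _

theorem pow_apply_eq_zero {n : ℕ} (hn : N ^ n = 0) {i : ℕ} (hi : n ≤ i) (x : V) :
    (N ^ i) x = 0 := by
  rw [pow_eq_zero_of_le hi hn, LinearMap.zero_apply]

theorem apply_pow_apply (N : Module.End R V) (i : ℕ) (x : V) : N ((N ^ i) x) = (N ^ (i + 1)) x := by
  rw [pow_succ', Module.End.mul_apply]

/-- The Jordan chain `x, N x, …, N ^ h x` followed by the reversed chain `N ^ h y, …, N y, y`. -/
def jordanPair (N : Module.End R V) (h : ℕ) (x y : V) : Fin (h + 1) ⊕ Fin (h + 1) → V :=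
  Sum.elim (fun i => (N ^ (i : ℕ)) x) fun j => (N ^ (h - j)) y

theorem gram_jordanPair (hD : D.IsAlt) (hDN : BilinForm.IsAlt (D ∘ₗ N)) {h : ℕ} {x y : V}
    (hxy : ∀ i, D ((N ^ i) x) y = if i = h then 1 else 0) :
    gram (D ∘ₗ N) D (jordanPair N h x y) = skewDouble (shiftPencil R (h + 1) (h + 1)) := by
  have hpair (i : ℕ) (j : Fin (h + 1)) :
      D ((N ^ i) x) ((N ^ (h - j)) y) = if (j : ℕ) = i then 1 else 0 := by
    rw [pow_apply_pow (apply_eq_of_isAlt_comp hD hDN), hxy]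
    exact if_congr (by omega) rfl rfl
  refine Prod.ext ?_ ?_ <;> ext (i | i) (j | j) <;>
    simp only [gram, jordanPair, skewDouble, shiftPencil, of_apply, Sum.elim_inl, Sum.elim_inr,
      fromBlocks_apply₁₁, fromBlocks_apply₁₂, fromBlocks_apply₂₁, fromBlocks_apply₂₂,
      Matrix.zero_apply, Matrix.neg_apply, transpose_apply, LinearMap.comp_apply, apply_pow_apply,
      pow_apply_pow_self hD hDN, hpair]
  · rw [← apply_pow_apply, apply_eq_of_isAlt_comp hD hDN, apply_pow_apply, ← hD.neg_eq, hpair]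
  · rw [← hD.neg_eq, hpair]

theorem apply_jordanPair {h : ℕ} (hN : N ^ (h + 1) = 0) (x y : V) (i : Fin (h + 1) ⊕ Fin (h + 1)) :
    N (jordanPair N h x y i) = 0 ∨ ∃ j, N (jordanPair N h x y i) = jordanPair N h x y j := by
  rcases i with i | j <;> simp only [jordanPair, Sum.elim_inl, Sum.elim_inr, apply_pow_apply]
  · rcases (Nat.lt_succ_iff.1 i.2).lt_or_eq with hi | hi
    · exact .inr ⟨.inl ⟨i + 1, by omega⟩, rfl⟩
    · exact .inl (by rw [hi, hN, LinearMap.zero_apply])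
  · rcases Nat.eq_zero_or_pos (j : ℕ) with hj | hj
    · exact .inl (by rw [hj, Nat.sub_zero, hN, LinearMap.zero_apply])
    · exact .inr ⟨.inr ⟨j - 1, by omega⟩, by
        rw [Sum.elim_inr, show h - (j - 1) = h - j + 1 by omega]⟩

theorem isCompl_span_jordanPair (hD : D.IsAlt) (hDN : BilinForm.IsAlt (D ∘ₗ N)) {h : ℕ}
    (hN : N ^ (h + 1) = 0) {x y : V} (hxy : ∀ i, D ((N ^ i) x) y = if i = h then 1 else 0) :
    IsCompl (Submodule.span R (Set.range (jordanPair N h x y)))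
      (pairOrthogonal (D ∘ₗ N) D (jordanPair N h x y)) := by
  have hgram := gram_jordanPair hD hDN hxy
  refine isCompl_span_pairOrthogonal (hgram ▸ trivialKernel_skewDouble_shiftPencil le_rfl
    (Nat.le_succ _) (Nat.le_add_left _ _)) fun z => ?_
  set b := jordanPair N h x y
  have hG : (gram (D ∘ₗ N) D b).2 * (gram (D ∘ₗ N) D b).2 = -1 := by
    rw [hgram, skewDouble, shiftPencil_self_snd]
    simp [fromBlocks_multiply, ← fromBlocks_one, fromBlocks_neg]
  obtain ⟨c, hc⟩ : ∃ c, (gram (D ∘ₗ N) D b).2 *ᵥ c = fun i => D (b i) z :=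
    ⟨-((gram (D ∘ₗ N) D b).2 *ᵥ fun i => D (b i) z), by simp [mulVec_neg, hG, neg_mulVec]⟩
  refine ⟨c, fun i => ?_, congrFun hc⟩
  rw [gram_fst_mulVec]
  change D (N (b i)) _ = D (N (b i)) z
  rcases apply_jordanPair hN x y i with hi | ⟨j, hj⟩
  · simp [b, hi]
  · rw [hj, ← gram_snd_mulVec (D ∘ₗ N), hc]

theorem exists_dual_vector {𝕜 V : Type*} [Field 𝕜] [AddCommGroup V] [Module 𝕜 V]
    {D : BilinForm 𝕜 V} {N : Module.End 𝕜 V} (hN : ∀ x y, D (N x) y = D x (N y)) {h : ℕ} {x : V}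
    (hx : N ^ (h + 1) = 0) (hDx : ∃ y, D ((N ^ h) x) y ≠ 0) :
    ∃ y, ∀ i, D ((N ^ i) x) y = if i = h then 1 else 0 := by
  suffices ∀ r ≤ h, ∃ y, ∀ i, h ≤ i + r → D ((N ^ i) x) y = if i = h then 1 else 0 by
    obtain ⟨y, hy⟩ := this h le_rfl
    exact ⟨y, fun i => hy i (Nat.le_add_left _ _)⟩
  intro r hr
  induction r with
  | zero =>
    obtain ⟨y, hy⟩ := hDx
    refine ⟨(D ((N ^ h) x) y)⁻¹ • y, fun i hi => ?_⟩
    rw [add_zero] at hi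
    rcases hi.eq_or_lt with rfl | hlt
    · simp [hy]
    · rw [pow_apply_eq_zero hx hlt, if_neg (by omega), map_zero, LinearMap.zero_apply]
  | succ r ih =>
    obtain ⟨y, hy⟩ := ih (by omega)
    refine ⟨y - D ((N ^ (h - (r + 1))) x) y • (N ^ (r + 1)) y, fun i hi => ?_⟩
    rw [map_sub, map_smul, pow_apply_pow hN, hy (i + (r + 1)) (by omega), smul_eq_mul]
    rcases hi.eq_or_lt with hi | hi
    · rw [show h - (r + 1) = i by omega, if_pos hi.symm, mul_one, sub_self, if_neg (by omega)]
    · rw [hy i (by omega), if_neg (show i + (r + 1) ≠ h by omega), mul_zero, sub_zero]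

theorem apply_eq_zero_of_gram_eq_recenter {V : Type*} [AddCommGroup V] [Module ℂ V]
    {D A B : BilinForm ℂ V} {N : Module.End ℂ V} {o : Option ℂ}
    (h : gram A B id = recenter o (gram (D ∘ₗ N) D id)) {x y : V} (hN : D (N x) y = 0)
    (hD : D x y = 0) : A x y = 0 ∧ B x y = 0 := by
  have hA : A x y = (recenter o (gram (D ∘ₗ N) D id)).1 x y := h ▸ rfl
  have hB : B x y = (recenter o (gram (D ∘ₗ N) D id)).2 x y := h ▸ rfl
  rw [hA, hB]
  cases o <;> simp [recenter, gram, hN, hD]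

end Regular

section Fitting

variable {V : Type*} [AddCommGroup V] [Module ℂ V] [FiniteDimensional ℂ V]
  {D A B : BilinForm ℂ V} {N : Module.End ℂ V}

theorem hasCanonicalForm_of_isNilpotent [Nontrivial V] (hA : A.IsAlt) (hB : B.IsAlt)
    (hD : D.IsAlt) (hDN : BilinForm.IsAlt (D ∘ₗ N)) (hDs : D.SeparatingLeft) (hN : IsNilpotent N)
    {o : Option ℂ} (hrec : gram A B id = recenter o (gram (D ∘ₗ N) D id))
    (ih : HasProperCanonicalForms A B) : HasCanonicalForm A B := by
  obtain ⟨h, hh⟩ : ∃ h, nilpotencyClass N = h + 1 :=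
    Nat.exists_eq_succ_of_ne_zero (pos_nilpotencyClass_iff.2 hN).ne'
  have hpow : N ^ (h + 1) = 0 := hh ▸ pow_nilpotencyClass hN
  have hpow' : N ^ h ≠ 0 := by
    simpa [hh] using pow_pred_nilpotencyClass hN
  obtain ⟨x, hx⟩ : ∃ x, (N ^ h) x ≠ 0 := by
    by_contra! hc
    exact hpow' (LinearMap.ext hc)
  have hDx : ∃ y, D ((N ^ h) x) y ≠ 0 := by
    contrapose! hx
    exact hDs _ hx
  obtain ⟨y, hxy⟩ := exists_dual_vector (apply_eq_of_isAlt_comp hD hDN) hpow hDx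
  have hgram : gram A B (jordanPair N h x y) =
      recenter o (skewDouble (shiftPencil ℂ (h + 1) (h + 1))) := by
    rw [← gram_jordanPair hD hDN hxy]
    exact congrArg (relabel · (jordanPair N h x y) (jordanPair N h x y)) hrec |>.trans
      (by cases o <;> rfl)
  have horth (i) (w) (hw : w ∈ pairOrthogonal (D ∘ₗ N) D (jordanPair N h x y)) :=
    apply_eq_zero_of_gram_eq_recenter hrec ((mem_pairOrthogonal.1 hw).1 i)
      ((mem_pairOrthogonal.1 hw).2 i)
  refine hasCanonicalForm_of_isCompl_span hA hB (linearIndependent_of_trivialKernel_gram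
    (gram_jordanPair hD hDN hxy ▸ trivialKernel_skewDouble_shiftPencil le_rfl (Nat.le_succ _)
      (Nat.le_add_left _ _)))
    (isCompl_span_jordanPair hD hDN hpow hxy) (fun i w hw => (horth i w hw).1)
    (fun i w hw => (horth i w hw).2) (s := {Hb o (h + 1)}) ?_ ih
  rw [hgram]
  exact (congruent_Hb o (h + 1)).trans (congruent_blockSum_singleton _)

theorem isNilpotent_or_hasCanonicalForm (hA : A.IsAlt) (hB : B.IsAlt)
    (hN : ∀ x y, D (N x) y = D x (N y))
    (hAB : ∀ x y, D (N x) y = 0 → D x y = 0 → A x y = 0 ∧ B x y = 0)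
    (hker : LinearMap.ker N ≠ ⊥) (ih : HasProperCanonicalForms A B) :
    IsNilpotent N ∨ HasCanonicalForm A B := by
  obtain ⟨n, hn, hn1⟩ :=
    (N.eventually_isCompl_ker_pow_range_pow.and (Filter.eventually_ge_atTop 1)).exists
  by_cases hk : LinearMap.ker (N ^ n) = ⊤
  · exact .inl ⟨n, LinearMap.ker_eq_top.1 hk⟩
  have hr : LinearMap.range (N ^ n) ≠ ⊤ := by
    intro hr
    have hinj : LinearMap.ker (N ^ n) = ⊥ := eq_bot_of_isCompl_top (hr ▸ hn)
    obtain ⟨m, rfl⟩ := Nat.exists_eq_succ_of_ne_zero (Nat.one_le_iff_ne_zero.1 hn1)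
    exact hker (eq_bot_iff.2 (hinj ▸ pow_succ N m ▸ LinearMap.ker_le_ker_comp N (N ^ m)))
  have hD (u) (hu : u ∈ LinearMap.ker (N ^ n)) (y) (hy : y ∈ LinearMap.range (N ^ n)) :
      D u y = 0 := by
    obtain ⟨z, rfl⟩ := hy
    rw [← pow_apply_comm hN, LinearMap.mem_ker.1 hu, map_zero, LinearMap.zero_apply]
  have hNker (u) (hu : u ∈ LinearMap.ker (N ^ n)) : N u ∈ LinearMap.ker (N ^ n) := by
    rw [LinearMap.mem_ker, ← Module.End.mul_apply, pow_mul_comm', Module.End.mul_apply,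
      LinearMap.mem_ker.1 hu, map_zero]
  have horth (u) (hu : u ∈ LinearMap.ker (N ^ n)) (y) (hy : y ∈ LinearMap.range (N ^ n)) :=
    hAB u y (hD _ (hNker u hu) y hy) (hD u hu y hy)
  exact .inr (hasCanonicalForm_of_isCompl hA hB hn (fun u hu y hy => (horth u hu y hy).1)
    (fun u hu y hy => (horth u hu y hy).2) (ih _ hk) (ih _ hr))

theorem hasCanonicalForm_of_gram_eq_recenter (hA : A.IsAlt) (hB : B.IsAlt) (hD : D.IsAlt)
    (hDN : BilinForm.IsAlt (D ∘ₗ N)) (hDs : D.SeparatingLeft) (hker : LinearMap.ker N ≠ ⊥)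
    {o : Option ℂ} (hrec : gram A B id = recenter o (gram (D ∘ₗ N) D id))
    (ih : HasProperCanonicalForms A B) : HasCanonicalForm A B := by
  have : Nontrivial V := by
    by_contra hV
    rw [not_nontrivial_iff_subsingleton] at hV
    exact hker (Subsingleton.elim _ _)
  rcases isNilpotent_or_hasCanonicalForm hA hB (apply_eq_of_isAlt_comp hD hDN)
    (fun _ _ => apply_eq_zero_of_gram_eq_recenter hrec) hker ih with hN | h
  · exact hasCanonicalForm_of_isNilpotent hA hB hD hDN hDs hN hrec ih
  · exact h

end Fitting

section Representing

variable {𝕜 V : Type*} [Field 𝕜] [AddCommGroup V] [Module 𝕜 V] {C D : BilinForm 𝕜 V}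

theorem exists_comp_eq [FiniteDimensional 𝕜 V] (hD : D.SeparatingLeft) (C : BilinForm 𝕜 V) :
    ∃ T : Module.End 𝕜 V, D ∘ₗ T = C := by
  have hinj : Function.Injective D :=
    (injective_iff_map_eq_zero D).2 fun x hx => hD x fun y => by rw [hx, LinearMap.zero_apply]
  let e := LinearMap.linearEquivOfInjective D hinj Subspace.dual_finrank_eq.symm
  exact ⟨e.symm ∘ₗ C, LinearMap.ext fun x => e.apply_symm_apply (C x)⟩

theorem ker_ne_bot_of_not_separatingLeft (hD : D.SeparatingLeft) {T : Module.End 𝕜 V}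
    (hT : D ∘ₗ T = C) (hC : ¬C.SeparatingLeft) : LinearMap.ker T ≠ ⊥ := by
  contrapose! hC
  refine fun x hx => LinearMap.ker_eq_bot'.1 hC x (hD _ fun y => ?_)
  rw [← LinearMap.comp_apply, hT, hx]

end Representing

section RegularPair

variable {V : Type*} [AddCommGroup V] [Module ℂ V] [FiniteDimensional ℂ V] {A B : BilinForm ℂ V}

theorem hasCanonicalForm_of_separatingLeft_snd [Nontrivial V] (hA : A.IsAlt) (hB : B.IsAlt)
    (hBs : B.SeparatingLeft) (ih : HasProperCanonicalForms A B) : HasCanonicalForm A B := by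
  obtain ⟨T, rfl⟩ := exists_comp_eq hBs A
  obtain ⟨μ, hμ⟩ := Module.End.exists_eigenvalue T
  refine hasCanonicalForm_of_gram_eq_recenter hA hB hB (N := T - μ • 1) (fun x => ?_)
    hBs ?_ (o := some μ) ?_ ih
  · simpa [hB.self_eq_zero] using hA.self_eq_zero x
  · rwa [← Module.End.eigenspace_def, ← Module.End.hasEigenvalue_iff]
  · refine Prod.ext ?_ rfl
    ext x y
    simp [gram, recenter]

theorem hasCanonicalForm_of_separatingLeft_fst (hA : A.IsAlt) (hB : B.IsAlt)
    (hAs : A.SeparatingLeft) (hBs : ¬B.SeparatingLeft) (ih : HasProperCanonicalForms A B) :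
    HasCanonicalForm A B := by
  obtain ⟨T, rfl⟩ := exists_comp_eq hAs B
  exact hasCanonicalForm_of_gram_eq_recenter hA hB hA hB hAs
    (ker_ne_bot_of_not_separatingLeft hAs rfl hBs) (o := none) rfl ih

theorem hasCanonicalForm_of_separatingLeft_sub (hA : A.IsAlt) (hB : B.IsAlt) {μ : ℂ}
    (hDs : (A - μ • B).SeparatingLeft) (hAs : ¬A.SeparatingLeft) (hBs : ¬B.SeparatingLeft)
    (ih : HasProperCanonicalForms A B) : HasCanonicalForm A B := by
  obtain ⟨T, hT⟩ := exists_comp_eq hDs B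
  have hT' (x y) : (A - μ • B) (T x) y = B x y := LinearMap.congr_fun₂ hT x y
  have hDT := apply_eq_of_isAlt_comp (hA.sub (hB.smul μ))
    (by rwa [hT] : BilinForm.IsAlt ((A - μ • B) ∘ₗ T))
  refine (isNilpotent_or_hasCanonicalForm hA hB hDT (fun x y hx hxy => ?_)
    (ker_ne_bot_of_not_separatingLeft hDs hT hBs) ih).resolve_left fun hN => ?_
  · rw [hT'] at hx
    simpa [hx] using hxy
  · have hinj := ((Module.End.isUnit_iff _).1 (hN.smul μ).isUnit_one_add).1
    refine hAs fun x hx => hinj ((hDs _ fun y => ?_).trans (map_zero _).symm)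
    rw [LinearMap.add_apply, map_add, LinearMap.add_apply, LinearMap.smul_apply, map_smul,
      LinearMap.smul_apply, hT']
    simp [hx]

theorem hasCanonicalForm_of_regular [Nontrivial V] (hA : A.IsAlt) (hB : B.IsAlt) {μ : ℂ}
    (hreg : (A - μ • B).SeparatingLeft) (ih : HasProperCanonicalForms A B) :
    HasCanonicalForm A B := by
  by_cases hBs : B.SeparatingLeft
  · exact hasCanonicalForm_of_separatingLeft_snd hA hB hBs ih
  by_cases hAs : A.SeparatingLeft
  · exact hasCanonicalForm_of_separatingLeft_fst hA hB hAs hBs ih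
  · exact hasCanonicalForm_of_separatingLeft_sub hA hB hreg hAs hBs ih

end RegularPair

section SingularChain

/-- The coefficients of a vector polynomial of degree at most `m` annihilated by the pencil
`A - λB`. -/
structure SingularChain {R V : Type*} [CommRing R] [AddCommGroup V] [Module R V]
    (A B : BilinForm R V) (m : ℕ) (v : ℕ → V) : Prop where
  zero : A (v 0) = 0
  succ : ∀ i, A (v (i + 1)) = B (v i)
  bound : ∀ i, m < i → v i = 0

variable {𝕜 V : Type*} [Field 𝕜] [AddCommGroup V] [Module 𝕜 V] {A B : BilinForm 𝕜 V}

/-- The matrix of `A - λB` in a basis, as a matrix of polynomials in `λ`. -/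
def polynomialMatrix {ι : Type*} (A B : BilinForm 𝕜 V) (b : ι → V) : Matrix ι ι (Polynomial 𝕜) :=
  (gram A B b).1.map Polynomial.C - (Polynomial.X : Polynomial 𝕜) • (gram A B b).2.map Polynomial.C

theorem det_polynomialMatrix_eq_zero [Infinite 𝕜] {ι : Type*} [Fintype ι] [DecidableEq ι]
    (b : Module.Basis ι 𝕜 V) (h : ∀ μ : 𝕜, ¬(A - μ • B).SeparatingLeft) :
    (polynomialMatrix A B b).det = 0 := by
  refine Polynomial.funext fun μ => ?_
  have hμ := h μ
  rw [LinearMap.separatingLeft_iff_det_ne_zero b, not_not] at hμ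
  rw [← Polynomial.coe_evalRingHom, RingHom.map_det, map_zero, ← hμ]
  congr 1
  ext i j
  simp [polynomialMatrix, gram, mul_comm μ]

theorem exists_singularChain [Infinite 𝕜] [FiniteDimensional 𝕜 V]
    (h : ∀ μ : 𝕜, ¬(A - μ • B).SeparatingLeft) : ∃ m v, SingularChain A B m v ∧ ∃ i, v i ≠ 0 := by
  let b := Module.finBasis 𝕜 V
  obtain ⟨p, hp0, hp⟩ := Matrix.exists_vecMul_eq_zero_iff.2 (det_polynomialMatrix_eq_zero b h)
  have hcoeff (D : BilinForm 𝕜 V) (k i) :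
      D (∑ j, (p j).coeff k • b j) (b i) = ∑ j, (p j).coeff k * D (b j) (b i) := by simp
  refine ⟨Finset.univ.sup fun j => (p j).natDegree, fun k => ∑ j, (p j).coeff k • b j,
    ⟨b.ext fun i => ?_, fun k => b.ext fun i => ?_, fun k hk => ?_⟩, ?_⟩
  · have := congrArg (Polynomial.coeff · 0) (congrFun hp i)
    rw [hcoeff]
    simpa [vecMul, dotProduct, polynomialMatrix, gram, mul_sub] using this
  · have := congrArg (Polynomial.coeff · (k + 1)) (congrFun hp i)
    rw [hcoeff, hcoeff]
    simpa [vecMul, dotProduct, polynomialMatrix, gram, mul_sub, ← mul_assoc, sub_eq_zero,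
      Polynomial.coeff_mul_X] using this
  · refine Finset.sum_eq_zero fun j _ => ?_
    rw [Polynomial.coeff_eq_zero_of_natDegree_lt, zero_smul]
    exact (Finset.le_sup (f := fun j => (p j).natDegree) (Finset.mem_univ j)).trans_lt hk
  · by_contra! hc
    refine hp0 (funext fun j => Polynomial.ext fun k => ?_)
    exact Fintype.linearIndependent_iff.1 b.linearIndependent _ (hc k) j

theorem exists_minimal_singularChain (h : ∃ m v, SingularChain A B m v ∧ ∃ i, v i ≠ 0) :
    ∃ m v, SingularChain A B m v ∧ v 0 ≠ 0 ∧
      ∀ m' < m, ∀ u, SingularChain A B m' u → u 0 = 0 := by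
  classical
  obtain ⟨v, hv, i, hi⟩ := Nat.find_spec h
  refine ⟨Nat.find h, v, hv, fun h0 => ?_, fun m' hm' u hu => ?_⟩
  · have hi0 : i ≠ 0 := fun hc => hi (hc ▸ h0)
    have hle : i ≤ Nat.find h := not_lt.1 fun hc => hi (hv.bound i hc)
    refine Nat.find_min h (m := Nat.find h - 1) (by omega) ⟨fun j => v (j + 1),
      ⟨by rw [hv.succ, h0, map_zero], fun j => hv.succ _, fun j hj => hv.bound _ (by omega)⟩,
      i - 1, ?_⟩
    change v (i - 1 + 1) ≠ 0
    rwa [Nat.sub_add_cancel (by omega)]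
  · by_contra hc
    exact Nat.find_min h hm' ⟨u, hu, 0, hc⟩

end SingularChain

section DualChain

variable {𝕜 V : Type*} [Field 𝕜] [AddCommGroup V] [Module 𝕜 V] {A B : BilinForm 𝕜 V}

theorem exists_dual_comp_eq {W : Type*} [AddCommGroup W] [Module 𝕜 W] (f : V →ₗ[𝕜] W)
    (S : Submodule 𝕜 W) {φ : Module.Dual 𝕜 V} (hφ : ∀ x ∈ S.comap f, φ x = 0) :
    ∃ ψ : Module.Dual 𝕜 W, ψ ∘ₗ f = φ ∧ ∀ y ∈ S, ψ y = 0 := by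
  have hmem : φ ∈ (LinearMap.ker (S.mkQ ∘ₗ f)).dualAnnihilator :=
    (Submodule.mem_dualAnnihilator _).2 fun x hx => hφ x (by simpa using hx)
  rw [← LinearMap.range_dualMap_eq_dualAnnihilator_ker] at hmem
  obtain ⟨g, rfl⟩ := hmem
  exact ⟨g ∘ₗ S.mkQ, rfl, fun y hy => by simp [(Submodule.Quotient.mk_eq_zero S).2 hy]⟩

/-- The vectors `w 0` that start a chain `B (w (j + 1)) = A (w j)` with `k` steps. -/
def chainStart (A B : BilinForm 𝕜 V) : ℕ → Submodule 𝕜 V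
  | 0 => ⊤
  | k + 1 => ((chainStart A B k).map B).comap A

theorem exists_chain_of_mem_chainStart {k : ℕ} {x : V} (hx : x ∈ chainStart A B k) :
    ∃ w : ℕ → V, w 0 = x ∧ ∀ j < k, B (w (j + 1)) = A (w j) := by
  induction k generalizing x with
  | zero => exact ⟨fun _ => x, rfl, by simp⟩
  | succ k ih =>
    obtain ⟨y, hy, hyx⟩ := hx
    obtain ⟨w, rfl, hw⟩ := ih hy
    refine ⟨fun j => Nat.casesOn j x w, rfl, fun j hj => ?_⟩
    cases j with
    | zero => exact hyx
    | succ j => exact hw j (by omega)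

theorem exists_chain_of_forall_chainStart [FiniteDimensional 𝕜 V] (hA : A.IsAlt) (hB : B.IsAlt)
    {k : ℕ} {x : V} (hx : ∀ w ∈ chainStart A B k, B x w = 0) :
    ∃ u : ℕ → V, u 0 = x ∧ (∀ i, A (u (i + 1)) = B (u i)) ∧ ∀ i, k < i → u i = 0 := by
  induction k generalizing x with
  | zero =>
    refine ⟨Pi.single 0 x, by simp, fun i => ?_, fun i hi => by simp [hi.ne']⟩
    ext y
    cases i <;> simp [hx y trivial]
  | succ k ih =>
    obtain ⟨ψ, hψ, hψ'⟩ := exists_dual_comp_eq A ((chainStart A B k).map B) (φ := B x) hx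
    obtain ⟨y, rfl⟩ := (Module.bijective_dual_eval 𝕜 V).2 ψ
    have hAy : A (-y) = B x := by
      rw [← hψ]
      ext w
      simp [hA.neg_eq]
    have hBy (w) (hw : w ∈ chainStart A B k) : B (-y) w = 0 := by
      rw [map_neg, LinearMap.neg_apply, hB.neg_eq]
      exact hψ' _ ⟨w, hw, rfl⟩
    obtain ⟨u, hu0, hu, hbound⟩ := ih hBy
    refine ⟨fun j => Nat.casesOn j x u, rfl, fun i => ?_, fun i hi => ?_⟩
    · cases i with
      | zero =>
        change A (u 0) = B x
        rw [hu0, hAy]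
      | succ i => exact hu i
    · obtain ⟨i, rfl⟩ := Nat.exists_eq_succ_of_ne_zero (by omega : i ≠ 0)
      exact hbound i (by omega)

theorem exists_dual_chain [FiniteDimensional 𝕜 V] (hA : A.IsAlt) (hB : B.IsAlt) {k : ℕ} {x : V}
    (hx : A x = 0) (hx0 : x ≠ 0) (hmin : ∀ u, SingularChain A B k u → u 0 = 0) :
    ∃ w : ℕ → V, B x (w 0) = 1 ∧ ∀ j < k, B (w (j + 1)) = A (w j) := by
  obtain ⟨y, hy, hxy⟩ : ∃ y ∈ chainStart A B k, B x y ≠ 0 := by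
    by_contra! hc
    obtain ⟨u, rfl, hu, hbound⟩ := exists_chain_of_forall_chainStart hA hB hc
    exact hx0 (hmin u ⟨hx, hu, hbound⟩)
  obtain ⟨w, rfl, hw⟩ := exists_chain_of_mem_chainStart hy
  exact ⟨fun j => (B x (w 0))⁻¹ • w j, by simp [hxy], fun j hj => by simp [hw j hj]⟩

end DualChain

section SingularBlock

variable {R V : Type*} [CommRing R] [AddCommGroup V] [Module R V] {A B : BilinForm R V} {k : ℕ}
  {v w : ℕ → V}

theorem snd_apply_eq_zero_of_chain (hA : A.IsAlt) (hB : B.IsAlt)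
    (hw : ∀ j < k, B (w (j + 1)) = A (w j)) {i j : ℕ} (hi : i ≤ k) (hj : j ≤ k) :
    B (w i) (w j) = 0 := by
  have key (d j) (hd : j + d ≤ k) : B (w (j + d)) (w j) = 0 := by
    induction d using Nat.twoStepInduction generalizing j with
    | zero => exact hB.self_eq_zero _
    | one => rw [hw j hd, hA.self_eq_zero]
    | more d ih _ =>
      rw [← add_assoc, hw _ (by omega), ← hA.neg_eq, ← hw j (by omega), hB.neg_eq,
        add_right_comm j d 1, ih (j + 1) (by omega)]
  rcases le_total i j with h | h <;> obtain ⟨d, rfl⟩ := Nat.exists_eq_add_of_le h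
  · rw [← hB.neg_eq, key d i hj, neg_zero]
  · exact key d j hi

theorem fst_apply_eq_zero_of_chain (hA : A.IsAlt) (hB : B.IsAlt)
    (hw : ∀ j < k, B (w (j + 1)) = A (w j)) {i j : ℕ} (hi : i ≤ k) (hj : j ≤ k) :
    A (w i) (w j) = 0 := by
  rcases hi.lt_or_eq with h | rfl
  · rw [← hw i h, snd_apply_eq_zero_of_chain hA hB hw h hj]
  · rcases hj.lt_or_eq with h | rfl
    · rw [← hA.neg_eq, ← hw j h, snd_apply_eq_zero_of_chain hA hB hw h hi, neg_zero]
    · exact hA.self_eq_zero _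

theorem SingularChain.snd_apply_dual_chain (hA : A.IsAlt) (hB : B.IsAlt)
    (hv : SingularChain A B (k + 1) v) (hvw : B (v 0) (w 0) = 1)
    (hw : ∀ j < k, B (w (j + 1)) = A (w j)) {i j : ℕ} (hj : j ≤ k) :
    B (v i) (w j) = if i = j then 1 else 0 := by
  have hsucc (i j) (hj : j < k) : B (v i) (w (j + 1)) = A (v i) (w j) := by
    rw [← hB.neg_eq, hw j hj, hA.neg_eq]
  have hshift (d i j) (hj : j + d ≤ k) : B (v (i + d)) (w (j + d)) = B (v i) (w j) := by
    induction d with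
    | zero => rfl
    | succ d ih => rw [← add_assoc, ← add_assoc, hsucc _ (j + d) hj, hv.succ, ih (by omega)]
  rcases lt_trichotomy i j with h | rfl | h
  · obtain ⟨d, rfl⟩ := Nat.exists_eq_add_of_lt h
    have := hshift i 0 (d + 1) (by omega)
    rw [zero_add, add_comm, ← add_assoc] at this
    rw [this, if_neg (by omega), hsucc 0 d (by omega), hv.zero, LinearMap.zero_apply]
  · have := hshift i 0 0 (by omega)
    rw [zero_add] at this
    rw [if_pos rfl, this, hvw]
  · rw [if_neg h.ne', ← hshift (k - j) i j (by omega), ← hv.succ, hv.bound _ (by omega), map_zero,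
      LinearMap.zero_apply]

/-- A dual chain followed by a negated singular chain; its Gram pencil is the block
`M_{k+1}`. -/
def singularFamily (v w : ℕ → V) (k : ℕ) : Fin (k + 1) ⊕ Fin (k + 1 + 1) → V :=
  Sum.elim (fun j => w j) fun i => -v i

theorem gram_singularFamily (hA : A.IsAlt) (hB : B.IsAlt) (hv : SingularChain A B (k + 1) v)
    (hvw : B (v 0) (w 0) = 1) (hw : ∀ j < k, B (w (j + 1)) = A (w j)) :
    gram A B (singularFamily v w k) = skewDouble (shiftPencil R (k + 1) (k + 1 + 1)) := by
  have hBv (i j : ℕ) : B (v i) (v j) = 0 :=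
    fst_apply_eq_zero_of_chain hB hA (fun j _ => hv.succ j) (le_max_left i j) (le_max_right i j)
  have hAv (i j : ℕ) : A (v i) (v j) = 0 :=
    snd_apply_eq_zero_of_chain hB hA (fun j _ => hv.succ j) (le_max_left i j) (le_max_right i j)
  have hBw (i j : Fin (k + 1)) : B (w i) (w j) = 0 :=
    snd_apply_eq_zero_of_chain hA hB hw (by omega) (by omega)
  have hAw (i j : Fin (k + 1)) : A (w i) (w j) = 0 :=
    fst_apply_eq_zero_of_chain hA hB hw (by omega) (by omega)
  have hBvw (i : ℕ) (j : Fin (k + 1)) : B (v i) (w j) = if i = j then 1 else 0 :=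
    hv.snd_apply_dual_chain hA hB hvw hw (by omega)
  have hAvw (i : ℕ) (j : Fin (k + 1)) : A (v i) (w j) = if i = j + 1 then 1 else 0 := by
    cases i with
    | zero => simp [hv.zero]
    | succ i => simp only [hv.succ, hBvw, Nat.add_right_cancel_iff]
  refine Prod.ext ?_ ?_ <;> ext (i | i) (j | j) <;>
    simp only [gram, singularFamily, skewDouble, shiftPencil, of_apply, Sum.elim_inl, Sum.elim_inr,
      fromBlocks_apply₁₁, fromBlocks_apply₁₂, fromBlocks_apply₂₁, fromBlocks_apply₂₂,
      Matrix.zero_apply, Matrix.neg_apply, transpose_apply, map_neg, LinearMap.neg_apply, hAv, hBv,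
      hAw, hBw, hAvw, hBvw, hA.neg_eq, hB.neg_eq, neg_zero]

theorem vecMul_shiftPencil_fst {m n : ℕ} (x : Fin m → R) (j : Fin n) :
    (x ᵥ* (shiftPencil R m n).1) j =
      if h : 1 ≤ (j : ℕ) ∧ (j : ℕ) - 1 < m then x ⟨j - 1, h.2⟩ else 0 :=
  mul_shiftPencil_fst (Matrix.of fun _ : Unit => x) () j

theorem vecMul_shiftPencil_snd {m n : ℕ} (x : Fin m → R) (j : Fin n) :
    (x ᵥ* (shiftPencil R m n).2) j = if h : (j : ℕ) < m then x ⟨j, h⟩ else 0 :=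
  mul_shiftPencil_snd (Matrix.of fun _ : Unit => x) () j

theorem isCompl_span_singularFamily (hA : A.IsAlt) (hB : B.IsAlt)
    (hv : SingularChain A B (k + 1) v) (hvw : B (v 0) (w 0) = 1)
    (hw : ∀ j < k, B (w (j + 1)) = A (w j)) :
    IsCompl (Submodule.span R (Set.range (singularFamily v w k)))
      (pairOrthogonal A B (singularFamily v w k)) := by
  have hgram := gram_singularFamily hA hB hv hvw hw
  refine isCompl_span_pairOrthogonal (hgram ▸ trivialKernel_skewDouble_shiftPencil
    (Nat.le_succ _) le_rfl (Nat.le_add_left _ _)) fun x => ?_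
  refine ⟨Sum.elim (fun j => B (v j) x)
    fun i => if (i : ℕ) < k + 1 then B (w i) x else A (w k) x, ?_, ?_⟩
  · rw [hgram, skewDouble_fst_mulVec]
    rintro (j | i)
    · rw [Sum.elim_inl, shiftPencil_fst_mulVec, dif_pos (by omega)]
      rcases (Nat.lt_succ_iff.1 j.2).lt_or_eq with hj | hj
      · simp [singularFamily, hj, hw _ hj]
      · simp [singularFamily, hj]
    · rw [Sum.elim_inr, Pi.neg_apply, vecMul_shiftPencil_fst]
      obtain ⟨_ | i, hi⟩ := i
      · simp [singularFamily, hv.zero]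
      · rw [dif_pos (by simp; omega)]
        simp [singularFamily, hv.succ]
  · rw [hgram, skewDouble_snd_mulVec]
    rintro (j | i)
    · rw [Sum.elim_inl, shiftPencil_snd_mulVec, dif_pos (by omega)]
      simp [singularFamily, Nat.lt_succ_iff.1 j.2]
    · rw [Sum.elim_inr, Pi.neg_apply, vecMul_shiftPencil_snd]
      split_ifs with hi
      · simp [singularFamily]
      · simp [singularFamily, ← hv.succ, hv.bound _ (show k + 1 < i + 1 by omega)]

end SingularBlock

section Existence

variable {V : Type*} [AddCommGroup V] [Module ℂ V] [FiniteDimensional ℂ V] {A B : BilinForm ℂ V}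

theorem hasCanonicalForm_of_singularChain (hA : A.IsAlt) (hB : B.IsAlt) {k : ℕ} {v : ℕ → V}
    (hv : SingularChain A B (k + 1) v) (hv0 : v 0 ≠ 0)
    (hmin : ∀ u, SingularChain A B k u → u 0 = 0) (ih : HasProperCanonicalForms A B) :
    HasCanonicalForm A B := by
  obtain ⟨w, hvw, hw⟩ := exists_dual_chain hA hB hv.zero hv0 hmin
  have hgram := gram_singularFamily hA hB hv hvw hw
  refine hasCanonicalForm_of_isCompl_span hA hB (linearIndependent_of_trivialKernel_gram
    (hgram ▸ trivialKernel_skewDouble_shiftPencil (Nat.le_succ _) le_rfl (Nat.le_add_left _ _)))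
    (isCompl_span_singularFamily hA hB hv hvw hw)
    (fun i x hx => (mem_pairOrthogonal.1 hx).1 i) (fun i x hx => (mem_pairOrthogonal.1 hx).2 i)
    (s := {SBlock.M (k + 1)}) ?_ ih
  rw [hgram]
  exact (congruent_M (k + 1)).trans (congruent_blockSum_singleton _)

theorem hasCanonicalForm_of_common_radical (hA : A.IsAlt) (hB : B.IsAlt) {v : V} (hv : v ≠ 0)
    (hAv : A v = 0) (hBv : B v = 0) (ih : HasProperCanonicalForms A B) : HasCanonicalForm A B := by
  have : Unique (Fin 0 ⊕ Fin 1) := (Equiv.emptySum (Fin 0) (Fin 1)).unique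
  let b : Fin 0 ⊕ Fin 1 → V := fun _ => v
  obtain ⟨W, hW⟩ := (Submodule.span ℂ (Set.range b)).exists_isCompl
  refine hasCanonicalForm_of_isCompl_span hA hB (b := b) (linearIndependent_unique_iff.2 hv) hW
    (by simp [b, hAv]) (by simp [b, hBv]) (s := {SBlock.M 0}) ?_ ih
  convert (congruent_M 0).trans (congruent_blockSum_singleton _) using 1
  refine Prod.ext ?_ ?_ <;> ext (i | i) (j | j) <;>
    first | exact i.elim0 | exact j.elim0 | simp [gram, skewDouble, b, hAv, hBv]

theorem hasCanonicalForm_of_isAlt (hA : A.IsAlt) (hB : B.IsAlt) : HasCanonicalForm A B := by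
  induction hn : Module.finrank ℂ V using Nat.strong_induction_on generalizing V with
  | _ n ih =>
  have ih' : HasProperCanonicalForms A B := fun W hW =>
    ih _ (hn ▸ Submodule.finrank_lt hW) (fun x => hA x) (fun x => hB x) rfl
  rcases subsingleton_or_nontrivial V with hV | hV
  · exact hasCanonicalForm_of_subsingleton A B
  by_cases hreg : ∃ μ : ℂ, (A - μ • B).SeparatingLeft
  · obtain ⟨μ, hμ⟩ := hreg
    exact hasCanonicalForm_of_regular hA hB hμ ih'
  obtain ⟨m, v, hv, hv0, hmin⟩ :=
    exists_minimal_singularChain (exists_singularChain (not_exists.1 hreg))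
  cases m with
  | zero =>
    refine hasCanonicalForm_of_common_radical hA hB hv0 hv.zero ?_ ih'
    rw [← hv.succ, hv.bound 1 one_pos, map_zero]
  | succ k => exact hasCanonicalForm_of_singularChain hA hB hv hv0 (hmin k k.lt_succ_self) ih'

theorem isAlt_toBilin' {ι : Type*} [Fintype ι] [DecidableEq ι] {X : Matrix ι ι ℂ} (hX : Xᵀ = -X) :
    (Matrix.toBilin' X).IsAlt := by
  intro x
  rw [Matrix.toBilin'_apply', ← self_eq_neg]
  conv_lhs => rw [dotProduct_comm, ← vecMul_transpose, hX, ← dotProduct_mulVec, neg_mulVec,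
    dotProduct_neg]

theorem exists_congruent_blockSum {ι : Type*} [Fintype ι] [DecidableEq ι] {P : SquarePencil ℂ ι}
    (h₁ : P.1ᵀ = -P.1) (h₂ : P.2ᵀ = -P.2) : ∃ s, Congruent P (blockSum s) := by
  obtain ⟨s, hs⟩ := hasCanonicalForm_of_isAlt (isAlt_toBilin' h₁) (isAlt_toBilin' h₂)
  refine ⟨s, .trans ?_ hs⟩
  convert congruent_gram _ _ (Pi.basisFun ℂ ι) (Module.finBasis ℂ (ι → ℂ)) using 1
  simp [gram_basis, LinearMap.BilinForm.toMatrix_basisFun, LinearMap.BilinForm.toMatrix'_toBilin']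

end Existence

section Counting

variable {s : Multiset SBlock} {o : Option ℂ} {k : ℕ}

theorem Hb_inj {o o' : Option ℂ} {h h' : ℕ} : Hb o h = Hb o' h' ↔ o = o' ∧ h = h' := by
  cases o <;> cases o' <;> simp [Hb, and_comm]

theorem M_notMem_of_localNullity_one_eq_zero (h : localNullity o 1 (blockSum s) = 0) (m : ℕ) :
    SBlock.M m ∉ s := by
  intro hm
  rw [localNullity_blockSum, Multiset.sum_eq_zero_iff] at h
  exact one_ne_zero (h _ (Multiset.mem_map_of_mem (localContribution o 1) hm))

theorem exists_le_and_Hb_mem_of_localNullity_lt (hM : ∀ m, SBlock.M m ∉ s)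
    (h : localNullity o k (blockSum s) < localNullity o (k + 1) (blockSum s)) :
    ∃ h, k + 1 ≤ h ∧ Hb o h ∈ s := by
  contrapose! h
  rw [localNullity_blockSum, localNullity_blockSum]
  refine Multiset.sum_map_le_sum_map _ _ fun b hb => ?_
  obtain ⟨o', h', rfl⟩ | ⟨m, rfl⟩ := eq_Hb_or_eq_M b
  · rw [localContribution_Hb, localContribution_Hb]
    split_ifs with ho
    · subst ho
      have : h' ≤ k := by
        by_contra! hk
        exact h h' hk hb
      omega
    · exact le_rfl
  · exact absurd hb (hM m)

theorem sizeSum_map_Hb (ek : List (Option ℂ × ℕ)) :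
    sizeSum (Multiset.toList (ek.map fun x => Hb x.1 x.2 : List SBlock)) =
      2 * (ek.map Prod.snd).sum := by
  rw [sizeSum_toList, Multiset.map_coe, Multiset.sum_coe, List.map_map, ← List.sum_map_mul_left]
  simp only [Function.comp_def, size_Hb]

/-- The size bound forces every block to be as small as its lower bound permits and leaves no room
for other blocks. -/
theorem congruent_blockSum_map_Hb (ek : List (Option ℂ × ℕ)) (hnd : (ek.map Prod.fst).Nodup)
    (hs : ∀ x ∈ ek, x.2 ≠ 0 → ∃ h, x.2 ≤ h ∧ Hb x.1 h ∈ s)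
    (hsize : sizeSum s.toList ≤ 2 * (ek.map Prod.snd).sum) :
    Congruent (blockSum s) (blockSum (ek.map fun x => Hb x.1 x.2 : List SBlock)) := by
  classical
  induction ek generalizing s with
  | nil =>
    have hs0 : ∀ b ∈ s, b.size = 0 := by
      simpa [sizeSum_toList, Multiset.sum_eq_zero_iff] using hsize
    have h := congruent_blockSum_add_of_size_eq_zero 0 hs0
    rw [zero_add] at h
    exact h.symm
  | cons x ek ih =>
    rw [List.map_cons, List.nodup_cons] at hnd
    rw [List.map_cons, List.sum_cons] at hsize
    rw [List.map_cons, ← Multiset.cons_coe]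
    by_cases hx : x.2 = 0
    · refine (ih hnd.2 (fun y hy => hs y (List.mem_cons_of_mem _ hy)) (by omega)).trans ?_
      rw [← Multiset.singleton_add, add_comm]
      exact congruent_blockSum_add_of_size_eq_zero _ (by simp [size_Hb, hx])
    · obtain ⟨h, hxh, hmem⟩ := hs x List.mem_cons_self hx
      obtain ⟨t, rfl⟩ := Multiset.exists_cons_of_mem hmem
      have hsum : sizeSum (Hb x.1 h ::ₘ t).toList = 2 * h + sizeSum t.toList := by
        rw [sizeSum_toList, Multiset.map_cons, Multiset.sum_cons, size_Hb, sizeSum_toList]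
      have ht := ih hnd.2 (s := t) (fun y hy hy0 => ?_) (by omega)
      · have hcard := ht.card_eq
        rw [Fintype.card_fin, Fintype.card_fin, sizeSum_map_Hb] at hcard
        obtain rfl : h = x.2 := by omega
        exact (congruent_blockSum_cons _ _).symm.trans
          (((Congruent.refl _).directSum ht).trans (congruent_blockSum_cons _ _))
      · obtain ⟨h', hyh', hmem'⟩ := hs y (List.mem_cons_of_mem _ hy) hy0
        refine ⟨h', hyh', (Multiset.mem_cons.1 hmem').resolve_left fun he => hnd.1 ?_⟩
        exact (Hb_inj.1 he).1 ▸ List.mem_map_of_mem hy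

end Counting

/-! ### Companion pencils -/

section Companion

open Polynomial (C)

variable {R : Type*} [CommRing R] {p q : ℕ}

/-- The off-diagonal block of `companionPencil`, carrying the coefficients. -/
def companionCorner (p q : ℕ) (c : ℕ → R) : MatrixPencil R (Fin (q + 1)) (Fin (p + 1)) :=
  (Matrix.of fun t s => if (t : ℕ) = 0 then c s else if (s : ℕ) = p then c (p + t) else 0,
   Matrix.of fun t s => if (t : ℕ) = q ∧ (s : ℕ) = p then -c (p + q + 1) else 0)

/-- A square pencil of size `p + q + 1` whose determinant is, up to sign, the polynomial of degree
at most `p + q + 1` with coefficients `c`, homogenized. It tends to a direct sum of two singular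
blocks as `c` tends to zero. -/
def companionPencil (p q : ℕ) (c : ℕ → R) :
    MatrixPencil R (Fin p ⊕ Fin (q + 1)) (Fin (p + 1) ⊕ Fin q) :=
  blockLower (shiftPencil R p (p + 1)) (companionCorner p q c)
    (-transpose (shiftPencil R q (q + 1)))

/-- Column vectors for `companionPencil`, with coordinates given by sequences. -/
def companionVec (p q : ℕ) (E F : ℕ → R) : Fin (p + 1) ⊕ Fin q → R :=
  Sum.elim (fun s => E s) fun t => F t

theorem companionCorner_fst_mulVec (c E : ℕ → R) (t : Fin (q + 1)) :
    ((companionCorner p q c).1 *ᵥ fun s => E s) t =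
      if (t : ℕ) = 0 then ∑ s ∈ Finset.range (p + 1), c s * E s else c (p + t) * E p := by
  simp only [mulVec, dotProduct, companionCorner, of_apply]
  split_ifs
  · exact Fin.sum_univ_eq_sum_range (fun s => c s * E s) (p + 1)
  · rw [Fin.sum_univ_castSucc]
    simp [Fin.val_castSucc, (Fin.is_lt _).ne]

theorem companionCorner_snd_mulVec (c E : ℕ → R) (t : Fin (q + 1)) :
    ((companionCorner p q c).2 *ᵥ fun s => E s) t =
      if (t : ℕ) = q then -(c (p + q + 1) * E p) else 0 := by
  simp only [mulVec, dotProduct, companionCorner, of_apply]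
  rw [Fin.sum_univ_castSucc]
  simp [Fin.val_castSucc, (Fin.is_lt _).ne]

theorem companionPencil_fst_mulVec (c E F : ℕ → R) :
    (companionPencil p q c).1 *ᵥ companionVec p q E F = Sum.elim (fun i : Fin p => E (i + 1))
      fun t : Fin (q + 1) => if (t : ℕ) = 0 then ∑ s ∈ Finset.range (p + 1), c s * E s
        else c (p + t) * E p - F (t - 1) := by
  rw [companionPencil, blockLower, companionVec, fromBlocks_mulVec, Sum.elim_comp_inl,
    Sum.elim_comp_inr]
  ext (i | t)
  · simp [shiftPencil_fst_mulVec]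
  · simp only [Sum.elim_inr, Pi.add_apply, companionCorner_fst_mulVec, Prod.fst_neg, neg_mulVec,
      Pi.neg_apply, transpose, mulVec_transpose, vecMul_shiftPencil_fst]
    split_ifs <;> first | omega | simp [sub_eq_add_neg]

theorem companionPencil_snd_mulVec {c E F : ℕ → R} (hF : F q = c (p + q + 1) * E p) :
    (companionPencil p q c).2 *ᵥ companionVec p q E F =
      Sum.elim (fun i : Fin p => E i) fun t : Fin (q + 1) => -F t := by
  rw [companionPencil, blockLower, companionVec, fromBlocks_mulVec, Sum.elim_comp_inl,
    Sum.elim_comp_inr]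
  ext (i | t)
  · simp [shiftPencil_snd_mulVec]
  · simp only [Sum.elim_inr, Pi.add_apply, companionCorner_snd_mulVec, Prod.snd_neg, neg_mulVec,
      Pi.neg_apply, transpose, mulVec_transpose, vecMul_shiftPencil_snd]
    split_ifs with h₁ h₂ <;> first | omega | simp [h₁, hF]

/-- The lower half of the null vector of `companionPencil` at a root `a`. -/
def hornerTail (p q : ℕ) (c : ℕ → R) (a : R) (t : ℕ) : R :=
  ∑ r ∈ Finset.range (q + 1 - t), c (p + t + 1 + r) * a ^ (p + r)

theorem hornerTail_self (c : ℕ → R) (a : R) : hornerTail p q c a q = c (p + q + 1) * a ^ p := by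
  simp [hornerTail]

theorem add_mul_hornerTail (c : ℕ → R) (a : R) {t : ℕ} (ht : t ≤ q) :
    c (p + t) * a ^ p + a * hornerTail p q c a t =
      ∑ r ∈ Finset.range (q + 2 - t), c (p + t + r) * a ^ (p + r) := by
  rw [show q + 2 - t = q + 1 - t + 1 by omega, Finset.sum_range_succ', hornerTail, Finset.mul_sum,
    add_comm]
  congr 1
  refine Finset.sum_congr rfl fun r _ => ?_
  rw [show p + t + (r + 1) = p + t + 1 + r by ring]
  ring

theorem hornerTail_pred (c : ℕ → R) (a : R) {t : ℕ} (ht : t + 1 ≤ q) :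
    hornerTail p q c a t = c (p + (t + 1)) * a ^ p + a * hornerTail p q c a (t + 1) := by
  rw [add_mul_hornerTail c a ht, hornerTail, show q + 2 - (t + 1) = q + 1 - t by omega, add_assoc]

theorem companionPencil_mulVec_pow (c : ℕ → R) (a : R) :
    (companionPencil p q c).1 *ᵥ companionVec p q (a ^ ·) (hornerTail p q c a) =
      a • (companionPencil p q c).2 *ᵥ companionVec p q (a ^ ·) (hornerTail p q c a) +
        Pi.single (Sum.inr 0) (∑ r ∈ Finset.range (p + q + 2), c r * a ^ r) := by
  rw [companionPencil_fst_mulVec, companionPencil_snd_mulVec (hornerTail_self c a)]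
  ext (i | ⟨_ | t, ht⟩)
  · simp [pow_succ']
  · have h := add_mul_hornerTail (p := p) c a q.zero_le
    simp only [add_zero, Nat.sub_zero] at h
    simp only [Sum.elim_inr, Pi.add_apply, Pi.smul_apply, Fin.zero_eta, Fin.val_zero, if_true,
      Pi.single_eq_same, smul_eq_mul, mul_neg, add_assoc p q 2, Finset.sum_range_add, ← h,
      Finset.sum_range_succ]
    ring
  · simp [hornerTail_pred c a (Nat.lt_succ_iff.1 ht)]

theorem companionPencil_mulVec_reverse_pow (c : ℕ → R) (a : R) :
    ∃ F, (companionPencil p q c).2 *ᵥ companionVec p q (fun s => a ^ (p - s)) F =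
      a • (companionPencil p q c).1 *ᵥ companionVec p q (fun s => a ^ (p - s)) F -
        Pi.single (Sum.inr (Fin.last q))
          (∑ r ∈ Finset.range (p + q + 2), c r * a ^ (p + q + 1 - r)) := by
  let G (t : ℕ) : R := ∑ r ∈ Finset.range (p + t + 1), c r * a ^ (p + t + 1 - r)
  have hsucc (t : ℕ) : ∑ r ∈ Finset.range (p + t + 2), c r * a ^ (p + t + 1 - r) =
      c (p + t + 1) + G t := by
    rw [Finset.sum_range_succ]
    simp [G, add_comm]
  have hmul (n : ℕ) : ∑ r ∈ Finset.range (n + 1), c r * a ^ (n + 1 - r) =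
      a * ∑ r ∈ Finset.range (n + 1), c r * a ^ (n - r) := by
    rw [Finset.mul_sum]
    refine Finset.sum_congr rfl fun r hr => ?_
    rw [Nat.sub_add_comm (Finset.mem_range_succ_iff.1 hr), pow_succ]
    ring
  refine ⟨fun t => if t = q then c (p + q + 1) else -G t, ?_⟩
  rw [companionPencil_fst_mulVec, companionPencil_snd_mulVec (by simp)]
  ext (i | ⟨t, ht⟩)
  · simp [← pow_succ', show p - (i + 1 : ℕ) + 1 = p - i by omega]
  · have hrow : a * (if t = 0 then ∑ s ∈ Finset.range (p + 1), c s * a ^ (p - s)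
        else c (p + t) * a ^ (p - p) - if t - 1 = q then c (p + q + 1) else -G (t - 1)) = G t := by
      rcases t with _ | t
      · simp [G, hmul]
      · rw [if_neg t.succ_ne_zero, Nat.succ_sub_one, if_neg (by omega), Nat.sub_self, pow_zero,
          mul_one, sub_neg_eq_add, ← add_assoc, ← hsucc, ← hmul (p + t + 1)]
        rfl
    simp only [Sum.elim_inr, Pi.sub_apply, Pi.smul_apply, smul_eq_mul, hrow, hsucc]
    by_cases h : t = q <;> simp [h, Fin.last]

theorem companionPencil_map_fst {S : Type*} [CommRing S] (f : R →+* S) (c : ℕ → R) :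
    (companionPencil p q c).1.map f = (companionPencil p q (f ∘ c)).1 := by
  ext (i | i) (j | j) <;>
    simp [companionPencil, blockLower, companionCorner, shiftPencil, transpose, apply_ite f]

theorem companionPencil_map_snd {S : Type*} [CommRing S] (f : R →+* S) (c : ℕ → R) :
    (companionPencil p q c).2.map f = (companionPencil p q (f ∘ c)).2 := by
  ext (i | i) (j | j) <;>
    simp [companionPencil, blockLower, companionCorner, shiftPencil, transpose, apply_ite f]

theorem exists_eq_companionVec (v : Fin (p + 1) ⊕ Fin q → R) (d : R) :
    ∃ E F, F q = d * E p ∧ v = companionVec p q E F := by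
  let E (s : ℕ) : R := if h : s < p + 1 then v (Sum.inl ⟨s, h⟩) else 0
  refine ⟨E, fun t => if h : t < q then v (Sum.inr ⟨t, h⟩) else d * E p, by simp, ?_⟩
  ext (s | t)
  · simp only [companionVec, E, Sum.elim_inl, dif_pos s.2]
  · simp [companionVec]

theorem eq_zero_of_companionPencil_mulVec {c : ℕ → R} {a : R} {v : Fin (p + 1) ⊕ Fin q → R}
    (h0 : v (Sum.inl 0) = 0)
    (h : ∀ i ≠ Sum.inr 0,
      ((companionPencil p q c).1 *ᵥ v) i = a * ((companionPencil p q c).2 *ᵥ v) i) : v = 0 := by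
  obtain ⟨E, F, hF, rfl⟩ := exists_eq_companionVec v (c (p + q + 1))
  rw [companionPencil_fst_mulVec, companionPencil_snd_mulVec hF] at h
  have hE (s : ℕ) (hs : s ≤ p) : E s = 0 := by
    induction s with
    | zero => exact h0
    | succ s ih => simpa [ih (Nat.le_of_succ_le hs)] using h (Sum.inl ⟨s, hs⟩) (by simp)
  have hF (t : ℕ) (ht : t ≤ q) : F t = 0 := by
    induction ht using Nat.decreasingInduction with
    | self => simp [hF, hE p le_rfl]
    | of_succ t ht ih =>
      simpa [ih, hE p le_rfl] using h (Sum.inr ⟨t + 1, Nat.succ_lt_succ ht⟩) (by simp [Fin.ext_iff])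
  ext (s | t)
  · exact hE s (Nat.lt_succ_iff.1 s.2)
  · exact hF t t.2.le

theorem eq_zero_of_companionPencil_fst_mulVec_eq [NoZeroDivisors R] {c : ℕ → R} {a : R}
    (ha : ∑ r ∈ Finset.range (p + q + 2), c r * a ^ r ≠ 0) {v : Fin (p + 1) ⊕ Fin q → R}
    (hv : (companionPencil p q c).1 *ᵥ v = a • (companionPencil p q c).2 *ᵥ v) : v = 0 := by
  let w := companionVec p q (a ^ ·) (hornerTail p q c a)
  have hw := companionPencil_mulVec_pow (p := p) (q := q) c a
  have hvw : v = v (Sum.inl 0) • w := by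
    refine sub_eq_zero.1 (eq_zero_of_companionPencil_mulVec (c := c) (a := a) ?_ fun i hi => ?_)
    · simp [w, companionVec]
    · simp only [w, mulVec_sub, mulVec_smul, hv, hw, smul_add, Pi.sub_apply, Pi.add_apply,
        Pi.smul_apply, smul_eq_mul, Pi.single_eq_of_ne hi, mul_zero, add_zero]
      ring
  have hv0 : v (Sum.inl 0) = 0 := by
    rw [hvw, mulVec_smul, mulVec_smul, hw, smul_comm, smul_add, add_eq_left] at hv
    simpa [ha] using congrFun hv (Sum.inr 0)
  rw [hvw, hv0, zero_smul]

end Companion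

section PolynomialVectors

open Polynomial (C X)
open scoped Polynomial

variable {𝕜 : Type*} [Field 𝕜] {ρ κ : Type*} [Fintype κ] {k : ℕ}

theorem coeff_map_C_mulVec (U : Matrix ρ κ 𝕜) (v : κ → 𝕜[X]) (i : ρ) (n : ℕ) :
    ((U.map C *ᵥ v) i).coeff n = (U *ᵥ fun j => (v j).coeff n) i := by
  simp [mulVec, dotProduct]

/-- The coefficients of a null vector modulo `X ^ (k + 1)` form a chain. -/
theorem chainNullity_lt_of_X_pow_dvd {Y : MatrixPencil 𝕜 ρ κ} {v : κ → 𝕜[X]} {j : κ}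
    (hj : (v j).coeff 0 ≠ 0)
    (hv : ∀ i, X ^ (k + 1) ∣
      (Y.1.map C *ᵥ v) i - X * (Y.2.map C *ᵥ v) i) :
    chainNullity k k Y < chainNullity (k + 1) (k + 1) Y := by
  simp only [Polynomial.X_pow_dvd_iff] at hv
  refine chainNullity_lt_of_chain (fun n j => (v j).coeff n) ?_ (fun n hn => ?_)
    fun h => hj (congrFun h j)
  · ext i
    simpa [coeff_map_C_mulVec] using hv i 0 k.succ_pos
  · ext i
    simpa [coeff_map_C_mulVec, sub_eq_zero] using hv i (n + 1) (Nat.succ_lt_succ hn)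

theorem chainNullity_skewDouble_lt_of_X_pow_dvd [Fintype ρ] {Y : MatrixPencil 𝕜 ρ κ}
    {v : κ → 𝕜[X]} {j : κ} (hj : (v j).coeff 0 ≠ 0)
    (hv : ∀ i, X ^ (k + 1) ∣
      (Y.1.map C *ᵥ v) i - X * (Y.2.map C *ᵥ v) i) :
    chainNullity k k (skewDouble Y) < chainNullity (k + 1) (k + 1) (skewDouble Y) := by
  refine chainNullity_lt_of_X_pow_dvd (v := Sum.elim 0 v) (j := Sum.inr j) hj ?_
  rintro (i | i)
  · simpa [skewDouble, fromBlocks_map, fromBlocks_mulVec] using hv i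
  · simp [skewDouble, fromBlocks_map, fromBlocks_mulVec]

theorem localNullity_some_lt_of_X_pow_dvd [Fintype ρ] {Y : MatrixPencil 𝕜 ρ κ} {μ : 𝕜}
    {v : κ → 𝕜[X]} {j : κ} (hj : (v j).coeff 0 ≠ 0)
    (hv : ∀ i, X ^ (k + 1) ∣
      (Y.1.map C *ᵥ v) i - (X + C μ) * (Y.2.map C *ᵥ v) i) :
    localNullity (some μ) k (skewDouble Y) < localNullity (some μ) (k + 1) (skewDouble Y) := by
  rw [localNullity, localNullity, recenter_skewDouble]
  refine chainNullity_skewDouble_lt_of_X_pow_dvd hj fun i => ?_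
  have hmap : (Y.1 + -μ • Y.2).map C = Y.1.map C - C μ • Y.2.map C := by
    ext i j
    simp [sub_eq_add_neg]
  convert hv i using 1
  simp only [Option.map_some, recenter, hmap, sub_mulVec, smul_mulVec, Pi.sub_apply, Pi.smul_apply,
    smul_eq_mul]
  ring

theorem localNullity_none_lt_of_X_pow_dvd [Fintype ρ] {Y : MatrixPencil 𝕜 ρ κ}
    {v : κ → 𝕜[X]} {j : κ} (hj : (v j).coeff 0 ≠ 0)
    (hv : ∀ i, X ^ (k + 1) ∣
      (Y.2.map C *ᵥ v) i - X * (Y.1.map C *ᵥ v) i) :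
    localNullity none k (skewDouble Y) < localNullity none (k + 1) (skewDouble Y) := by
  rw [localNullity, localNullity, recenter_skewDouble]
  exact chainNullity_skewDouble_lt_of_X_pow_dvd hj hv

end PolynomialVectors

section CompanionEigenvalues

open Polynomial (C X)

variable {𝕜 : Type*} [Field 𝕜] {p q k : ℕ} {χ : Polynomial 𝕜}

theorem localNullity_companionPencil_lt_of_root {μ : 𝕜} (hχ : χ.natDegree ≤ p + q + 1)
    (hμ : (X - C μ) ^ (k + 1) ∣ χ) :
    localNullity (some μ) k (skewDouble (companionPencil p q χ.coeff)) <
      localNullity (some μ) (k + 1) (skewDouble (companionPencil p q χ.coeff)) := by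
  have hcomp : ∑ r ∈ Finset.range (p + q + 2), (C ∘ χ.coeff) r * (X + C μ) ^ r =
      χ.comp (X + C μ) :=
    (Polynomial.eval₂_eq_sum_range' (n := p + q + 2) C (by omega) (X + C μ)).symm
  have hdvd : X ^ (k + 1) ∣ χ.comp (X + C μ) := by
    obtain ⟨ψ, rfl⟩ := hμ
    exact ⟨ψ.comp (X + C μ), by simp⟩
  refine localNullity_some_lt_of_X_pow_dvd (j := Sum.inl 0)
    (v := companionVec p q ((X + C μ) ^ ·) (hornerTail p q (C ∘ χ.coeff) (X + C μ)))
    (by simp [companionVec]) fun i => ?_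
  rw [companionPencil_map_fst, companionPencil_map_snd, companionPencil_mulVec_pow, hcomp,
    Pi.add_apply, Pi.smul_apply, smul_eq_mul, add_sub_cancel_left, Pi.single_apply]
  split_ifs
  exacts [hdvd, dvd_zero _]

theorem localNullity_companionPencil_none_lt (hχ : χ.natDegree + (k + 1) ≤ p + q + 1) :
    localNullity none k (skewDouble (companionPencil p q χ.coeff)) <
      localNullity none (k + 1) (skewDouble (companionPencil p q χ.coeff)) := by
  have hdvd : X ^ (k + 1) ∣
      ∑ r ∈ Finset.range (p + q + 2), (C ∘ χ.coeff) r * X ^ (p + q + 1 - r) := by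
    refine Finset.dvd_sum fun r _ => ?_
    rcases le_or_gt r χ.natDegree with hr | hr
    · exact (pow_dvd_pow X (by omega)).mul_left _
    · simp [Polynomial.coeff_eq_zero_of_natDegree_lt hr]
  obtain ⟨F, hF⟩ := companionPencil_mulVec_reverse_pow (p := p) (q := q) (C ∘ χ.coeff) X
  refine localNullity_none_lt_of_X_pow_dvd (j := Sum.inl (Fin.last p))
    (v := companionVec p q (fun s => X ^ (p - s)) F) (by simp [companionVec]) fun i => ?_
  rw [companionPencil_map_fst, companionPencil_map_snd, hF, Pi.sub_apply, Pi.smul_apply,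
    smul_eq_mul, sub_sub_cancel_left, dvd_neg, Pi.single_apply]
  split_ifs
  exacts [hdvd, dvd_zero _]

theorem localNullity_companionPencil_one_eq_zero {μ : 𝕜} (hχ : χ.natDegree ≤ p + q + 1)
    (hμ : χ.eval μ ≠ 0) :
    localNullity (some μ) 1 (skewDouble (companionPencil p q χ.coeff)) = 0 := by
  have hker (v) (hv : (recenter (some (-μ)) (companionPencil p q χ.coeff)).1 *ᵥ v = 0) : v = 0 := by
    refine eq_zero_of_companionPencil_fst_mulVec_eq (a := μ)
      (by rwa [← Polynomial.eval_eq_sum_range' (Nat.lt_succ_of_le hχ)]) ?_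
    simpa [recenter, add_mulVec, neg_smul, neg_mulVec, smul_mulVec, add_neg_eq_zero] using hv
  obtain ⟨V, hV, -⟩ := exists_inverse_of_mulVec_eq_zero _ (by simp; omega) hker
  rw [localNullity, Option.map_some, recenter_skewDouble, chainNullity_skewDouble,
    chainNullity_eq_zero_of_fst le_rfl hker, chainNullity_eq_zero_of_fst le_rfl, add_zero]
  intro w hw
  rw [transpose, mulVec_transpose] at hw
  rw [← vecMul_one w, ← hV, ← vecMul_vecMul, hw, zero_vecMul]

end CompanionEigenvalues

section Characteristic

open Polynomial (C X)

theorem exists_characteristicPolynomial {R : Type*} [CommRing R] [IsDomain R]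
    (ek : List (Option R × ℕ)) : ∃ χ : Polynomial R, χ ≠ 0 ∧
      (∀ μ k, (some μ, k) ∈ ek → (X - C μ) ^ k ∣ χ) ∧ χ.natDegree ≤ (ek.map Prod.snd).sum ∧
      ∀ k, (none, k) ∈ ek → χ.natDegree + k ≤ (ek.map Prod.snd).sum := by
  induction ek with
  | nil => exact ⟨1, one_ne_zero, by simp, by simp, by simp⟩
  | cons x ek ih =>
    obtain ⟨χ, h0, hroot, hdeg, hinfty⟩ := ih
    obtain ⟨_ | ν, h⟩ := x
    · refine ⟨χ, h0, fun μ k hk => hroot μ k (by simpa using hk), ?_, fun k hk => ?_⟩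
      · simpa using hdeg.trans (Nat.le_add_left _ _)
      · rw [List.map_cons, List.sum_cons]
        rcases List.mem_cons.1 hk with hk | hk
        · obtain rfl : k = h := congrArg Prod.snd hk
          omega
        · exact (hinfty k hk).trans (Nat.le_add_left _ _)
    · have hν : (X - C ν) ^ h ≠ 0 := pow_ne_zero _ (Polynomial.X_sub_C_ne_zero ν)
      have hdeg' : ((X - C ν) ^ h * χ).natDegree = h + χ.natDegree := by
        rw [Polynomial.natDegree_mul hν h0, Polynomial.natDegree_pow, Polynomial.natDegree_X_sub_C,
          mul_one]
      refine ⟨(X - C ν) ^ h * χ, mul_ne_zero hν h0, fun μ k hk => ?_, ?_, fun k hk => ?_⟩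
      · rcases List.mem_cons.1 hk with hk | hk
        · cases hk
          exact dvd_mul_right _ _
        · exact (hroot μ k hk).mul_left _
      · simpa [hdeg'] using hdeg
      · simpa [hdeg', add_assoc] using hinfty k (by simpa using hk)

variable {p q : ℕ} {ek : List (Option ℂ × ℕ)}

theorem congruent_companionPencil (hnd : (ek.map Prod.fst).Nodup)
    (hsum : p + q + 1 = (ek.map Prod.snd).sum) {χ : Polynomial ℂ} (h0 : χ ≠ 0)
    (hroot : ∀ μ k, (some μ, k) ∈ ek → (X - C μ) ^ k ∣ χ) (hdeg : χ.natDegree ≤ p + q + 1)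
    (hinfty : ∀ k, (none, k) ∈ ek → χ.natDegree + k ≤ p + q + 1) :
    Congruent (blockSum (ek.map fun x => Hb x.1 x.2 : List SBlock))
      (skewDouble (companionPencil p q χ.coeff)) := by
  obtain ⟨s, hs⟩ := exists_congruent_blockSum (P := skewDouble (companionPencil p q χ.coeff))
    (by simp [skewDouble, fromBlocks_transpose, fromBlocks_neg])
    (by simp [skewDouble, fromBlocks_transpose, fromBlocks_neg])
  have hlocal (o k) := hs.localNullity_eq o k
  obtain ⟨μ, hμ⟩ : ∃ μ, χ.eval μ ≠ 0 := by
    by_contra! h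
    exact h0 (Polynomial.funext fun μ => by rw [h μ, Polynomial.eval_zero])
  have hM := M_notMem_of_localNullity_one_eq_zero
    ((hlocal (some μ) 1).symm.trans (localNullity_companionPencil_one_eq_zero hdeg hμ))
  refine (hs.trans (congruent_blockSum_map_Hb ek hnd ?_ ?_)).symm
  · rintro ⟨o, k⟩ hx hk
    obtain ⟨k, rfl⟩ := Nat.exists_eq_succ_of_ne_zero hk
    refine exists_le_and_Hb_mem_of_localNullity_lt hM ?_
    rw [← hlocal, ← hlocal]
    cases o with
    | none => exact localNullity_companionPencil_none_lt (hinfty _ hx)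
    | some μ => exact localNullity_companionPencil_lt_of_root hdeg (hroot μ _ hx)
  · have hcard := hs.card_eq
    simp only [Fintype.card_fin, Fintype.card_sum] at hcard
    omega

theorem degeneratesTo_Hb_M (hnd : (ek.map Prod.fst).Nodup)
    (hsum : p + q + 1 = (ek.map Prod.snd).sum) :
    DegeneratesTo (blockSum (ek.map fun x => Hb x.1 x.2 : List SBlock))
      (blockSum {SBlock.M p, SBlock.M q}) := by
  obtain ⟨χ, h0, hroot, hdeg, hinfty⟩ := exists_characteristicPolynomial ek
  rw [← hsum] at hdeg
  simp only [← hsum] at hinfty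
  refine (DegeneratesTo.of_blockLower (companionCorner p q χ.coeff) fun c hc => ?_).trans_congruent
    (congruent_blockSum_pair (congruent_M p) ((skewDouble_neg_transpose _).trans (congruent_M q)))
  have hcorner : c • companionCorner p q χ.coeff = companionCorner p q (C c * χ).coeff := by
    refine Prod.ext ?_ ?_ <;> ext t s <;> simp [companionCorner]
  rw [hcorner]
  refine congruent_companionPencil hnd hsum (mul_ne_zero (Polynomial.C_ne_zero.2 hc) h0)
    (fun μ k hk => (hroot μ k hk).mul_left _) ?_ ?_ <;> rwa [Polynomial.natDegree_C_mul hc]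

end Characteristic

section Transitions

variable {s t : Multiset SBlock}

theorem degeneratesTo_of_transSkew (h : TransSkew s t) :
    DegeneratesTo (blockSum s) (blockSum t) := by
  have hpair (a b : SBlock) (r : Multiset SBlock) : a ::ₘ b ::ₘ r = {a, b} + r := by simp
  rcases h with ⟨j, k, r, hj, hjk, rfl, rfl⟩ | ⟨j, k, o, r, hj, hjk, rfl, rfl⟩ |
    ⟨j, k, o, r, rfl, rfl⟩ | ⟨ek, p, q, r, hnd, hsum, rfl, rfl⟩
  · obtain ⟨j, rfl⟩ := Nat.exists_eq_add_of_le' hj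
    rw [hpair, hpair]
    exact (degeneratesTo_M_M j k hjk).blockSum_add r
  · obtain ⟨j, rfl⟩ := Nat.exists_eq_add_of_le' hj
    rw [hpair, hpair]
    exact (degeneratesTo_Hb_Hb o j k hjk).blockSum_add r
  · rw [hpair, hpair]
    exact (degeneratesTo_M_Hb o j k).blockSum_add r
  · rw [hpair]
    exact (degeneratesTo_Hb_M hnd hsum).blockSum_add r

theorem degeneratesTo_of_reflTransGen (h : Relation.ReflTransGen TransSkew s t) :
    DegeneratesTo (blockSum s) (blockSum t) := by
  induction h with
  | refl => exact (Congruent.refl _).degeneratesTo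
  | tail _ h ih => exact ih.trans (degeneratesTo_of_transSkew h)

end Transitions

end SkewPencil

open SkewPencil

/-- **Theorem 3.4**: for skew-symmetric pencils `P1`, `P2`, one has
`orbᶜ P2 ⊆ closure (orbᶜ P1)` if and only if the canonical form of `P2` can be
obtained from that of `P1` by a finite sequence of structure transitions of the
four types (1)–(4). -/
theorem orbC_subset_closure_iff_transSkew {n : ℕ} (P1 P2 : Pencil n n)
    (h1 : Pencil.IsSkew P1) (h2 : Pencil.IsSkew P2) :
    Pencil.orbC P2 ⊆ closure (Pencil.orbC P1) ↔
      ∃ s1 s2 : Multiset SBlock, WeakRepresentsC P1 s1 ∧ WeakRepresentsC P2 s2 ∧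
        Relation.ReflTransGen TransSkew s1 s2 := by
  simp only [orbC_subset_closure_iff_degeneratesTo, weakRepresentsC_iff]
  constructor
  · intro h
    obtain ⟨s1, hs1⟩ := exists_congruent_blockSum h1.1 h1.2
    obtain ⟨s2, hs2⟩ := exists_congruent_blockSum h2.1 h2.2
    obtain ⟨z, z', hz, hz', hchain⟩ := reach_of_degeneratesTo (h.congr hs1 hs2)
    exact ⟨s1 + z, s2 + z', (hs1.trans (congruent_blockSum_add_of_size_eq_zero s1 hz)).symm,
      (hs2.trans (congruent_blockSum_add_of_size_eq_zero s2 hz')).symm, hchain⟩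
  · rintro ⟨s1, s2, hs1, hs2, hchain⟩
    exact (degeneratesTo_of_reflTransGen hchain).congr hs1 hs2
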